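/- arXiv:0811.1290 — 2 statements merged into one kernel-verified Lean document; each statement's English description precedes it below -/
import Mathlib

section
/- Let α be a sincere pre-homogeneous dimension vector of Q and let E_1,…,E_l be the pairwise non-isomorphic ⟨α,·⟩-stable representations. Then the Schofield semi-invariants c_{E_1},…,c_{E_l} ∈ K[rep(Q,α)] are algebraically independent over K and SI(Q,α) = K[c_{E_1},…,c_{E_l}], i.e., the ring of SL(α)-invariant polynomial functions on rep(Q,α) is the polynomial ring generated by the c_{E_i}. -/
set_option autoImplicit false

noncomputable section

open scoped BigOperators

/-! Basic setup for representations of a quiver with vertex set `V`, arrow set `A`,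
tail map `t` and head map `h`, over a field `K`. -/

variable (K : Type) [Field K]
variable {V A : Type} [Fintype V] [DecidableEq V] [Fintype A]

/-- The Euler form of the quiver `(V, A, t, h)`. -/
def eulerForm {R : Type} [CommRing R] (t h : A → V) (x y : V → R) : R :=
  ∑ i, x i * y i - ∑ a, x (t a) * y (h a)

def natZ (x : V → ℕ) : V → ℤ := fun i => (x i : ℤ)
def intQ (x : V → ℤ) : V → ℚ := fun i => (x i : ℚ)
def natQ (x : V → ℕ) : V → ℚ := fun i => (x i : ℚ)

/-- The weight `⟨α,·⟩`. -/
def weightL (t h : A → V) (α : V → ℤ) : V → ℤ :=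
  fun i => eulerForm t h α (fun j => if j = i then 1 else 0)

/-- The weight `−⟨·,α⟩`. -/
def weightR (t h : A → V) (α : V → ℤ) : V → ℤ :=
  fun i => - eulerForm t h (fun j => if j = i then 1 else 0) α

/-- `IsPathFrom t h i p j` : the list of arrows `p` is a path from `i` to `j`. -/
def IsPathFrom (t h : A → V) : V → List A → V → Prop
  | i, [], j => i = j
  | i, a :: p, j => t a = i ∧ IsPathFrom t h (h a) p j

/-- The quiver has no (nontrivial) oriented cycles. -/
def Acyclic (t h : A → V) : Prop := ∀ (i : V) (p : List A), IsPathFrom t h i p i → p = []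

/-- The dimension vector `γ_i` of the projective indecomposable at `i`:
`γ_i(j)` is the number of paths from `i` to `j`. -/
def gammaRoot (t h : A → V) (i : V) : V → ℕ :=
  fun j => Set.ncard {p : List A | IsPathFrom t h i p j}

/-- A finite-dimensional representation of the quiver `(V, A, t, h)` over `K`. -/
structure QuivRep (K : Type) [Field K] (V A : Type) (t h : A → V) : Type 1 where
  sp : V → Type
  [inst1 : ∀ i, AddCommGroup (sp i)]
  [inst2 : ∀ i, Module K (sp i)]
  [inst3 : ∀ i, FiniteDimensional K (sp i)]
  map : ∀ a : A, sp (t a) →ₗ[K] sp (h a)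

attribute [instance] QuivRep.inst1 QuivRep.inst2 QuivRep.inst3

namespace QuivRep

variable {K} {t h : A → V}

/-- The dimension vector of a representation. -/
def dimVec (X : QuivRep K V A t h) : V → ℕ := fun i => Module.finrank K (X.sp i)

/-- A subrepresentation. -/
structure Sub (X : QuivRep K V A t h) where
  sub : ∀ i, Submodule K (X.sp i)
  le : ∀ a : A, ∀ x ∈ sub (t a), X.map a x ∈ sub (h a)

/-- The dimension vector of a subrepresentation. -/
def Sub.dimVec {X : QuivRep K V A t h} (U : Sub X) : V → ℕ :=
  fun i => Module.finrank K (U.sub i)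

/-- The space `Hom_Q(X,Y)` of morphisms of representations, as a submodule of
`Π i, Hom_K(X(i),Y(i))`. -/
def homS (X Y : QuivRep K V A t h) : Submodule K (∀ i, X.sp i →ₗ[K] Y.sp i) where
  carrier := {φ | ∀ a : A, (φ (h a)).comp (X.map a) = (Y.map a).comp (φ (t a))}
  zero_mem' := by intro a; simp
  add_mem' := by
    intro f g hf hg a
    simp only [Pi.add_apply, LinearMap.add_comp, LinearMap.comp_add, hf a, hg a]
  smul_mem' := by
    intro c f hf a
    simp only [Pi.smul_apply, LinearMap.smul_comp, LinearMap.comp_smul, hf a]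

/-- The dimension of `Hom_Q(X,Y)`. -/
def homDim (X Y : QuivRep K V A t h) : ℕ := Module.finrank K (homS X Y)

/-- The map `d^X_Y` from Ringel's canonical exact sequence. -/
def dmap (X Y : QuivRep K V A t h) :
    (∀ i, X.sp i →ₗ[K] Y.sp i) →ₗ[K] (∀ a : A, X.sp (t a) →ₗ[K] Y.sp (h a)) where
  toFun φ := fun a => (φ (h a)).comp (X.map a) - (Y.map a).comp (φ (t a))
  map_add' f g := by
    funext a
    simp only [Pi.add_apply, LinearMap.add_comp, LinearMap.comp_add]
    abel
  map_smul' c f := by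
    funext a
    simp only [Pi.smul_apply, LinearMap.smul_comp, LinearMap.comp_smul, smul_sub,
      RingHom.id_apply]

/-- The dimension of `Ext^1_Q(X,Y)`, i.e. of the cokernel of `d^X_Y`. -/
def extDim (X Y : QuivRep K V A t h) : ℕ :=
  Module.finrank K ((∀ a : A, X.sp (t a) →ₗ[K] Y.sp (h a)) ⧸ LinearMap.range (dmap X Y))

/-- A rigid representation: `Ext^1_Q(X,X) = 0`. -/
def IsRigid (X : QuivRep K V A t h) : Prop := extDim X X = 0

/-- A Schur representation: `End_Q(X) = K·id`. -/
def IsSchur (X : QuivRep K V A t h) : Prop := homDim X X = 1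

/-- An exceptional representation: rigid and Schur. -/
def IsExceptional (X : QuivRep K V A t h) : Prop := IsRigid X ∧ IsSchur X

end QuivRep

/-- `β` is a real Schur root: the dimension vector of an exceptional representation. -/
def isRealSchurRoot (t h : A → V) (β : V → ℕ) : Prop :=
  ∃ X : QuivRep K V A t h, X.dimVec = β ∧ X.IsExceptional

/-- `ext_Q(α,β)` : the generic (minimal) value of `dim Ext^1_Q` on pairs of
representations of dimension vectors `α`, `β`. -/
def extMin (t h : A → V) (α β : V → ℕ) : ℕ :=
  sInf {n | ∃ X Y : QuivRep K V A t h, X.dimVec = α ∧ Y.dimVec = β ∧ QuivRep.extDim X Y = n}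

/-- `hom_Q(α,β)` : the generic (minimal) value of `dim Hom_Q`. -/
def homMin (t h : A → V) (α β : V → ℕ) : ℕ :=
  sInf {n | ∃ X Y : QuivRep K V A t h, X.dimVec = α ∧ Y.dimVec = β ∧ QuivRep.homDim X Y = n}

/-- `β' ↪ β` : every representation of dimension vector `β` has a subrepresentation of
dimension vector `β'`. -/
def Embeds (t h : A → V) (β' β : V → ℕ) : Prop :=
  ∀ X : QuivRep K V A t h, X.dimVec = β → ∃ U : QuivRep.Sub X, U.dimVec = β'

/-- `σ`-semi-stability of a representation. -/
def IsSemistable {t h : A → V} (σ : V → ℤ) (X : QuivRep K V A t h) : Prop :=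
  (∑ i, σ i * (X.dimVec i : ℤ)) = 0 ∧
  ∀ U : QuivRep.Sub X, (∑ i, σ i * (U.dimVec i : ℤ)) ≤ 0

/-- `σ`-stability of a representation. -/
def IsStable {t h : A → V} (σ : V → ℤ) (X : QuivRep K V A t h) : Prop :=
  (∑ i, σ i * (X.dimVec i : ℤ)) = 0 ∧ X.dimVec ≠ (fun _ => 0) ∧
  ∀ U : QuivRep.Sub X, U.dimVec ≠ (fun _ => 0) → U.dimVec ≠ X.dimVec →
    (∑ i, σ i * (U.dimVec i : ℤ)) < 0

/-- Isomorphism of representations. -/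
def RepIso {t h : A → V} (X Y : QuivRep K V A t h) : Prop :=
  ∃ e : ∀ i, X.sp i ≃ₗ[K] Y.sp i,
    ∀ (a : A) (x : X.sp (t a)), e (h a) (X.map a x) = Y.map a (e (t a) x)

/-- A quiver exceptional sequence of dimension vectors. -/
def IsQES (t h : A → V) {l : ℕ} (b : Fin l → V → ℕ) : Prop :=
  (∀ j, isRealSchurRoot K t h (b j)) ∧
  ∀ i j : Fin l, i < j →
    homMin K t h (b i) (b j) = 0 ∧ extMin K t h (b i) (b j) = 0 ∧
      eulerForm t h (natZ (b j)) (natZ (b i)) ≤ 0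

/-- The cone of nonnegative rational linear combinations of a finite set of integral
vectors. -/
def coneOf (C : Finset (V → ℤ)) : Set (V → ℚ) :=
  {x | ∃ lam : (V → ℤ) → ℚ, (∀ c, 0 ≤ lam c) ∧ x = ∑ c ∈ C, lam c • intQ c}

/-- A compatible subset of the set `Ψ(Q)_{≥ -1}` of almost positive real Schur roots. -/
def IsCompatible (t h : A → V) (C : Finset (V → ℤ)) : Prop :=
  (∀ x ∈ C, (∃ β : V → ℕ, isRealSchurRoot K t h β ∧ x = natZ β) ∨
      (∃ i : V, x = fun j => -(gammaRoot t h i j : ℤ))) ∧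
  (∀ x ∈ C, ∀ y ∈ C, x ≠ y →
    (∀ β₁ β₂ : V → ℕ, isRealSchurRoot K t h β₁ → isRealSchurRoot K t h β₂ →
      x = natZ β₁ → y = natZ β₂ → extMin K t h β₁ β₂ = 0) ∧
    (∀ (β : V → ℕ) (i : V), isRealSchurRoot K t h β →
      x = natZ β → y = (fun j => -(gammaRoot t h i j : ℤ)) → β i = 0))

/-- The domain of semi-invariants `D(β) ⊆ ℚ^{Q_0}`. -/
def Dom (t h : A → V) (β : V → ℕ) : Set (V → ℚ) :=
  {x | eulerForm t h x (natQ β) = 0 ∧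
    ∀ β' : V → ℕ, Embeds K t h β' β → eulerForm t h x (natQ β') ≤ 0}

/-- A quiver exceptional set: a subset of `Ψ(Q)_{≥ -1}` of the form
`{β_1,…,β_l, −γ_{i_{l+1}},…,−γ_{i_m}}` with `β_j(i_k) = 0` and whose real-Schur-root part
can be ordered into a quiver exceptional sequence. -/
def IsQExcSet (t h : A → V) (E : Finset (V → ℤ)) : Prop :=
  ∃ (l m : ℕ) (b : Fin l → V → ℕ) (g : Fin m → V),
    Function.Injective b ∧ Function.Injective g ∧ IsQES K t h b ∧
    (∀ j k, b j (g k) = 0) ∧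
    (E : Set (V → ℤ)) =
      (Set.range fun j => natZ (b j)) ∪
      (Set.range fun k => (fun v => -(gammaRoot t h (g k) v : ℤ)))


/-- The underlying graph of the quiver is connected. -/
def IsConnectedQuiver (t h : A → V) : Prop :=
  ∀ i j : V,
    Relation.ReflTransGen (fun u v => ∃ a, (t a = u ∧ h a = v) ∨ (t a = v ∧ h a = u)) i j

/-- Morphisms of representations. -/
structure RepHom {K : Type} [Field K] {V A : Type} {t h : A → V}
    (X Y : QuivRep K V A t h) : Type where
  app : ∀ i, X.sp i →ₗ[K] Y.sp i
  comm : ∀ a : A, (app (h a)).comp (X.map a) = (Y.map a).comp (app (t a))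

namespace RepHom

variable {K₀ : Type} [Field K₀] {t h : A → V}

/-- The identity morphism. -/
def idHom (X : QuivRep K₀ V A t h) : RepHom X X :=
  ⟨fun _ => LinearMap.id, fun a => by ext x; simp⟩

/-- Composition of morphisms. -/
def comp {X Y Z : QuivRep K₀ V A t h} (f : RepHom X Y) (g : RepHom Y Z) : RepHom X Z :=
  ⟨fun i => (g.app i).comp (f.app i), fun a => by
    ext x
    have hf := LinearMap.congr_fun (f.comm a) x
    have hg := LinearMap.congr_fun (g.comm a) (f.app (t a) x)
    simp only [LinearMap.comp_apply] at hf hg ⊢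
    rw [hf, hg]⟩

/-- Sum of morphisms. -/
def add {X Y : QuivRep K₀ V A t h} (f g : RepHom X Y) : RepHom X Y :=
  ⟨fun i => f.app i + g.app i, fun a => by
    simp only [LinearMap.add_comp, LinearMap.comp_add, f.comm a, g.comm a]⟩

/-- Scalar multiple of a morphism. -/
def smul {X Y : QuivRep K₀ V A t h} (c : K₀) (f : RepHom X Y) : RepHom X Y :=
  ⟨fun i => c • f.app i, fun a => by
    simp only [LinearMap.smul_comp, LinearMap.comp_smul, f.comm a]⟩

end RepHom

/-- The number of arrows `i → j` in the Ext-quiver `Q(𝓔)` of a sequence of dimension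
vectors: `−⟨β_i, β_j⟩` for `i ≠ j`. -/
def extMult (t h : A → V) {l : ℕ} (b : Fin l → V → ℕ) (i j : Fin l) : ℕ :=
  if i = j then 0 else (-(eulerForm t h (natZ (b i)) (natZ (b j)))).toNat

/-- The arrow set of the Ext-quiver `Q(𝓔)`. -/
abbrev ExtArrow (t h : A → V) {l : ℕ} (b : Fin l → V → ℕ) : Type :=
  (i : Fin l) × (j : Fin l) × Fin (extMult t h b i j)

/-- The representation space `rep(Q,β)` as a product of matrix spaces. -/
abbrev RepSpace (t h : A → V) (β : V → ℕ) : Type :=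
  ∀ a : A, Matrix (Fin (β (h a))) (Fin (β (t a))) K

/-- The (base-change) action of `GL(β)` on `rep(Q,β)`. -/
def glAct (t h : A → V) {β : V → ℕ}
    (g : ∀ i, Matrix.GeneralLinearGroup (Fin (β i)) K) (W : RepSpace K t h β) :
    RepSpace K t h β :=
  fun a => (g (h a) : Matrix (Fin (β (h a))) (Fin (β (h a))) K) * W a *
    (((g (t a))⁻¹ : Matrix.GeneralLinearGroup (Fin (β (t a))) K) :
      Matrix (Fin (β (t a))) (Fin (β (t a))) K)

/-- A polynomial function on `rep(Q,β)`. -/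
def IsPolyFun (t h : A → V) {β : V → ℕ} (f : RepSpace K t h β → K) : Prop :=
  ∃ P : MvPolynomial ((a : A) × (Fin (β (h a)) × Fin (β (t a)))) K,
    ∀ W, f W = MvPolynomial.eval (fun x => W x.1 x.2.1 x.2.2) P

/-- The weight space `SI(Q,β)_σ` of semi-invariant polynomial functions of weight `σ`. -/
def SIweight (t h : A → V) (β : V → ℕ) (σ : V → ℤ) :
    Submodule K (RepSpace K t h β → K) where
  carrier := {f | IsPolyFun K t h f ∧
    ∀ (g : ∀ i, Matrix.GeneralLinearGroup (Fin (β i)) K) (W : RepSpace K t h β),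
      f (glAct K t h g W) =
        (((∏ i, (Matrix.GeneralLinearGroup.det (g i)) ^ σ i : Kˣ) : K)) * f W}
  zero_mem' := by
    refine ⟨⟨0, by simp⟩, by simp⟩
  add_mem' := by
    rintro f g ⟨⟨P, hP⟩, hf⟩ ⟨⟨Q, hQ⟩, hg⟩
    refine ⟨⟨P + Q, fun W => ?_⟩, fun gg W => ?_⟩
    · simp [hP W, hQ W]
    · simp only [Pi.add_apply, hf gg W, hg gg W]; ring
  smul_mem' := by
    rintro c f ⟨⟨P, hP⟩, hf⟩
    refine ⟨⟨MvPolynomial.C c * P, fun W => ?_⟩, fun gg W => ?_⟩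
    · simp [hP W]
    · simp only [Pi.smul_apply, hf gg W, smul_eq_mul]; ring

/-- Entry of a matrix accessed through natural-number indices. -/
def entryN {m n : ℕ} (M : Matrix (Fin m) (Fin n) K) (r c : ℕ) : K :=
  if hr : r < m then (if hc : c < n then M ⟨r, hr⟩ ⟨c, hc⟩ else 0) else 0

/-- The matrix of the map `d^V_W` (with `V` of dimension vector `α` varying and `W` of
dimension vector `w` fixed), in the standard bases. -/
def schofieldMatrix (t h : A → V) {α w : V → ℕ}
    (Vm : RepSpace K t h α) (W : RepSpace K t h w) :
    Matrix ((a : A) × (Fin (w (h a)) × Fin (α (t a)))) ((i : V) × (Fin (w i) × Fin (α i))) K :=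
  fun r c =>
    (if c.1 = h r.1 ∧ (c.2.1 : ℕ) = (r.2.1 : ℕ) then
      entryN K (Vm r.1) (c.2.2 : ℕ) (r.2.2 : ℕ) else 0)
    - (if c.1 = t r.1 ∧ (c.2.2 : ℕ) = (r.2.2 : ℕ) then
      entryN K (W r.1) (r.2.1 : ℕ) (c.2.1 : ℕ) else 0)

/-- The Schofield semi-invariant `c_W : rep(Q,α) → K`, `V ↦ det d^V_W` (defined when
`⟨α, dim W⟩ = 0`, i.e. when `d^V_W` is a square matrix). -/
def schofieldSI (t h : A → V) {α w : V → ℕ} (W : RepSpace K t h w)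
    (Vm : RepSpace K t h α) : K :=
  if hc : Fintype.card ((i : V) × (Fin (w i) × Fin (α i))) =
      Fintype.card ((a : A) × (Fin (w (h a)) × Fin (α (t a)))) then
    ((schofieldMatrix K t h Vm W).submatrix (Fintype.equivOfCardEq hc) id).det
  else 0

/-- The representation of `Q` attached to a point of `rep(Q,β)`. -/
def toRep (t h : A → V) {β : V → ℕ} (W : RepSpace K t h β) : QuivRep K V A t h where
  sp i := Fin (β i) → K
  map a := Matrix.mulVecLin (W a)

set_option linter.unusedSectionVars false
set_option linter.unusedVariables false

set_option linter.unusedSectionVars false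
set_option linter.unusedVariables false

section RepTheory

namespace QuivRep

variable {K : Type} [Field K] {V A : Type} [Fintype V] [DecidableEq V] [Fintype A] {t h : A → V}

/-- Families of linear maps between two representations. -/
abbrev Fam (X Y : QuivRep K V A t h) : Type := ∀ i, X.sp i →ₗ[K] Y.sp i

/-- The family is a morphism of representations. -/
def IsHom {X Y : QuivRep K V A t h} (φ : Fam X Y) : Prop :=
  ∀ (a : A) (x : X.sp (t a)), φ (h a) (X.map a x) = Y.map a (φ (t a) x)

/-- Vanishing of `Ext`. -/
def Ext0 (X Y : QuivRep K V A t h) : Prop := Function.Surjective (dmap X Y)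

/-- Vanishing of `Hom`. -/
def Hom0 (X Y : QuivRep K V A t h) : Prop := ∀ φ : Fam X Y, IsHom φ → φ = 0

/-- Total dimension. -/
def td (X : QuivRep K V A t h) : ℕ := ∑ i, X.dimVec i

/-- The Euler form on representations. -/
def eu (X Y : QuivRep K V A t h) : ℤ := eulerForm t h (natZ X.dimVec) (natZ Y.dimVec)

lemma dmap_apply (X Y : QuivRep K V A t h) (φ : Fam X Y) (a : A) (x : X.sp (t a)) :
    dmap X Y φ a x = φ (h a) (X.map a x) - Y.map a (φ (t a) x) := rfl

lemma isHom_iff_dmap {X Y : QuivRep K V A t h} (φ : Fam X Y) : IsHom φ ↔ dmap X Y φ = 0 := by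
  constructor
  · intro H
    funext a
    ext x
    rw [dmap_apply, H a x, sub_self]; rfl
  · intro H a x
    have : dmap X Y φ a x = 0 := by rw [H]; rfl
    rw [dmap_apply] at this
    exact sub_eq_zero.mp this

lemma isHom_iff_mem {X Y : QuivRep K V A t h} (φ : Fam X Y) : IsHom φ ↔ φ ∈ homS X Y := by
  constructor
  · intro H a
    ext x
    exact H a x
  · intro H a x
    exact LinearMap.congr_fun (H a) x

lemma hom0_iff {X Y : QuivRep K V A t h} : Hom0 X Y ↔ Function.Injective (dmap X Y) := by
  rw [injective_iff_map_eq_zero]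
  constructor
  · intro H φ hφ
    exact H φ ((isHom_iff_dmap φ).2 hφ)
  · intro H φ hφ
    exact H φ ((isHom_iff_dmap φ).1 hφ)

lemma homS_eq_ker (X Y : QuivRep K V A t h) : homS X Y = LinearMap.ker (dmap X Y) := by
  ext φ
  rw [← isHom_iff_mem, isHom_iff_dmap, LinearMap.mem_ker]

lemma eu_eq_finrank (X Y : QuivRep K V A t h) :
    eu X Y = (Module.finrank K (Fam X Y) : ℤ)
      - (Module.finrank K (∀ a : A, X.sp (t a) →ₗ[K] Y.sp (h a)) : ℤ) := by
  rw [Module.finrank_pi_fintype, Module.finrank_pi_fintype]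
  simp [eu, eulerForm, natZ, dimVec, Module.finrank_linearMap]

lemma eu_of_ext0 {X Y : QuivRep K V A t h} (H : Ext0 X Y) : eu X Y = homDim X Y := by
  have h1 := LinearMap.finrank_range_add_finrank_ker (dmap X Y)
  rw [LinearMap.range_eq_top.2 H, finrank_top, ← homS_eq_ker] at h1
  rw [eu_eq_finrank, homDim]
  have h2 : (Module.finrank K (Fam X Y)) =
    Module.finrank K (∀ a : A, X.sp (t a) →ₗ[K] Y.sp (h a)) + Module.finrank K (homS X Y) := h1.symm
  omega

lemma eu_nonneg {X Y : QuivRep K V A t h} (H : Ext0 X Y) : 0 ≤ eu X Y := by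
  rw [eu_of_ext0 H]; positivity

lemma homDim_eq_zero {X Y : QuivRep K V A t h} : homDim X Y = 0 ↔ Hom0 X Y := by
  rw [homDim, Submodule.finrank_eq_zero, homS_eq_ker, hom0_iff, LinearMap.ker_eq_bot]

lemma homDim_pos {X Y : QuivRep K V A t h} (φ : Fam X Y) (hφ : IsHom φ) (h0 : φ ≠ 0) :
    0 < homDim X Y := by
  rw [Nat.pos_iff_ne_zero]
  intro H
  exact h0 (homDim_eq_zero.1 H φ hφ)

lemma eu_nonpos {X Y : QuivRep K V A t h} (H : Hom0 X Y) : eu X Y ≤ 0 := by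
  rw [hom0_iff] at H
  have := LinearMap.finrank_le_finrank_of_injective H
  rw [eu_eq_finrank]
  have h2 : (Module.finrank K (Fam X Y)) ≤
    Module.finrank K (∀ a : A, X.sp (t a) →ₗ[K] Y.sp (h a)) := this
  omega

lemma ext0_of_hom0 {X Y : QuivRep K V A t h} (H : Hom0 X Y) (h0 : eu X Y = 0) : Ext0 X Y := by
  rw [hom0_iff] at H
  rw [eu_eq_finrank] at h0
  have h2 : (Module.finrank K (Fam X Y)) =
    Module.finrank K (∀ a : A, X.sp (t a) →ₗ[K] Y.sp (h a)) := by omega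
  exact (LinearMap.injective_iff_surjective_of_finrank_eq_finrank h2).1 H

lemma hom0_of_ext0 {X Y : QuivRep K V A t h} (H : Ext0 X Y) (h0 : eu X Y = 0) : Hom0 X Y := by
  rw [← homDim_eq_zero]
  have := eu_of_ext0 H
  omega

lemma eu_zero {X Y : QuivRep K V A t h} (H : Hom0 X Y) (H' : Ext0 X Y) : eu X Y = 0 :=
  le_antisymm (eu_nonpos H) (eu_nonneg H')

/-- Composition of families. -/
def fcomp {X Y Z : QuivRep K V A t h} (g : Fam Y Z) (f : Fam X Y) : Fam X Z :=
  fun i => (g i).comp (f i)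

lemma IsHom.fcomp {X Y Z : QuivRep K V A t h} {g : Fam Y Z} {f : Fam X Y}
    (hg : IsHom g) (hf : IsHom f) : IsHom (QuivRep.fcomp g f) := by
  intro a x
  simp only [QuivRep.fcomp, LinearMap.comp_apply]
  rw [hf a x, hg a]

lemma isHom_id (X : QuivRep K V A t h) : IsHom (fun i => LinearMap.id : Fam X X) :=
  fun _ _ => rfl

lemma IsHom.add {X Y : QuivRep K V A t h} {f g : Fam X Y} (hf : IsHom f) (hg : IsHom g) :
    IsHom (f + g) := by
  rw [isHom_iff_mem] at *
  exact add_mem hf hg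

lemma IsHom.sub {X Y : QuivRep K V A t h} {f g : Fam X Y} (hf : IsHom f) (hg : IsHom g) :
    IsHom (f - g) := by
  rw [isHom_iff_mem] at *
  exact sub_mem hf hg

lemma IsHom.smul {X Y : QuivRep K V A t h} (c : K) {f : Fam X Y} (hf : IsHom f) :
    IsHom (c • f) := by
  rw [isHom_iff_mem] at *
  exact Submodule.smul_mem _ c hf

/-- The subrepresentation as a representation. -/
def Sub.rep {X : QuivRep K V A t h} (U : Sub X) : QuivRep K V A t h where
  sp i := U.sub i
  map a := (X.map a).restrict (U.le a)

/-- The quotient representation. -/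
def Sub.quot {X : QuivRep K V A t h} (U : Sub X) : QuivRep K V A t h where
  sp i := X.sp i ⧸ U.sub i
  map a := Submodule.mapQ _ _ (X.map a) (U.le a)

/-- The inclusion. -/
def Sub.incl {X : QuivRep K V A t h} (U : Sub X) : Fam U.rep X := fun i => (U.sub i).subtype

/-- The projection. -/
def Sub.proj {X : QuivRep K V A t h} (U : Sub X) : Fam X U.quot := fun i => (U.sub i).mkQ

lemma Sub.incl_hom {X : QuivRep K V A t h} (U : Sub X) : IsHom U.incl := fun _ _ => rfl
lemma Sub.proj_hom {X : QuivRep K V A t h} (U : Sub X) : IsHom U.proj := fun _ _ => rfl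
lemma Sub.incl_inj {X : QuivRep K V A t h} (U : Sub X) (i : V) : Function.Injective (U.incl i) :=
  Subtype.val_injective
lemma Sub.proj_surj {X : QuivRep K V A t h} (U : Sub X) (i : V) :
    Function.Surjective (U.proj i) := Submodule.mkQ_surjective _

lemma Sub.proj_eq_zero {X : QuivRep K V A t h} (U : Sub X) (i : V) (x : X.sp i) :
    U.proj i x = 0 ↔ x ∈ U.sub i := Submodule.Quotient.mk_eq_zero (U.sub i)

lemma Sub.proj_incl {X : QuivRep K V A t h} (U : Sub X) (i : V) (x : U.rep.sp i) :
    U.proj i (U.incl i x) = 0 := (U.proj_eq_zero i _).2 x.2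

lemma Sub.exists_incl {X : QuivRep K V A t h} (U : Sub X) (i : V) (x : X.sp i) (hx : x ∈ U.sub i) :
    ∃ u : U.rep.sp i, U.incl i u = x := ⟨⟨x, hx⟩, rfl⟩

lemma Sub.dim_rep {X : QuivRep K V A t h} (U : Sub X) : U.rep.dimVec = U.dimVec := rfl

lemma Sub.dim_add {X : QuivRep K V A t h} (U : Sub X) (i : V) :
    X.dimVec i = U.rep.dimVec i + U.quot.dimVec i := by
  have := Submodule.finrank_quotient_add_finrank (U.sub i)
  have h1 : X.dimVec i = Module.finrank K (X.sp i) := rfl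
  have h2 : U.quot.dimVec i = Module.finrank K (X.sp i ⧸ U.sub i) := rfl
  have h3 : U.rep.dimVec i = Module.finrank K (U.sub i) := rfl
  omega

/-- Additivity of linear functionals. -/
lemma eu_add_right (X Y Y' Y'' : QuivRep K V A t h)
    (H : ∀ i, Y.dimVec i = Y'.dimVec i + Y''.dimVec i) : eu X Y = eu X Y' + eu X Y'' := by
  simp only [eu, eulerForm, natZ, H]
  push_cast
  simp only [mul_add, Finset.sum_add_distrib]
  ring

lemma eu_add_left (X Y Y' Y'' : QuivRep K V A t h)
    (H : ∀ i, Y.dimVec i = Y'.dimVec i + Y''.dimVec i) : eu Y X = eu Y' X + eu Y'' X := by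
  simp only [eu, eulerForm, natZ, H]
  push_cast
  simp only [add_mul, Finset.sum_add_distrib]
  ring

/-- Value of a weight on a representation. -/
def ev (σ : V → ℤ) (X : QuivRep K V A t h) : ℤ := ∑ i, σ i * (X.dimVec i : ℤ)

lemma ev_add (σ : V → ℤ) (Y Y' Y'' : QuivRep K V A t h)
    (H : ∀ i, Y.dimVec i = Y'.dimVec i + Y''.dimVec i) : ev σ Y = ev σ Y' + ev σ Y'' := by
  simp only [ev, H]
  push_cast
  simp only [mul_add, Finset.sum_add_distrib]

lemma td_add (Y Y' Y'' : QuivRep K V A t h)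
    (H : ∀ i, Y.dimVec i = Y'.dimVec i + Y''.dimVec i) : td Y = td Y' + td Y'' := by
  simp only [td, H, Finset.sum_add_distrib]

/-- Kernel of a morphism. -/
def kerS {X Y : QuivRep K V A t h} (g : Fam X Y) (hg : IsHom g) : Sub X where
  sub i := LinearMap.ker (g i)
  le a x hx := by
    rw [LinearMap.mem_ker] at *
    rw [hg, hx, map_zero]

/-- Image of a morphism. -/
def ranS {X Y : QuivRep K V A t h} (g : Fam X Y) (hg : IsHom g) : Sub Y where
  sub i := LinearMap.range (g i)
  le a x hx := by
    obtain ⟨y, rfl⟩ := hx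
    exact ⟨X.map a y, hg a y⟩

/-- The corestriction to the image. -/
def toRan {X Y : QuivRep K V A t h} (g : Fam X Y) (hg : IsHom g) : Fam X (ranS g hg).rep :=
  fun i => (g i).rangeRestrict

lemma toRan_hom {X Y : QuivRep K V A t h} (g : Fam X Y) (hg : IsHom g) : IsHom (toRan g hg) := by
  intro a x
  exact Subtype.ext (hg a x)

lemma toRan_surj {X Y : QuivRep K V A t h} (g : Fam X Y) (hg : IsHom g) (i : V) :
    Function.Surjective (toRan g hg i) := LinearMap.surjective_rangeRestrict _

lemma ker_ran_dim {X Y : QuivRep K V A t h} (g : Fam X Y) (hg : IsHom g) (i : V) :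
    X.dimVec i = (kerS g hg).rep.dimVec i + (ranS g hg).rep.dimVec i := by
  have := LinearMap.finrank_range_add_finrank_ker (g i)
  have h1 : X.dimVec i = Module.finrank K (X.sp i) := rfl
  have h2 : (ranS g hg).rep.dimVec i = Module.finrank K (LinearMap.range (g i)) := rfl
  have h3 : (kerS g hg).rep.dimVec i = Module.finrank K (LinearMap.ker (g i)) := rfl
  omega

lemma ext0_of_surj {X Y Q : QuivRep K V A t h} (g : Fam Y Q) (hg : IsHom g)
    (hs : ∀ i, Function.Surjective (g i)) (H : Ext0 X Y) : Ext0 X Q := by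
  intro ψ
  choose s hs' using fun i => LinearMap.exists_rightInverse_of_surjective (g i)
    (LinearMap.range_eq_top.2 (hs i))
  obtain ⟨η, hη⟩ := H (fun a => (s (h a)).comp (ψ a))
  refine ⟨fcomp g η, ?_⟩
  funext a
  ext x
  have h1 : dmap X Y η a x = s (h a) (ψ a x) := by rw [hη]; rfl
  have h2 := congrArg (g (h a)) h1
  rw [dmap_apply, map_sub, hg] at h2
  have h3 : g (h a) (s (h a) (ψ a x)) = ψ a x := LinearMap.congr_fun (hs' (h a)) _
  rw [h3] at h2
  rw [dmap_apply, ← h2]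
  rfl

lemma ext0_of_inj {U Y Z : QuivRep K V A t h} (f : Fam U Y) (hf : IsHom f)
    (hi : ∀ i, Function.Injective (f i)) (H : Ext0 Y Z) : Ext0 U Z := by
  intro ψ
  choose s hs using fun i => LinearMap.exists_leftInverse_of_injective (f i)
    (LinearMap.ker_eq_bot.2 (hi i))
  obtain ⟨η, hη⟩ := H (fun a => (ψ a).comp (s (t a)))
  refine ⟨fcomp η f, ?_⟩
  funext a
  ext x
  have h1 : dmap Y Z η a (f (t a) x) = ψ a (s (t a) (f (t a) x)) := by rw [hη]; rfl
  have h3 : s (t a) (f (t a) x) = x := LinearMap.congr_fun (hs (t a)) x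
  rw [h3, dmap_apply, ← hf] at h1
  rw [dmap_apply, ← h1]
  rfl

lemma hom0_of_inj {X U Y : QuivRep K V A t h} (f : Fam U Y) (hf : IsHom f)
    (hi : ∀ i, Function.Injective (f i)) (H : Hom0 X Y) : Hom0 X U := by
  intro φ hφ
  have := H _ (hf.fcomp hφ)
  funext i
  ext x
  apply hi i
  have h2 := LinearMap.congr_fun (congrFun this i) x
  simpa [fcomp] using h2

lemma hom0_of_surj {Y Q Z : QuivRep K V A t h} (g : Fam Y Q) (hg : IsHom g)
    (hs : ∀ i, Function.Surjective (g i)) (H : Hom0 Y Z) : Hom0 Q Z := by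
  intro φ hφ
  have := H _ (hφ.fcomp hg)
  funext i
  ext x
  obtain ⟨y, rfl⟩ := hs i x
  have h2 := LinearMap.congr_fun (congrFun this i) y
  simpa [fcomp] using h2

/-- Lifting along a quotient. -/
lemma lift_quot {X Y : QuivRep K V A t h} (U : Sub Y) (H : Ext0 X U.rep) (φ : Fam X U.quot)
    (hφ : IsHom φ) : ∃ φ' : Fam X Y, IsHom φ' ∧ fcomp U.proj φ' = φ := by
  choose s hs using fun i => LinearMap.exists_rightInverse_of_surjective (U.proj i)
    (LinearMap.range_eq_top.2 (U.proj_surj i))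
  have hs' : ∀ i y, U.proj i (s i y) = y := fun i y => LinearMap.congr_fun (hs i) y
  let φ0 : Fam X Y := fun i => (s i).comp (φ i)
  have key : ∀ a x, dmap X Y φ0 a x ∈ U.sub (h a) := by
    intro a x
    rw [← Submodule.Quotient.mk_eq_zero]
    change U.proj (h a) (dmap X Y φ0 a x) = 0
    rw [dmap_apply, map_sub, U.proj_hom]
    simp only [φ0, LinearMap.comp_apply, hs']
    rw [hφ, sub_self]
  obtain ⟨η, hη⟩ := H (fun a => (dmap X Y φ0 a).codRestrict _ (key a))
  refine ⟨φ0 - fcomp U.incl η, ?_, ?_⟩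
  · rw [isHom_iff_dmap]
    funext a
    ext x
    have h1 : dmap X U.rep η a x = ⟨dmap X Y φ0 a x, key a x⟩ := by rw [hη]; rfl
    have h2 := congrArg (U.incl (h a)) h1
    rw [dmap_apply, map_sub, U.incl_hom] at h2
    rw [map_sub]
    change dmap X Y φ0 a x - dmap X Y _ a x = 0
    rw [sub_eq_zero]
    exact h2.symm
  · funext i
    ext x
    have : U.proj i (U.incl i (η i x)) = 0 := U.proj_incl i _
    simp only [fcomp, LinearMap.comp_apply, Pi.sub_apply, LinearMap.sub_apply, map_sub, this, φ0, hs',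
      sub_zero]

/-- A linear map killing `U` descends to the quotient. -/
def descend {Y Z : QuivRep K V A t h} (U : Sub Y) (φ : Fam Y Z) (H : fcomp φ U.incl = 0) :
    Fam U.quot Z := fun i => (U.sub i).liftQ (φ i) (by
      intro x hx
      exact LinearMap.congr_fun (congrFun H i) ⟨x, hx⟩)

lemma descend_apply {Y Z : QuivRep K V A t h} (U : Sub Y) (φ : Fam Y Z) (H : fcomp φ U.incl = 0)
    (i : V) (y : Y.sp i) : descend U φ H i (U.proj i y) = φ i y := rfl

lemma descend_hom {Y Z : QuivRep K V A t h} (U : Sub Y) (φ : Fam Y Z) (H : fcomp φ U.incl = 0)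
    (hφ : IsHom φ) : IsHom (descend U φ H) := by
  intro a x
  obtain ⟨y, rfl⟩ := U.proj_surj _ x
  rw [← U.proj_hom, descend_apply, descend_apply, hφ]

/-- Extending morphisms from a subrepresentation. -/
lemma extend_sub {Y Z : QuivRep K V A t h} (U : Sub Y) (H : Ext0 U.quot Z) (φ : Fam U.rep Z)
    (hφ : IsHom φ) : ∃ φ' : Fam Y Z, IsHom φ' ∧ fcomp φ' U.incl = φ := by
  choose s hs using fun i => LinearMap.exists_leftInverse_of_injective (U.incl i)
    (LinearMap.ker_eq_bot.2 (U.incl_inj i))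
  have hs' : ∀ i y, s i (U.incl i y) = y := fun i y => LinearMap.congr_fun (hs i) y
  let φ0 : Fam Y Z := fun i => (φ i).comp (s i)
  have key : ∀ a, U.sub (t a) ≤ LinearMap.ker (dmap Y Z φ0 a) := by
    intro a x hx
    rw [LinearMap.mem_ker]
    obtain ⟨u, rfl⟩ := U.exists_incl _ x hx
    rw [dmap_apply, ← U.incl_hom]
    simp only [φ0, LinearMap.comp_apply, hs']
    rw [hφ, sub_self]
  obtain ⟨η, hη⟩ := H (fun a => (U.sub (t a)).liftQ (dmap Y Z φ0 a) (key a))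
  refine ⟨φ0 - fcomp η U.proj, ?_, ?_⟩
  · rw [isHom_iff_dmap]
    funext a
    ext x
    have h1 : dmap U.quot Z η a (U.proj (t a) x) = dmap Y Z φ0 a x := by rw [hη]; rfl
    rw [dmap_apply, ← U.proj_hom] at h1
    rw [map_sub]
    change dmap Y Z φ0 a x - dmap Y Z _ a x = 0
    rw [sub_eq_zero]
    exact h1.symm
  · funext i
    ext x
    have : U.proj i (U.incl i x) = 0 := U.proj_incl i _
    simp only [fcomp, LinearMap.comp_apply, Pi.sub_apply, LinearMap.sub_apply, map_zero, this, φ0, hs',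
      sub_zero]

lemma ext0_quot {Y Z : QuivRep K V A t h} (U : Sub Y) (H : Ext0 Y Z) (H' : Hom0 U.rep Z) :
    Ext0 U.quot Z := by
  intro ψ
  obtain ⟨η, hη⟩ := H (fun a => (ψ a).comp (U.proj (t a)))
  have hη' : ∀ a x, dmap Y Z η a x = ψ a (U.proj (t a) x) := by
    intro a x; rw [hη]; rfl
  have h0 : fcomp η U.incl = 0 := by
    apply H'
    intro a x
    have h1 := hη' a (U.incl (t a) x)
    have : U.proj (t a) (U.incl (t a) x) = 0 := U.proj_incl _ _
    rw [this, map_zero, dmap_apply, ← U.incl_hom] at h1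
    exact sub_eq_zero.1 h1
  refine ⟨descend U η h0, ?_⟩
  funext a
  apply LinearMap.ext
  intro x
  obtain ⟨y, rfl⟩ := U.proj_surj _ x
  rw [dmap_apply, ← U.proj_hom, descend_apply, descend_apply, ← hη', dmap_apply]

end QuivRep
end RepTheory

section RepTheory

namespace QuivRep

variable {K : Type} [Field K] {V A : Type} [Fintype V] [DecidableEq V] [Fintype A] {t h : A → V}

/-- The power `X^n`. -/
def pow (X : QuivRep K V A t h) (n : ℕ) : QuivRep K V A t h where
  sp i := Fin n → X.sp i
  map a := LinearMap.pi fun k => (X.map a).comp (LinearMap.proj k)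

/-- Coordinate projections of the power. -/
def powProj (X : QuivRep K V A t h) (n : ℕ) (k : Fin n) : Fam (pow X n) X :=
  fun i => LinearMap.proj k

lemma powProj_hom (X : QuivRep K V A t h) (n : ℕ) (k : Fin n) : IsHom (powProj X n k) :=
  fun _ _ => rfl

/-- Coordinate inclusions of the power. -/
def powIncl (X : QuivRep K V A t h) (n : ℕ) (k : Fin n) : Fam X (pow X n) :=
  fun i => LinearMap.single K (fun _ => X.sp i) k

lemma powIncl_hom (X : QuivRep K V A t h) (n : ℕ) (k : Fin n) : IsHom (powIncl X n k) := by
  intro a x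
  funext k'
  change (Pi.single k (X.map a x) : Fin n → X.sp (h a)) k' =
    X.map a ((Pi.single k x : Fin n → X.sp (t a)) k')
  by_cases hk : k' = k
  · subst hk; simp
  · simp [Pi.single_eq_of_ne hk]

/-- Morphism to a power. -/
def toPow {X Y : QuivRep K V A t h} {n : ℕ} (f : Fin n → Fam Y X) : Fam Y (pow X n) :=
  fun i => LinearMap.pi fun k => f k i

lemma toPow_hom {X Y : QuivRep K V A t h} {n : ℕ} (f : Fin n → Fam Y X) (hf : ∀ k, IsHom (f k)) :
    IsHom (toPow f) := by
  intro a x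
  funext k
  exact hf k a x

/-- Morphism from a power. -/
def fromPow {X Y : QuivRep K V A t h} {n : ℕ} (f : Fin n → Fam X Y) : Fam (pow X n) Y :=
  fun i => ∑ k, (f k i).comp (LinearMap.proj k)

lemma fromPow_apply {X Y : QuivRep K V A t h} {n : ℕ} (f : Fin n → Fam X Y) (i : V)
    (x : (pow X n).sp i) : fromPow f i x = ∑ k, f k i (powProj X n k i x) := by
  simp only [fromPow, LinearMap.sum_apply]
  rfl

lemma fromPow_incl {X Y : QuivRep K V A t h} {n : ℕ} (f : Fin n → Fam X Y) (i : V) (k : Fin n)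
    (x : X.sp i) : fromPow f i (powIncl X n k i x) = f k i x := by
  rw [fromPow_apply, Finset.sum_eq_single k]
  · change f k i ((Pi.single k x : Fin n → X.sp i) k) = _
    simp
  · intro k' _ hk
    change f k' i ((Pi.single k x : Fin n → X.sp i) k') = _
    rw [Pi.single_eq_of_ne hk, map_zero]
  · simp

lemma fromPow_hom {X Y : QuivRep K V A t h} {n : ℕ} (f : Fin n → Fam X Y) (hf : ∀ k, IsHom (f k)) :
    IsHom (fromPow f) := by
  intro a x
  rw [fromPow_apply, fromPow_apply, map_sum]
  refine Finset.sum_congr rfl fun k _ => ?_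
  rw [← hf k, powProj_hom]

lemma pow_ext {X : QuivRep K V A t h} {n : ℕ} {i : V} (x y : (pow X n).sp i)
    (H : ∀ k, powProj X n k i x = powProj X n k i y) : x = y := funext H

lemma pow_decomp {X : QuivRep K V A t h} {n : ℕ} {i : V} (x : (pow X n).sp i) :
    x = ∑ k, powIncl X n k i (powProj X n k i x) := by
  have := (Finset.univ_sum_single (x : Fin n → X.sp i)).symm
  exact this

lemma ext0_pow_right {X Y : QuivRep K V A t h} (n : ℕ) (H : Ext0 Y X) : Ext0 Y (pow X n) := by
  intro ψ
  choose η hη using fun k : Fin n => H (fun a => (powProj X n k (h a)).comp (ψ a))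
  refine ⟨toPow η, ?_⟩
  funext a
  apply LinearMap.ext
  intro x
  apply pow_ext
  intro k
  exact LinearMap.congr_fun (congrFun (hη k) a) x

lemma ext0_pow_left {X Z : QuivRep K V A t h} (n : ℕ) (H : Ext0 X Z) : Ext0 (pow X n) Z := by
  intro ψ
  choose η hη using fun k : Fin n => H (fun a => (ψ a).comp (powIncl X n k (t a)))
  refine ⟨fromPow η, ?_⟩
  funext a
  apply LinearMap.ext
  intro x
  have key : ∀ k (y : X.sp (t a)), dmap (pow X n) Z (fromPow η) a (powIncl X n k _ y) =
      ψ a (powIncl X n k _ y) := by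
    intro k y
    rw [dmap_apply, ← powIncl_hom, fromPow_incl, fromPow_incl]
    exact LinearMap.congr_fun (congrFun (hη k) a) y
  rw [pow_decomp x, map_sum, map_sum]
  exact Finset.sum_congr rfl fun k _ => key k _

lemma hom0_pow_left {X Z : QuivRep K V A t h} (n : ℕ) (H : Hom0 X Z) : Hom0 (pow X n) Z := by
  intro φ hφ
  funext i
  apply LinearMap.ext
  intro x
  rw [pow_decomp x, map_sum]
  apply Finset.sum_eq_zero
  intro k _
  have := H _ (hφ.fcomp (powIncl_hom X n k))
  exact LinearMap.congr_fun (congrFun this i) _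

lemma dim_pow (X : QuivRep K V A t h) (n : ℕ) (i : V) : (pow X n).dimVec i = n * X.dimVec i := by
  change Module.finrank K (Fin n → X.sp i) = n * Module.finrank K (X.sp i)
  rw [Module.finrank_pi_fintype]
  simp

/-- A (finite) basis of the space of morphisms. -/
def homBasis (X Y : QuivRep K V A t h) (k : Fin (homDim X Y)) : Fam X Y :=
  (Module.finBasis K (homS X Y) k).1

lemma homBasis_hom (X Y : QuivRep K V A t h) (k : Fin (homDim X Y)) : IsHom (homBasis X Y k) := by
  rw [isHom_iff_mem]
  exact (Module.finBasis K (homS X Y) k).2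

lemma homBasis_span {X Y : QuivRep K V A t h} (φ : Fam X Y) (hφ : IsHom φ) :
    ∃ c : Fin (homDim X Y) → K, φ = ∑ k, c k • homBasis X Y k := by
  rw [isHom_iff_mem] at hφ
  refine ⟨fun k => (Module.finBasis K (homS X Y)).repr ⟨φ, hφ⟩ k, ?_⟩
  have := (Module.finBasis K (homS X Y)).sum_repr ⟨φ, hφ⟩
  have h2 := congrArg (homS X Y).subtype this
  rw [map_sum] at h2
  exact h2.symm

lemma homBasis_span_apply {X Y : QuivRep K V A t h} (φ : Fam X Y) (hφ : IsHom φ) :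
    ∃ c : Fin (homDim X Y) → K, ∀ i x, φ i x = ∑ k, c k • homBasis X Y k i x := by
  obtain ⟨c, hc⟩ := homBasis_span φ hφ
  refine ⟨c, fun i x => ?_⟩
  conv_lhs => rw [hc]
  simp

/-- The evaluation map `X^n → M`. -/
def evT (X M : QuivRep K V A t h) : Fam (pow X (homDim X M)) M := fromPow (homBasis X M)

lemma evT_hom (X M : QuivRep K V A t h) : IsHom (evT X M) := fromPow_hom _ (homBasis_hom X M)

/-- The trace of `X` in `M`. -/
def traceS (X M : QuivRep K V A t h) : Sub M := ranS (evT X M) (evT_hom X M)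

lemma mem_traceS {X M : QuivRep K V A t h} (φ : Fam X M) (hφ : IsHom φ) (i : V) (x : X.sp i) :
    φ i x ∈ (traceS X M).sub i := by
  obtain ⟨c, hc⟩ := homBasis_span_apply φ hφ
  rw [hc]
  refine Submodule.sum_mem _ fun k _ => Submodule.smul_mem _ _ ?_
  exact ⟨powIncl X _ k i x, fromPow_incl _ _ _ _⟩

lemma ext0_trace {X Y M : QuivRep K V A t h} (H : Ext0 Y X) : Ext0 Y (traceS X M).rep :=
  ext0_of_surj _ (toRan_hom _ (evT_hom X M)) (toRan_surj _ _) (ext0_pow_right _ H)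

lemma hom0_trace {X Z M : QuivRep K V A t h} (H : Hom0 X Z) : Hom0 (traceS X M).rep Z :=
  hom0_of_surj _ (toRan_hom _ (evT_hom X M)) (toRan_surj _ _) (hom0_pow_left _ H)

/-- `M` is cogenerated by `X`. -/
def Cogen (X M : QuivRep K V A t h) : Prop :=
  ∀ i (m : M.sp i), (∀ φ : Fam M X, IsHom φ → φ i m = 0) → m = 0

lemma Cogen.of_inj {X M U : QuivRep K V A t h} (H : Cogen X M) (f : Fam U M) (hf : IsHom f)
    (hi : ∀ i, Function.Injective (f i)) : Cogen X U := by
  intro i m hm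
  apply hi i
  rw [map_zero]
  apply H
  intro φ hφ
  exact hm _ (hφ.fcomp hf)

lemma cogen_pow (X : QuivRep K V A t h) (n : ℕ) : Cogen X (pow X n) := by
  intro i m hm
  apply pow_ext
  intro k
  rw [map_zero]
  exact hm _ (powProj_hom X n k)

lemma Cogen.ext0 {X M : QuivRep K V A t h} (H : Cogen X M) (hX : Ext0 X X) : Ext0 M X := by
  refine ext0_of_inj (toPow (homBasis M X)) (toPow_hom _ (homBasis_hom M X)) ?_
    (ext0_pow_left _ hX)
  intro i
  rw [injective_iff_map_eq_zero]
  intro m hm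
  apply H
  intro φ hφ
  obtain ⟨c, hc⟩ := homBasis_span_apply φ hφ
  rw [hc]
  refine Finset.sum_eq_zero fun k _ => ?_
  have : homBasis M X k i m = 0 := congrFun hm k
  rw [this, smul_zero]

/-- The reject of `X` in `M`. -/
def rejS (X M : QuivRep K V A t h) : Sub M where
  sub i := ⨅ φ : homS M X, LinearMap.ker (φ.1 i)
  le a x hx := by
    simp only [Submodule.mem_iInf, LinearMap.mem_ker] at *
    intro φ
    rw [((isHom_iff_mem _).2 φ.2) a x, hx, map_zero]

lemma mem_rejS {X M : QuivRep K V A t h} (i : V) (m : M.sp i) :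
    m ∈ (rejS X M).sub i ↔ ∀ φ : Fam M X, IsHom φ → φ i m = 0 := by
  simp only [rejS, Submodule.mem_iInf, LinearMap.mem_ker, Subtype.forall, ← isHom_iff_mem]

lemma cogen_quot_rej (X M : QuivRep K V A t h) : Cogen X (rejS X M).quot := by
  intro i m hm
  obtain ⟨y, rfl⟩ := (rejS X M).proj_surj i m
  rw [Sub.proj_eq_zero, mem_rejS]
  intro φ hφ
  have h0 : fcomp φ (rejS X M).incl = 0 := by
    funext j
    ext u
    exact (mem_rejS j _).1 u.2 φ hφ
  exact hm _ (descend_hom _ φ h0 hφ)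

/-- The simple representation at `i`. -/
def simp0 (K : Type) [Field K] (t h : A → V) (i : V) : QuivRep K V A t h :=
  toRep K t h (β := Pi.single i 1) 0

lemma dim_toRep {β : V → ℕ} (W : RepSpace K t h β) : (toRep K t h W).dimVec = β := by
  funext i
  exact Module.finrank_fin_fun K

lemma eu_expand (P Y : QuivRep K V A t h) :
    eu P Y = ∑ i, (Y.dimVec i : ℤ) * eu P (simp0 K t h i) := by
  have : ∀ i, eu P (simp0 K t h i) = (P.dimVec i : ℤ) -
      ∑ a, if h a = i then (P.dimVec (t a) : ℤ) else 0 := by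
    intro i
    simp only [eu, eulerForm, simp0, dim_toRep, natZ]
    congr 1
    · rw [Finset.sum_eq_single i]
      · simp
      · intro j _ hj; simp [Pi.single_eq_of_ne hj]
      · simp
    · refine Finset.sum_congr rfl fun a _ => ?_
      by_cases ha : h a = i
      · subst ha; simp
      · simp [ha]
  simp only [this, mul_sub, Finset.sum_sub_distrib, Finset.mul_sum]
  rw [Finset.sum_comm]
  simp only [eu, eulerForm, natZ]
  congr 1
  · exact Finset.sum_congr rfl fun _ _ => mul_comm _ _
  · refine Finset.sum_congr rfl fun a _ => ?_
    simp [mul_comm]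

lemma eq_zero_of_td {X : QuivRep K V A t h} (H : Hom0 X X) (i : V) (x : X.sp i) : x = 0 := by
  have := H _ (isHom_id X)
  exact LinearMap.congr_fun (congrFun this i) x

/-- Sincere rigid representations cogenerate projectives. -/
lemma cogen_proj {X P : QuivRep K V A t h} (hs : ∀ i, 0 < X.dimVec i) (hX : Ext0 X X)
    (hP : ∀ Z, Ext0 P Z) : Cogen X P := by
  have h1 : Ext0 (rejS X P).quot X := (cogen_quot_rej X P).ext0 hX
  have hK : ∀ Z, Ext0 (rejS X P).rep Z := fun Z =>
    ext0_of_inj _ (rejS X P).incl_hom (rejS X P).incl_inj (hP Z)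
  have h2 : Hom0 (rejS X P).rep X := by
    intro φ hφ
    obtain ⟨φ', hφ', e⟩ := extend_sub _ h1 φ hφ
    rw [← e]
    funext i
    ext u
    exact (mem_rejS i _).1 u.2 φ' hφ'
  have h3 := eu_zero h2 (hK X)
  rw [eu_expand, Finset.sum_eq_zero_iff_of_nonneg
    (fun i _ => mul_nonneg (by positivity) (eu_nonneg (hK _)))] at h3
  have h4 : ∀ i, eu (rejS X P).rep (simp0 K t h i) = 0 := by
    intro i
    have := h3 i (Finset.mem_univ i)
    rcases mul_eq_zero.1 this with h5 | h5
    · have := hs i; omega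
    · exact h5
  have h5 : eu (rejS X P).rep (rejS X P).rep = 0 := by
    rw [eu_expand]; simp [h4]
  have h6 := hom0_of_ext0 (hK _) h5
  intro i m hm
  have hm' := (mem_rejS i m).2 hm
  obtain ⟨u, rfl⟩ := (rejS X P).exists_incl i m hm'
  rw [eq_zero_of_td h6 i u, map_zero]

section UExt
variable (X P : QuivRep K V A t h)

/-- Number of copies in the universal extension. -/
def uN : ℕ := Module.finrank K (∀ a : A, X.sp (t a) →ₗ[K] P.sp (h a))

/-- The cocycles. -/
def uB (k : Fin (uN X P)) : ∀ a : A, X.sp (t a) →ₗ[K] P.sp (h a) :=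
  Module.finBasis K (∀ a : A, X.sp (t a) →ₗ[K] P.sp (h a)) k

/-- A universal extension of `P` by copies of `X`. -/
def uext : QuivRep K V A t h where
  sp i := P.sp i × (pow X (uN X P)).sp i
  map a := LinearMap.prod
    ((P.map a).comp (LinearMap.fst K _ _) +
      (∑ k, (uB X P k a).comp (powProj X _ k (t a))).comp (LinearMap.snd K _ _))
    (((pow X (uN X P)).map a).comp (LinearMap.snd K _ _))

/-- The inclusion of `P`. -/
def uI : Fam P (uext X P) := fun i => LinearMap.inl K _ _
/-- The projection to `X^n`. -/
def uP : Fam (uext X P) (pow X (uN X P)) := fun i => LinearMap.snd K _ _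
/-- The nonlinear-in-arrows splitting. -/
def uS : Fam (pow X (uN X P)) (uext X P) := fun i => LinearMap.inr K _ _

lemma uI_hom : IsHom (uI X P) := by
  intro a x
  apply Prod.ext
  · change P.map a x = P.map a x + (∑ k, (uB X P k a).comp (powProj X _ k (t a))) 0
    simp
  · change (0 : (pow X (uN X P)).sp (h a)) = (pow X (uN X P)).map a 0
    rw [map_zero]

lemma uP_hom : IsHom (uP X P) := fun a x => rfl

lemma u_decomp {i : V} (x : (uext X P).sp i) :
    ∃ p y, x = uI X P i p + uS X P i y := by
  refine ⟨x.1, x.2, ?_⟩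
  apply Prod.ext
  · change x.1 = x.1 + 0
    simp
  · change x.2 = 0 + x.2
    simp

lemma uP_uI {i : V} (p : P.sp i) : uP X P i (uI X P i p) = 0 := rfl
lemma uP_uS {i : V} (y : (pow X (uN X P)).sp i) : uP X P i (uS X P i y) = y := rfl

lemma uS_map (a : A) (y : (pow X (uN X P)).sp (t a)) :
    (uext X P).map a (uS X P _ y) = uI X P _ (∑ k, uB X P k a (powProj X _ k _ y)) +
      uS X P _ ((pow X (uN X P)).map a y) := by
  apply Prod.ext
  · change P.map a 0 + (∑ k, (uB X P k a).comp (powProj X _ k (t a))) y =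
      (∑ k, uB X P k a (powProj X _ k _ y)) + 0
    simp
  · change ((pow X (uN X P)).map a y) = 0 + ((pow X (uN X P)).map a y)
    simp

lemma u_dim (i : V) : (uext X P).dimVec i = P.dimVec i + (pow X (uN X P)).dimVec i := by
  change Module.finrank K (P.sp i × (pow X (uN X P)).sp i) = _
  rw [Module.finrank_prod]
  rfl

variable {X P}

/-- Assembling a family out of the universal extension. -/
def uDesc {Z : QuivRep K V A t h} (f : Fam P Z) (g : Fam (pow X (uN X P)) Z) : Fam (uext X P) Z :=
  fun i => LinearMap.coprod (f i) (g i)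

lemma uDesc_I {Z : QuivRep K V A t h} (f : Fam P Z) (g : Fam (pow X (uN X P)) Z) (i : V)
    (p : P.sp i) : uDesc f g i (uI X P i p) = f i p := by
  change f i p + g i 0 = _
  simp

lemma uDesc_S {Z : QuivRep K V A t h} (f : Fam P Z) (g : Fam (pow X (uN X P)) Z) (i : V)
    (y : (pow X (uN X P)).sp i) : uDesc f g i (uS X P i y) = g i y := by
  change f i 0 + g i y = _
  simp

lemma uext_ext0 (hX : Ext0 X X) : Ext0 X (uext X P) := by
  intro ψ
  obtain ⟨η, hη⟩ := ext0_pow_right (uN X P) hX (fun a => (uP X P (h a)).comp (ψ a))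
  have hη' : ∀ a x, dmap X _ η a x = uP X P _ (ψ a x) := fun a x => by rw [hη]; rfl
  -- the remaining part
  let r : ∀ a : A, X.sp (t a) →ₗ[K] (uext X P).sp (h a) :=
    fun a => ψ a - dmap X (uext X P) (fcomp (uS X P) η) a
  let ρ : ∀ a : A, X.sp (t a) →ₗ[K] P.sp (h a) := fun a => (LinearMap.fst K _ _).comp (r a)
  have hr : ∀ a x, r a x = uI X P _ (ρ a x) := by
    intro a x
    apply Prod.ext
    · rfl
    · change uP X P _ (r a x) = 0
      simp only [r, LinearMap.sub_apply, map_sub]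
      rw [dmap_apply, map_sub, uP_hom, ← hη', dmap_apply]
      simp only [fcomp, LinearMap.comp_apply, uP_uS, sub_self]
  let c := (Module.finBasis K (∀ a : A, X.sp (t a) →ₗ[K] P.sp (h a))).repr ρ
  have hc : ∑ k, c k • uB X P k = ρ := Module.Basis.sum_repr _ ρ
  let ζ : Fam X (pow X (uN X P)) := toPow fun k => (-c k) • (fun i => LinearMap.id : Fam X X)
  have hζ : IsHom ζ := toPow_hom _ fun k => (isHom_id X).smul _
  have hζk : ∀ k i x, powProj X _ k i (ζ i x) = -c k • x := fun k i x => rfl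
  refine ⟨fcomp (uS X P) η + fcomp (uS X P) ζ, ?_⟩
  rw [map_add]
  funext a
  apply LinearMap.ext
  intro x
  change dmap X _ (fcomp (uS X P) η) a x + dmap X _ (fcomp (uS X P) ζ) a x = ψ a x
  have h1 : ψ a x = dmap X _ (fcomp (uS X P) η) a x + r a x := by
    simp only [r, LinearMap.sub_apply]; abel
  rw [h1, hr]
  congr 1
  rw [dmap_apply]
  simp only [fcomp, LinearMap.comp_apply]
  rw [uS_map, hζ a x, sub_add_cancel_right, ← map_neg]
  congr 1
  have h2 : ρ a x = ∑ k, c k • uB X P k a x := by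
    conv_lhs => rw [← hc]
    simp
  rw [h2, ← Finset.sum_neg_distrib]
  refine Finset.sum_congr rfl fun k _ => ?_
  rw [hζk, map_smul, neg_smul, neg_neg]

lemma uext_ext0_left {Z : QuivRep K V A t h} (hX : Ext0 X Z) (hP : Ext0 P Z) :
    Ext0 (uext X P) Z := by
  intro ψ
  obtain ⟨f, hf⟩ := hP (fun a => (ψ a).comp (uI X P (t a)))
  have hf' : ∀ a p, dmap P Z f a p = ψ a (uI X P (t a) p) := fun a p => by rw [hf]; rfl
  obtain ⟨g, hg⟩ := ext0_pow_left (uN X P) hX (fun a => (ψ a).comp (uS X P (t a)) -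
    (f (h a)).comp (∑ k, (uB X P k a).comp (powProj X _ k (t a))))
  have hg' : ∀ a y, dmap _ Z g a y = ψ a (uS X P (t a) y) -
      f (h a) (∑ k, uB X P k a (powProj X _ k _ y)) := fun a y => by
    rw [hg]; simp
  refine ⟨uDesc f g, ?_⟩
  funext a
  apply LinearMap.ext
  intro x
  obtain ⟨p, y, rfl⟩ := u_decomp X P x
  rw [map_add, map_add]
  congr 1
  · rw [dmap_apply, ← uI_hom, uDesc_I, uDesc_I, ← hf', dmap_apply]
  · rw [dmap_apply, uS_map, map_add, uDesc_I, uDesc_S, uDesc_S, add_sub_assoc, ← dmap_apply, hg']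
    abel

lemma uext_cogen (hX : Ext0 X X) (hP : Cogen X P) : Cogen X (uext X P) := by
  intro i m hm
  obtain ⟨p, y, rfl⟩ := u_decomp X P m
  have hy : y = 0 := by
    apply pow_ext
    intro k
    have := hm _ ((powProj_hom X _ k).fcomp (uP_hom X P))
    simp only [fcomp, LinearMap.comp_apply, map_add, uP_uI, uP_uS, map_zero, zero_add] at this
    rw [this, map_zero]
  subst hy
  rw [map_zero, add_zero] at hm ⊢
  have : p = 0 := by
    apply hP
    intro θ hθ
    obtain ⟨g, hg⟩ := ext0_pow_left (uN X P) hX (fun a => -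
      (θ (h a)).comp (∑ k, (uB X P k a).comp (powProj X _ k (t a))))
    have hg' : ∀ a y, dmap _ X g a y = -
      θ (h a) (∑ k, uB X P k a (powProj X _ k _ y)) := fun a y => by
      rw [hg]; simp
    have hom : IsHom (uDesc θ g) := by
      intro a x
      obtain ⟨p, y, rfl⟩ := u_decomp X P x
      have h3 := hg' a y
      rw [dmap_apply, sub_eq_iff_eq_add] at h3
      simp only [map_add]
      rw [← uI_hom, uDesc_I, uDesc_I, uS_map, map_add, uDesc_I, uDesc_S, uDesc_S, hθ, h3]
      abel
    have := hm _ hom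
    rwa [uDesc_I] at this
  rw [this, map_zero]

end UExt

end QuivRep
end RepTheory

section StabTheory

namespace QuivRep

variable {K : Type} [Field K] {V A : Type} [Fintype V] [DecidableEq V] [Fintype A] {t h : A → V}

lemma dim_zero_iff {Z : QuivRep K V A t h} :
    Z.dimVec = (fun _ => 0) ↔ ∀ i (z : Z.sp i), z = 0 := by
  constructor
  · intro H i z
    have h1 : Module.finrank K (Z.sp i) = 0 := congrFun H i
    have := Module.finrank_zero_iff.1 h1
    exact Subsingleton.elim _ _
  · intro H
    funext i
    have : Subsingleton (Z.sp i) := ⟨fun a b => by rw [H i a, H i b]⟩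
    exact Module.finrank_zero_of_subsingleton

lemma dim_zero_of_td {Z : QuivRep K V A t h} (H : td Z = 0) : Z.dimVec = (fun _ => 0) := by
  funext i
  exact (Finset.sum_eq_zero_iff.1 H) i (Finset.mem_univ i)

lemma td_pos {Z : QuivRep K V A t h} (H : Z.dimVec ≠ (fun _ => 0)) : 0 < td Z :=
  Nat.pos_of_ne_zero fun h0 => H (dim_zero_of_td h0)

lemma eu_congr_right {X Y Z : QuivRep K V A t h} (H : Y.dimVec = Z.dimVec) : eu X Y = eu X Z := by
  simp [eu, H]

lemma eu_congr_left {X Y Z : QuivRep K V A t h} (H : Y.dimVec = Z.dimVec) : eu Y X = eu Z X := by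
  simp [eu, H]

lemma td_congr {Y Z : QuivRep K V A t h} (H : Y.dimVec = Z.dimVec) : td Y = td Z := by
  simp [td, H]

lemma ev_congr {σ : V → ℤ} {Y Z : QuivRep K V A t h} (H : Y.dimVec = Z.dimVec) :
    ev σ Y = ev σ Z := by
  simp [ev, H]

lemma Sub.mem_of_dim {Z : QuivRep K V A t h} (U : Sub Z) (H : U.dimVec = Z.dimVec) (i : V)
    (z : Z.sp i) : z ∈ U.sub i := by
  have : U.sub i = ⊤ := Submodule.eq_top_of_finrank_eq (congrFun H i)
  rw [this]; trivial

lemma ran_inj_dim {N Y : QuivRep K V A t h} (f : Fam N Y) (hf : IsHom f)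
    (hi : ∀ i, Function.Injective (f i)) : (ranS f hf).rep.dimVec = N.dimVec := by
  funext i
  exact LinearMap.finrank_range_of_inj (hi i)

lemma ran_surj_dim {N Y : QuivRep K V A t h} (f : Fam N Y) (hf : IsHom f)
    (hi : ∀ i, Function.Surjective (f i)) : (ranS f hf).rep.dimVec = Y.dimVec := by
  funext i
  change Module.finrank K (LinearMap.range (f i)) = _
  rw [LinearMap.range_eq_top.2 (hi i), finrank_top]
  rfl

lemma fam_ne_zero {X Y : QuivRep K V A t h} {f : Fam X Y} (H : f ≠ 0) : ∃ i x, f i x ≠ 0 := by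
  by_contra! H'
  apply H
  funext i
  ext x
  exact H' i x

lemma ran_ne_zero {X Y : QuivRep K V A t h} {f : Fam X Y} (hf : IsHom f) (H : f ≠ 0) :
    (ranS f hf).rep.dimVec ≠ (fun _ => 0) := by
  obtain ⟨i, x, hx⟩ := fam_ne_zero H
  intro h0
  have := dim_zero_iff.1 h0 i (toRan f hf i x)
  exact hx (congrArg ((ranS f hf).incl i) this)

/-- Orthogonality. -/
def Perp (X Z : QuivRep K V A t h) : Prop := Hom0 X Z ∧ Ext0 X Z

/-- Stability with respect to the weight given by `X`. -/
def StabE (X Z : QuivRep K V A t h) : Prop :=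
  eu X Z = 0 ∧ Z.dimVec ≠ (fun _ => 0) ∧
    ∀ U : Sub Z, U.dimVec ≠ (fun _ => 0) → U.dimVec ≠ Z.dimVec → eu X U.rep < 0

lemma weightL_sum (a d : V → ℤ) : ∑ i, weightL t h a i * d i = eulerForm t h a d := by
  simp only [weightL, eulerForm, sub_mul, Finset.sum_sub_distrib, Finset.sum_mul]
  congr 1
  · rw [Finset.sum_comm]
    refine Finset.sum_congr rfl fun i _ => ?_
    simp
  · rw [Finset.sum_comm]
    refine Finset.sum_congr rfl fun i _ => ?_
    simp

lemma stabE_iff (X Z : QuivRep K V A t h) :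
    IsStable K (weightL t h (natZ X.dimVec)) Z ↔ StabE X Z := by
  have e : ∀ d : V → ℕ, ∑ i, weightL t h (natZ X.dimVec) i * (d i : ℤ) =
      eulerForm t h (natZ X.dimVec) (natZ d) := fun d => weightL_sum _ (natZ d)
  unfold IsStable StabE
  simp only [e]
  rfl

lemma StabE.perp {X Z : QuivRep K V A t h} (hX : Ext0 X X) (hZ : StabE X Z) : Perp X Z := by
  have hT : Ext0 X (traceS X Z).rep := ext0_trace hX
  have hT0 : (traceS X Z).dimVec = fun _ => 0 := by
    by_contra hne
    have h1 : (traceS X Z).dimVec = Z.dimVec := by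
      by_contra hne2
      have := hZ.2.2 _ hne hne2
      have := eu_nonneg hT
      omega
    have h2 : eu X (traceS X Z).rep = 0 := by
      rw [← hZ.1]; exact eu_congr_right h1
    have h3 := hom0_pow_left (homDim X Z) (hom0_of_ext0 hT h2) _ (toRan_hom _ (evT_hom X Z))
    apply hne
    have : (traceS X Z).rep.dimVec = fun _ => 0 := by
      rw [dim_zero_iff]
      intro i z
      obtain ⟨y, rfl⟩ := toRan_surj (evT X Z) (evT_hom X Z) i z
      rw [h3]; rfl
    exact this
  have h0 : Hom0 X Z := by
    intro φ hφ
    funext i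
    ext x
    obtain ⟨u, hu⟩ := (traceS X Z).exists_incl i _ (mem_traceS φ hφ i x)
    rw [← hu, dim_zero_iff.1 (show (traceS X Z).rep.dimVec = _ from hT0) i u, map_zero]
    rfl
  exact ⟨h0, ext0_of_hom0 h0 hZ.1⟩

lemma surj_stab {X Z S : QuivRep K V A t h} (hZ : Ext0 X Z) (hS : StabE X S) (f : Fam Z S)
    (hf : IsHom f) (h0 : f ≠ 0) (i : V) : Function.Surjective (f i) := by
  have h1 : Ext0 X (ranS f hf).rep := ext0_of_surj _ (toRan_hom f hf) (toRan_surj f hf) hZ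
  have h2 : (ranS f hf).dimVec = S.dimVec := by
    by_contra hne
    have := hS.2.2 _ (ran_ne_zero hf h0) hne
    have := eu_nonneg h1
    omega
  intro y
  exact (ranS f hf).mem_of_dim h2 i y

lemma Perp.quot {X Z : QuivRep K V A t h} (hZ : Perp X Z) (U : Sub Z) (hU : eu X U.rep = 0) :
    Perp X U.quot := by
  have h1 : Ext0 X U.quot := ext0_of_surj _ U.proj_hom U.proj_surj hZ.2
  have h2 := eu_add_right X Z U.rep U.quot U.dim_add
  have h3 := eu_zero hZ.1 hZ.2
  exact ⟨hom0_of_ext0 h1 (by omega), h1⟩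

lemma Perp.sub {X Z : QuivRep K V A t h} (hZ : Perp X Z) (U : Sub Z) (hU : eu X U.rep = 0) :
    Perp X U.rep := by
  have h1 : Hom0 X U.rep := hom0_of_inj _ U.incl_hom U.incl_inj hZ.1
  exact ⟨h1, ext0_of_hom0 h1 hU⟩

lemma Perp.ker {X Z S : QuivRep K V A t h} (hZ : Perp X Z) (f : Fam Z S)
    (hf : IsHom f) (hs : ∀ i, Function.Surjective (f i)) (hS : eu X S = 0) :
    Perp X (kerS f hf).rep := by
  apply hZ.sub
  have h1 := eu_add_right X Z _ _ (ker_ran_dim f hf)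
  rw [eu_congr_right (ran_surj_dim f hf hs), hS, eu_zero hZ.1 hZ.2] at h1
  omega

lemma td_ker {Z S : QuivRep K V A t h} (f : Fam Z S) (hf : IsHom f) (h0 : f ≠ 0) :
    td (kerS f hf).rep < td Z := by
  have := td_add _ _ _ (ker_ran_dim f hf)
  have := td_pos (ran_ne_zero hf h0)
  omega

lemma RepIso.ne_zero {X Y : QuivRep K V A t h} (H : RepIso K X Y) (h0 : X.dimVec ≠ fun _ => 0) :
    ∃ f : Fam X Y, IsHom f ∧ f ≠ 0 := by
  obtain ⟨e, he⟩ := H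
  refine ⟨fun i => (e i).toLinearMap, he, fun hz => h0 ?_⟩
  rw [dim_zero_iff]
  intro i x
  have := LinearMap.congr_fun (congrFun hz i) x
  simpa using this

lemma exists_hom_stab {X : QuivRep K V A t h} {l : ℕ} {E : Fin l → QuivRep K V A t h}
    (hall : ∀ Z, StabE X Z → ∃ j, RepIso K Z (E j)) (n : ℕ) :
    ∀ Z, td Z ≤ n → Perp X Z → Z.dimVec ≠ (fun _ => 0) →
      ∃ (j : Fin l) (f : Fam Z (E j)), IsHom f ∧ f ≠ 0 := by
  induction n with
  | zero =>
    intro Z hn _ h0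
    have := td_pos h0
    omega
  | succ n ih =>
    intro Z hn hZ h0
    by_cases hst : StabE X Z
    · obtain ⟨j, hj⟩ := hall Z hst
      exact ⟨j, RepIso.ne_zero hj h0⟩
    · have hex : ∃ U : Sub Z, U.dimVec ≠ (fun _ => 0) ∧ U.dimVec ≠ Z.dimVec ∧ 0 ≤ eu X U.rep := by
        by_contra! hcon
        exact hst ⟨eu_zero hZ.1 hZ.2, h0, fun U h1 h2 => hcon U h1 h2⟩
      obtain ⟨U, h1, h2, h3⟩ := hex
      have h4 : eu X U.rep = 0 :=
        le_antisymm (eu_nonpos (hom0_of_inj _ U.incl_hom U.incl_inj hZ.1)) h3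
      have h5 := td_add _ _ _ U.dim_add
      have h6 : 0 < td U.rep := td_pos h1
      have h7 : U.quot.dimVec ≠ fun _ => 0 := by
        intro hz
        apply h2
        funext i
        have := U.dim_add i
        rw [hz] at this
        exact this.symm
      obtain ⟨j, f, hf, hf0⟩ := ih U.quot (by omega) (hZ.quot U h4) h7
      refine ⟨j, fcomp f U.proj, hf.fcomp U.proj_hom, fun hz => hf0 ?_⟩
      funext i
      apply LinearMap.ext
      intro x
      obtain ⟨y, rfl⟩ := U.proj_surj i x
      exact LinearMap.congr_fun (congrFun hz i) y

/-- Good weights. -/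
def Good (σ : V → ℤ) (X : QuivRep K V A t h) : Prop :=
  ev σ X = 0 ∧ ∀ U : Sub X, 0 ≤ ev σ U.rep

lemma cogen_ev {σ : V → ℤ} {X : QuivRep K V A t h} (hσ : Good σ X) (n : ℕ) :
    ∀ Y, td Y ≤ n → Cogen X Y → 0 ≤ ev σ Y := by
  induction n with
  | zero =>
    intro Y hn _
    have := dim_zero_of_td (Nat.le_zero.1 hn)
    simp [ev, this]
  | succ n ih =>
    intro Y hn hY
    by_cases h0 : Hom0 Y X
    · have : Y.dimVec = fun _ => 0 := by
        rw [dim_zero_iff]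
        intro i y
        apply hY
        intro φ hφ
        rw [h0 φ hφ]; rfl
      simp [ev, this]
    · unfold Hom0 at h0
      push Not at h0
      obtain ⟨φ, hφ, hne⟩ := h0
      have h1 := td_ker φ hφ hne
      have h2 := ih (kerS φ hφ).rep (by omega)
        (hY.of_inj _ (kerS φ hφ).incl_hom (kerS φ hφ).incl_inj)
      have h3 := hσ.2 (ranS φ hφ)
      have := ev_add σ _ _ _ (ker_ran_dim φ hφ)
      omega

/-- The weight `⟨·,d⟩`. -/
def wtR (t h : A → V) (d : V → ℕ) : V → ℤ :=
  fun i => eulerForm t h (fun j => if j = i then 1 else 0) (natZ d)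

lemma wtR_sum (d : V → ℕ) (y : V → ℤ) : ∑ i, wtR t h d i * y i = eulerForm t h y (natZ d) := by
  simp only [wtR, eulerForm, sub_mul, Finset.sum_sub_distrib, Finset.sum_mul]
  congr 1
  · rw [Finset.sum_comm]
    refine Finset.sum_congr rfl fun i _ => ?_
    simp [mul_comm]
  · rw [Finset.sum_comm]
    refine Finset.sum_congr rfl fun i _ => ?_
    simp [mul_comm]

lemma ev_wtR (Y Z : QuivRep K V A t h) : ev (wtR t h Z.dimVec) Y = eu Y Z :=
  wtR_sum _ (natZ Y.dimVec)

lemma good_wtR {X Z : QuivRep K V A t h} (hZ : Perp X Z) : Good (wtR t h Z.dimVec) X := by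
  refine ⟨?_, fun U => ?_⟩
  · rw [ev_wtR]; exact eu_zero hZ.1 hZ.2
  · rw [ev_wtR]; exact eu_nonneg (ext0_of_inj _ U.incl_hom U.incl_inj hZ.2)

lemma ev_pow (σ : V → ℤ) (X : QuivRep K V A t h) (n : ℕ) : ev σ (pow X n) = n * ev σ X := by
  simp only [ev, dim_pow, Finset.mul_sum]
  refine Finset.sum_congr rfl fun i _ => ?_
  push_cast
  ring

lemma ev_trace {σ : V → ℤ} {X M : QuivRep K V A t h} (hσ : Good σ X) (hM : Cogen X M) :
    ev σ (traceS X M).rep = 0 := by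
  have h1 := cogen_ev hσ _ (traceS X M).rep le_rfl
    (hM.of_inj _ (traceS X M).incl_hom (traceS X M).incl_inj)
  have h2 := ev_add σ _ _ _ (ker_ran_dim (evT X M) (evT_hom X M))
  rw [ev_pow, hσ.1, mul_zero] at h2
  have h3 := cogen_ev hσ _ (kerS (evT X M) (evT_hom X M)).rep le_rfl
    ((cogen_pow X _).of_inj _ (Sub.incl_hom _) (Sub.incl_inj _))
  have h4 : ev σ (traceS X M).rep = ev σ (ranS (evT X M) (evT_hom X M)).rep := rfl
  omega

lemma finrank_comap_surj {M L : Type} [AddCommGroup M] [Module K M] [FiniteDimensional K M]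
    [AddCommGroup L] [Module K L] (f : M →ₗ[K] L) (hf : Function.Surjective f)
    (N : Submodule K L) : Module.finrank K (N.comap f) =
      Module.finrank K (LinearMap.ker f) + Module.finrank K N := by
  have h1 := LinearMap.finrank_range_add_finrank_ker (f.domRestrict (N.comap f))
  have h2 : LinearMap.range (f.domRestrict (N.comap f)) = N := by
    rw [LinearMap.range_domRestrict, Submodule.map_comap_eq_of_surjective hf]
  have h3 : Module.finrank K (LinearMap.ker (f.domRestrict (N.comap f))) =
      Module.finrank K (LinearMap.ker f) := by
    rw [LinearMap.ker_domRestrict]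
    apply LinearEquiv.finrank_eq
    apply Submodule.comapSubtypeEquivOfLe
    intro x hx
    rw [LinearMap.mem_ker] at hx
    rw [Submodule.mem_comap, hx]
    exact zero_mem _
  rw [h2, h3] at h1
  omega

/-- Projectives relative to the perpendicular category. -/
def PP (σ : V → ℤ) (X P : QuivRep K V A t h) : Prop :=
  Perp X P ∧ (∀ Z, Perp X Z → Ext0 P Z) ∧
    ∀ (N : QuivRep K V A t h) (f : Fam N P), IsHom f → (∀ i, Function.Injective (f i)) → 0 ≤ ev σ N

lemma PP.sub {σ : V → ℤ} {X P : QuivRep K V A t h} (hP : PP σ X P) (U : Sub P)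
    (hU : Perp X U.rep) : PP σ X U.rep := by
  refine ⟨hU, fun Z hZ => ext0_of_inj _ U.incl_hom U.incl_inj (hP.2.1 Z hZ), ?_⟩
  intro N f hf hi
  exact hP.2.2 N (fcomp U.incl f) (U.incl_hom.fcomp hf) fun i => (U.incl_inj i).comp (hi i)

lemma exists_PP {X P : QuivRep K V A t h} (hs : ∀ i, 0 < X.dimVec i) (hX : Ext0 X X)
    (hP : ∀ Z, Ext0 P Z) :
    ∃ L, (∀ σ, Good σ X → PP σ X L) ∧ (∀ σ, Good σ X → ev σ L = ev σ P) := by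
  have hM : Cogen X (uext X P) := uext_cogen hX (cogen_proj hs hX hP)
  set M := uext X P with hMdef
  set T := traceS X M with hT
  have hTX : Ext0 X T.rep := ext0_trace hX
  refine ⟨T.quot, ?_, ?_⟩
  · intro σ hσ
    refine ⟨⟨?_, ?_⟩, ?_, ?_⟩
    · intro φ hφ
      obtain ⟨φ', hφ', rfl⟩ := lift_quot T hTX φ hφ
      funext i
      apply LinearMap.ext
      intro x
      exact (T.proj_eq_zero i _).2 (mem_traceS φ' hφ' i x)
    · exact ext0_of_surj _ T.proj_hom T.proj_surj (uext_ext0 hX)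
    · intro Z hZ
      exact ext0_quot T (uext_ext0_left hZ.2 (hP Z)) (hom0_trace hZ.1)
    · intro N f hf hi
      let N' : Sub M :=
        { sub := fun i => ((ranS f hf).sub i).comap (T.proj i)
          le := by
            intro a x hx
            rw [Submodule.mem_comap] at *
            rw [T.proj_hom]
            exact (ranS f hf).le a _ hx }
      have hd : ∀ i, N'.rep.dimVec i = T.rep.dimVec i + (ranS f hf).rep.dimVec i := by
        intro i
        have h1 := finrank_comap_surj (T.proj i) (T.proj_surj i) ((ranS f hf).sub i)
        have h2 : LinearMap.ker (T.proj i) = T.sub i := Submodule.ker_mkQ _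
        rw [h2] at h1
        exact h1
      have h1 := ev_add σ _ _ _ hd
      rw [ev_congr (ran_inj_dim f hf hi), ev_trace hσ hM] at h1
      have h2 := cogen_ev hσ _ N'.rep le_rfl (hM.of_inj _ N'.incl_hom N'.incl_inj)
      omega
  · intro σ hσ
    have h1 := ev_add σ _ _ _ T.dim_add
    have h2 := ev_add σ _ _ _ (u_dim X P)
    rw [ev_pow, hσ.1, mul_zero] at h2
    rw [ev_trace hσ hM] at h1
    have h3 : ev σ M = ev σ (uext X P) := rfl
    omega

lemma factor_surj {P S R : QuivRep K V A t h} (g : Fam P S) (hg : IsHom g)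
    (hs : ∀ i, Function.Surjective (g i)) (f : Fam P R) (hf : IsHom f)
    (H : fcomp f (kerS g hg).incl = 0) : ∃ θ : Fam S R, IsHom θ ∧ fcomp θ g = f := by
  choose s hs' using fun i => LinearMap.exists_rightInverse_of_surjective (g i)
    (LinearMap.range_eq_top.2 (hs i))
  have hs2 : ∀ i y, g i (s i y) = y := fun i y => LinearMap.congr_fun (hs' i) y
  have key : ∀ i x, f i (s i (g i x)) = f i x := by
    intro i x
    have hm : s i (g i x) - x ∈ (kerS g hg).sub i := by
      change _ ∈ LinearMap.ker (g i)
      rw [LinearMap.mem_ker, map_sub, hs2, sub_self]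
    obtain ⟨u, hu⟩ := (kerS g hg).exists_incl i _ hm
    have h1 : f i ((kerS g hg).incl i u) = 0 := LinearMap.congr_fun (congrFun H i) u
    rw [hu, map_sub] at h1
    exact sub_eq_zero.1 h1
  refine ⟨fun i => (f i).comp (s i), ?_, ?_⟩
  · intro a y
    obtain ⟨x, rfl⟩ := hs _ y
    simp only [LinearMap.comp_apply]
    rw [← hg, key, key, hf]
  · funext i
    ext x
    exact key i x

lemma stab_inj {X S R : QuivRep K V A t h} (hX : Ext0 X X) (hS : StabE X S) (hR : StabE X R)
    (θ : Fam S R) (hθ : IsHom θ) (h0 : θ ≠ 0) (i : V) : Function.Injective (θ i) := by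
  have hsurj := surj_stab (hS.perp hX).2 hR θ hθ h0
  have h1 := (hS.perp hX).ker θ hθ hsurj hR.1
  have h2 := eu_zero h1.1 h1.2
  have h3 : (kerS θ hθ).dimVec = fun _ => 0 := by
    by_contra hne
    by_cases heq : (kerS θ hθ).dimVec = S.dimVec
    · have := td_ker θ hθ h0
      have h4 : td (kerS θ hθ).rep = td S := td_congr heq
      omega
    · have := hS.2.2 _ hne heq
      omega
  rw [injective_iff_map_eq_zero]
  intro x hx
  obtain ⟨u, rfl⟩ := (kerS θ hθ).exists_incl i x hx
  rw [dim_zero_iff.1 (show (kerS θ hθ).rep.dimVec = _ from h3) i u, map_zero]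

lemma stab_iso {X S R : QuivRep K V A t h} (hX : Ext0 X X) (hS : StabE X S) (hR : StabE X R)
    (θ : Fam S R) (hθ : IsHom θ) (h0 : θ ≠ 0) : RepIso K S R :=
  ⟨fun i => LinearEquiv.ofBijective (θ i) ⟨stab_inj hX hS hR θ hθ h0 i,
    surj_stab (hS.perp hX).2 hR θ hθ h0 i⟩, fun a x => hθ a x⟩

lemma stab_schur [IsAlgClosed K] {X S : QuivRep K V A t h} (hX : Ext0 X X) (hS : StabE X S)
    (θ : Fam S S) (hθ : IsHom θ) : ∃ c : K, ∀ i x, θ i x = c • x := by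
  have : ∃ i, S.dimVec i ≠ 0 := by
    by_contra! hcon
    exact hS.2.1 (funext hcon)
  obtain ⟨i, hi⟩ := this
  have : Nontrivial (S.sp i) := Module.nontrivial_of_finrank_pos (Nat.pos_of_ne_zero hi)
  obtain ⟨c, hc⟩ := Module.End.exists_eigenvalue (θ i)
  obtain ⟨v, hv⟩ := hc.exists_hasEigenvector
  have hv1 : θ i v = c • v := hv.apply_eq_smul
  have hv2 : v ≠ 0 := hv.2
  refine ⟨c, ?_⟩
  have hhom : IsHom (θ - c • (fun i => LinearMap.id : Fam S S)) := hθ.sub ((isHom_id S).smul c)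
  have hz : θ - c • (fun i => LinearMap.id : Fam S S) = 0 := by
    by_contra hne
    apply hv2
    apply stab_inj hX hS hS _ hhom hne i
    rw [map_zero]
    change θ i v - c • v = 0
    rw [hv1, sub_self]
  intro j x
  have := LinearMap.congr_fun (congrFun hz j) x
  exact sub_eq_zero.1 this

end QuivRep
end StabTheory

section PathTheory

variable {K : Type} [Field K] {V A : Type} [Fintype V] [DecidableEq V] [Fintype A] {t h : A → V}

/-- Paths, built at the end. -/
inductive PathF (t h : A → V) (i : V) : V → Type where
  | nil : PathF t h i i
  | cons (a : A) (p : PathF t h i (t a)) : PathF t h i (h a)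

lemma path_append (i j k : V) (p q : List A) (hp : IsPathFrom t h i p j)
    (hq : IsPathFrom t h j q k) : IsPathFrom t h i (p ++ q) k := by
  induction p generalizing i with
  | nil => 
    have : i = j := hp
    subst this; exact hq
  | cons a p ih => exact ⟨hp.1, ih _ hp.2⟩

lemma path_of_transGen (i j : V) (H : Relation.TransGen (fun u v => ∃ a, t a = u ∧ h a = v) i j) :
    ∃ p : List A, p ≠ [] ∧ IsPathFrom t h i p j := by
  induction H with
  | single hh =>
    obtain ⟨a, h1, h2⟩ := hh
    exact ⟨[a], by simp, h1, h2⟩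
  | tail _ hh ih =>
    obtain ⟨a, h1, h2⟩ := hh
    obtain ⟨p, hp, hp2⟩ := ih
    exact ⟨p ++ [a], by simp, path_append _ _ _ _ _ hp2 ⟨h1, h2⟩⟩

lemma acyclic_wf (hQ : Acyclic t h) : WellFounded (fun u v => ∃ a, t a = u ∧ h a = v) := by
  have : Std.Irrefl (Relation.TransGen (fun u v => ∃ a, t a = u ∧ h a = v)) := ⟨fun i hi => by
    obtain ⟨p, hp, hp2⟩ := path_of_transGen i i hi
    exact hp (hQ i p hp2)⟩
  have h1 : WellFounded (Relation.TransGen (fun u v => ∃ a, t a = u ∧ h a = v)) :=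
    Finite.wellFounded_of_trans_of_irrefl _
  exact Subrelation.wf (fun {a b} hab => Relation.TransGen.single hab) h1

/-- Decomposition of paths. -/
def pathEquiv (i j : V) : PathF t h i j ≃
    (PLift (i = j)) ⊕ (Σ a : {a : A // h a = j}, PathF t h i (t a.1)) where
  toFun p := match j, p with
    | _, PathF.nil => Sum.inl ⟨rfl⟩
    | _, PathF.cons a p => Sum.inr ⟨⟨a, rfl⟩, p⟩
  invFun x := match x with
    | Sum.inl e => e.down ▸ PathF.nil
    | Sum.inr y => y.1.2 ▸ PathF.cons y.1.1 y.2
  left_inv p := by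
    cases p <;> rfl
  right_inv x := by
    rcases x with ⟨⟨e⟩⟩ | ⟨⟨a, ha⟩, p⟩
    · subst e; rfl
    · subst ha; rfl

lemma path_finite (hQ : Acyclic t h) (i j : V) : Finite (PathF t h i j) := by
  induction j using (acyclic_wf hQ).induction with
  | _ j ih =>
    have : ∀ a : {a : A // h a = j}, Finite (PathF t h i (t a.1)) := fun a => ih _ ⟨a.1, rfl, a.2⟩
    exact Finite.of_equiv _ (pathEquiv i j).symm

lemma path_card (hQ : Acyclic t h) (i j : V) :
    (Nat.card (PathF t h i j) : ℤ) = (if i = j then 1 else 0) +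
      ∑ a, if h a = j then (Nat.card (PathF t h i (t a)) : ℤ) else 0 := by
  have := fun j => path_finite hQ i j
  rw [Nat.card_congr (pathEquiv i j), Nat.card_sum, Nat.card_sigma]
  push_cast
  congr 1
  · by_cases hij : i = j
    · subst hij; simp
    · have : IsEmpty (PLift (i = j)) := ⟨fun x => hij x.down⟩
      simp [hij]
  · rw [← Finset.sum_filter]
    exact Finset.sum_subtype (p := fun a => h a = j) (Finset.univ.filter fun a => h a = j)
      (fun x => by simp) (fun a => (Nat.card (PathF t h i (t a)) : ℤ)) |>.symm ▸ rfl

namespace QuivRep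

/-- The projective representation at a vertex. -/
def projRep (K : Type) [Field K] (hQ : Acyclic t h) (i : V) : QuivRep K V A t h where
  sp j := PathF t h i j →₀ K
  inst3 j := by
    have := path_finite hQ i j
    infer_instance
  map a := Finsupp.lmapDomain K K (PathF.cons a)

lemma projRep_dim (hQ : Acyclic t h) (i j : V) :
    (projRep K hQ i).dimVec j = Nat.card (PathF t h i j) := by
  have := path_finite hQ i j
  have := Fintype.ofFinite (PathF t h i j)
  change Module.finrank K (PathF t h i j →₀ K) = _
  rw [Module.finrank_finsupp_self, Nat.card_eq_fintype_card]

/-- Recursive construction of a family out of the projective. -/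
def pathRec {i : V} {Y : QuivRep K V A t h} (ψ : ∀ a : A, (PathF t h i (t a) →₀ K) →ₗ[K] Y.sp (h a)) :
    ∀ j, PathF t h i j → Y.sp j
  | _, PathF.nil => 0
  | _, PathF.cons a p => Y.map a (pathRec ψ _ p) + ψ a (Finsupp.single p 1)

lemma pathRec_spec {i : V} {Y : QuivRep K V A t h}
    (ψ : ∀ a : A, (PathF t h i (t a) →₀ K) →ₗ[K] Y.sp (h a)) (a : A) (p : PathF t h i (t a)) (c : K) :
    Finsupp.linearCombination K (pathRec ψ (h a)) (Finsupp.single (PathF.cons a p) c) -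
      Y.map a (Finsupp.linearCombination K (pathRec ψ (t a)) (Finsupp.single p c)) =
      ψ a (Finsupp.single p c) := by
  have h2 : (Finsupp.single p c : PathF t h i (t a) →₀ K) = c • Finsupp.single p 1 := by simp
  rw [Finsupp.linearCombination_single, Finsupp.linearCombination_single, h2, map_smul, map_smul]
  simp only [pathRec, smul_add]
  abel

lemma projRep_ext0 (hQ : Acyclic t h) (i : V) (Y : QuivRep K V A t h) :
    Ext0 (projRep K hQ i) Y := by
  intro ψ
  refine ⟨fun j => Finsupp.linearCombination K (pathRec ψ j), ?_⟩
  funext a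
  apply Finsupp.lhom_ext
  intro p c
  have h1 : (projRep K hQ i).map a (Finsupp.single p c) = Finsupp.single (PathF.cons a p) c :=
    Finsupp.mapDomain_single
  refine Eq.trans ?_ (pathRec_spec ψ a p c)
  exact congrArg₂ (· - ·) (congrArg (Finsupp.linearCombination K (pathRec ψ (h a))) h1) rfl

lemma projRep_euler (hQ : Acyclic t h) (i : V) (y : V → ℤ) :
    eulerForm t h (natZ (projRep K hQ i).dimVec) y = y i := by
  have e : natZ (projRep K hQ i).dimVec = fun j => (Nat.card (PathF t h i j) : ℤ) := by
    funext j
    simp [natZ, projRep_dim]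
  rw [e]
  unfold eulerForm
  have : ∀ j, (Nat.card (PathF t h i j) : ℤ) * y j = (if i = j then 1 else 0) * y j +
      ∑ a, if h a = j then (Nat.card (PathF t h i (t a)) : ℤ) * y (h a) else 0 := by
    intro j
    rw [path_card hQ i j, add_mul, Finset.sum_mul]
    congr 1
    refine Finset.sum_congr rfl fun a _ => ?_
    by_cases ha : h a = j
    · subst ha; simp
    · simp [ha]
  rw [Finset.sum_congr rfl fun j _ => this j, Finset.sum_add_distrib]
  conv_lhs => enter [1, 2]; rw [Finset.sum_comm]
  simp

/-- Functionals are determined by their values on projectives. -/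
lemma determined (K : Type) [Field K] (hQ : Acyclic t h) (τ : V → ℤ)
    (H : ∀ i, ev τ (projRep K hQ i) = 0) : τ = 0 := by
  let M : Matrix V V ℤ := fun i j => ((projRep K hQ i).dimVec j : ℤ)
  let N : Matrix V V ℤ := fun j k => (if j = k then 1 else 0) -
    ∑ a, if t a = j then (if h a = k then 1 else 0) else 0
  have h1 : M * N = 1 := by
    ext i k
    have := projRep_euler (K := K) hQ i (fun j => if j = k then 1 else 0)
    rw [Matrix.mul_apply, Matrix.one_apply, ← this]
    simp only [M, N, eulerForm, natZ, mul_sub, Finset.sum_sub_distrib, Finset.mul_sum]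
    congr 1
    rw [Finset.sum_comm]
    refine Finset.sum_congr rfl fun a _ => ?_
    simp
  have h2 : N * M = 1 := mul_eq_one_comm.1 h1
  have h3 : M.mulVec τ = 0 := by
    funext i
    refine Eq.trans ?_ (H i)
    simp only [Matrix.mulVec, dotProduct, M, ev]
    exact Finset.sum_congr rfl fun j _ => mul_comm _ _
  calc τ = (1 : Matrix V V ℤ).mulVec τ := by rw [Matrix.one_mulVec]
    _ = N.mulVec (M.mulVec τ) := by rw [← h2, Matrix.mulVec_mulVec]
    _ = 0 := by rw [h3, Matrix.mulVec_zero]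

section Main
variable [IsAlgClosed K] {X : QuivRep K V A t h} {l : ℕ} {E : Fin l → QuivRep K V A t h}

lemma exists_PP_hom (hQ : Acyclic t h) (hs : ∀ i, 0 < X.dimVec i) (hX : Ext0 X X)
    {S : QuivRep K V A t h} (hst : StabE X S) {σ : V → ℤ} (hσ : Good σ X) :
    ∃ P, PP σ X P ∧ ∃ f : Fam P S, IsHom f ∧ f ≠ 0 := by
  have : ∃ i, S.dimVec i ≠ 0 := by
    by_contra! hcon
    exact hst.2.1 (funext hcon)
  obtain ⟨i, hi⟩ := this
  obtain ⟨L, hL1, hL2⟩ := exists_PP hs hX (projRep_ext0 (K := K) hQ i)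
  have hp := hst.perp hX
  refine ⟨L, hL1 σ hσ, ?_⟩
  have h1 := hL2 _ (good_wtR hp)
  rw [ev_wtR, ev_wtR] at h1
  have h2 : eu (projRep K hQ i) S = S.dimVec i := projRep_euler hQ i _
  have h3 := eu_of_ext0 ((hL1 σ hσ).2.1 S hp)
  by_contra! hcon
  have h4 : homDim L S = 0 := homDim_eq_zero.2 hcon
  omega

lemma exists_minimal (hQ : Acyclic t h) (hs : ∀ i, 0 < X.dimVec i) (hX : Ext0 X X)
    {S : QuivRep K V A t h} (hst : StabE X S) {σ : V → ℤ} (hσ : Good σ X) :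
    ∃ P, PP σ X P ∧ (∃ f : Fam P S, IsHom f ∧ f ≠ 0) ∧
      ∀ P', PP σ X P' → (∃ f : Fam P' S, IsHom f ∧ f ≠ 0) → td P ≤ td P' := by
  classical
  have hex : ∃ n, ∃ P, (PP σ X P ∧ ∃ f : Fam P S, IsHom f ∧ f ≠ 0) ∧ td P = n := by
    obtain ⟨P, hP⟩ := exists_PP_hom hQ hs hX hst hσ
    exact ⟨_, P, hP, rfl⟩
  obtain ⟨P, hP, htd⟩ := Nat.find_spec hex
  refine ⟨P, hP.1, hP.2, fun P' h1 h2 => ?_⟩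
  rw [htd]
  exact Nat.find_min' hex ⟨P', ⟨h1, h2⟩, rfl⟩

lemma minimal_factor (hX : Ext0 X X) {S R : QuivRep K V A t h} (hS : StabE X S) (hR : StabE X R)
    {σ : V → ℤ} {P : QuivRep K V A t h} (hP : PP σ X P)
    (hmin : ∀ P', PP σ X P' → (∃ f : Fam P' S, IsHom f ∧ f ≠ 0) → td P ≤ td P')
    (f : Fam P S) (hf : IsHom f) (g : Fam P R) (hg : IsHom g) (hg0 : g ≠ 0) :
    ∃ θ : Fam R S, IsHom θ ∧ fcomp θ g = f := by
  have hsurj := surj_stab hP.1.2 hR g hg hg0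
  apply factor_surj g hg hsurj f hf
  by_contra hne
  have h1 := hP.1.ker g hg hsurj hR.1
  have h2 := hmin _ (hP.sub _ h1) ⟨_, hf.fcomp (Sub.incl_hom _), hne⟩
  have := td_ker g hg hg0
  omega

lemma minimal_eu (hX : Ext0 X X) (hst : ∀ j, StabE X (E j))
    (hnon : ∀ j k, j ≠ k → ¬ RepIso K (E j) (E k)) (j : Fin l)
    {σ : V → ℤ} {P : QuivRep K V A t h} (hP : PP σ X P)
    (hmin : ∀ P', PP σ X P' → (∃ f : Fam P' (E j), IsHom f ∧ f ≠ 0) → td P ≤ td P')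
    (f : Fam P (E j)) (hf : IsHom f) (hf0 : f ≠ 0) (k : Fin l) :
    eu P (E k) = if k = j then 1 else 0 := by
  rw [eu_of_ext0 (hP.2.1 _ ((hst k).perp hX))]
  by_cases hkj : k = j
  · subst hkj
    rw [if_pos rfl]
    have hmem : f ∈ homS P (E k) := (isHom_iff_mem f).1 hf
    have : homDim P (E k) = 1 := by
      unfold homDim
      refine (finrank_eq_one_iff_of_nonzero' (⟨f, hmem⟩ : homS P (E k)) ?_).2 ?_
      · intro hz
        exact hf0 (congrArg Subtype.val hz)
      · rintro ⟨g, hg⟩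
        by_cases hg0 : g = 0
        · refine ⟨0, ?_⟩
          rw [zero_smul]
          exact Subtype.ext hg0.symm
        · rw [← isHom_iff_mem] at hg
          obtain ⟨θ, hθ, e⟩ := minimal_factor hX (hst k) (hst k) hP hmin f hf g hg hg0
          obtain ⟨c, hc⟩ := stab_schur hX (hst k) θ hθ
          have e2 : f = c • g := by
            rw [← e]
            funext i
            ext x
            exact hc i _
          have hc0 : c ≠ 0 := by
            rintro rfl
            rw [zero_smul] at e2
            exact hf0 e2
          refine ⟨c⁻¹, Subtype.ext ?_⟩
          change c⁻¹ • f = g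
          rw [e2, smul_smul, inv_mul_cancel₀ hc0, one_smul]
    rw [this]; rfl
  · rw [if_neg hkj]
    have : homDim P (E k) = 0 := by
      rw [homDim_eq_zero]
      intro g hg
      by_contra hg0
      obtain ⟨θ, hθ, e⟩ := minimal_factor hX (hst j) (hst k) hP hmin f hf g hg hg0
      apply hnon k j hkj
      apply stab_iso hX (hst k) (hst j) θ hθ
      rintro rfl
      apply hf0
      rw [← e]
      rfl
    rw [this]; rfl

/-- Existence of a dual family of relative projectives. -/
lemma exists_dual (hQ : Acyclic t h) (hs : ∀ i, 0 < X.dimVec i) (hX : Ext0 X X)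
    (hst : ∀ j, StabE X (E j)) (hall : ∀ Z, StabE X Z → ∃ j, RepIso K Z (E j))
    (hnon : ∀ j k, j ≠ k → ¬ RepIso K (E j) (E k)) {σ : V → ℤ} (hσ : Good σ X) :
    ∃ P : Fin l → QuivRep K V A t h, (∀ j k, eu (P j) (E k) = if k = j then 1 else 0) ∧
      (∀ j, 0 ≤ ev σ (P j)) ∧
      ∀ L, PP σ X L → ev σ L = ∑ k, eu L (E k) * ev σ (P k) := by
  choose P hP hPf hmin using fun j => exists_minimal hQ hs hX (hst j) hσ
  choose p hp hp0 using hPf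
  have hδ : ∀ j k, eu (P j) (E k) = if k = j then 1 else 0 := fun j k =>
    minimal_eu hX hst hnon j (hP j) (hmin j) (p j) (hp j) (hp0 j) k
  refine ⟨P, hδ, ?_, ?_⟩
  · intro j
    exact (hP j).2.2 (P j) _ (isHom_id _) (fun i => Function.injective_id)
  · have main : ∀ n, ∀ L, td L ≤ n → PP σ X L → ev σ L = ∑ k, eu L (E k) * ev σ (P k) := by
      intro n
      induction n with
      | zero =>
        intro L hn _
        have := dim_zero_of_td (Nat.le_zero.1 hn)
        simp [ev, eu, eulerForm, natZ, this]
      | succ n ih =>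
        intro L hn hL
        by_cases h0 : L.dimVec = fun _ => 0
        · simp [ev, eu, eulerForm, natZ, h0]
        · obtain ⟨j, f, hf, hf0⟩ := exists_hom_stab hall _ L le_rfl hL.1 h0
          have s1 := surj_stab hL.1.2 (hst j) f hf hf0
          have s2 := surj_stab (hP j).1.2 (hst j) (p j) (hp j) (hp0 j)
          have k1 := hL.sub _ (hL.1.ker f hf s1 (hst j).1)
          have k2 := (hP j).sub _ ((hP j).1.ker (p j) (hp j) s2 (hst j).1)
          have t1 := td_ker f hf hf0
          have t2 := td_ker (p j) (hp j) (hp0 j)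
          have t3 := hmin j L hL ⟨f, hf, hf0⟩
          have i1 := ih _ (by omega) k1
          have i2 := ih _ (by omega) k2
          have e1 := ev_add σ _ _ _ (ker_ran_dim f hf)
          have e2 := ev_add σ _ _ _ (ker_ran_dim (p j) (hp j))
          rw [ev_congr (ran_surj_dim _ _ s1)] at e1
          rw [ev_congr (ran_surj_dim _ _ s2)] at e2
          have f1 : ∀ k, eu L (E k) = _ := fun k => eu_add_left (E k) _ _ _ (ker_ran_dim f hf)
          have f2 : ∀ k, eu (P j) (E k) = _ := fun k =>
            eu_add_left (E k) _ _ _ (ker_ran_dim (p j) (hp j))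
          have g1 : ∀ k, eu L (E k) = eu (kerS f hf).rep (E k) + (if k = j then 1 else 0) -
              eu (kerS (p j) (hp j)).rep (E k) := by
            intro k
            have a1 := f1 k
            have a2 := f2 k
            rw [eu_congr_left (ran_surj_dim _ _ s1)] at a1
            rw [eu_congr_left (ran_surj_dim _ _ s2), hδ] at a2
            omega
          simp only [g1, add_mul, sub_mul, Finset.sum_add_distrib, Finset.sum_sub_distrib]
          rw [← i1, ← i2]
          simp
          omega
    exact fun L hL => main _ L le_rfl hL

/-- Good weights are nonnegative combinations. -/
theorem good_expand (hQ : Acyclic t h) (hs : ∀ i, 0 < X.dimVec i) (hX : Ext0 X X)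
    (hst : ∀ j, StabE X (E j)) (hall : ∀ Z, StabE X Z → ∃ j, RepIso K Z (E j))
    (hnon : ∀ j k, j ≠ k → ¬ RepIso K (E j) (E k)) {σ : V → ℤ} (hσ : Good σ X) :
    ∃ n : Fin l → ℕ, ∀ i, σ i = ∑ j, (n j : ℤ) * wtR t h (E j).dimVec i := by
  obtain ⟨P, h1, h2, h3⟩ := exists_dual hQ hs hX hst hall hnon hσ
  refine ⟨fun j => (ev σ (P j)).toNat, ?_⟩
  have hcast : ∀ j, (((ev σ (P j)).toNat : ℕ) : ℤ) = ev σ (P j) := fun j => Int.toNat_of_nonneg (h2 j)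
  simp only [hcast]
  have key := determined K hQ (fun i => σ i - ∑ j, ev σ (P j) * wtR t h (E j).dimVec i) ?_
  · intro i
    exact sub_eq_zero.1 (congrFun key i)
  · intro i
    obtain ⟨L, hL1, hL2⟩ := exists_PP hs hX (projRep_ext0 (K := K) hQ i)
    have h4 := h3 L (hL1 σ hσ)
    have h5 : ∀ j, eu L (E j) = eu (projRep K hQ i) (E j) := by
      intro j
      have := hL2 _ (good_wtR ((hst j).perp hX))
      rwa [ev_wtR, ev_wtR] at this
    rw [hL2 σ hσ] at h4
    simp only [h5, ← ev_wtR] at h4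
    have : ∀ c : Fin l → ℤ,
        ev (fun i => σ i - ∑ j, c j * wtR t h (E j).dimVec i) (projRep K hQ i) =
        ev σ (projRep K hQ i) -
          ∑ j, ev (wtR t h (E j).dimVec) (projRep K hQ i) * c j := by
      intro c
      conv_lhs => unfold ev
      simp only [sub_mul, Finset.sum_sub_distrib, Finset.sum_mul]
      congr 1
      rw [Finset.sum_comm]
      refine Finset.sum_congr rfl fun j _ => ?_
      conv_rhs => enter [1]; unfold ev
      rw [Finset.sum_mul]
      refine Finset.sum_congr rfl fun k _ => ?_
      ring
    rw [this, h4, sub_self]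

/-- Linear independence of the weights. -/
theorem wt_indep (hQ : Acyclic t h) (hs : ∀ i, 0 < X.dimVec i) (hX : Ext0 X X)
    (hst : ∀ j, StabE X (E j)) (hall : ∀ Z, StabE X Z → ∃ j, RepIso K Z (E j))
    (hnon : ∀ j k, j ≠ k → ¬ RepIso K (E j) (E k)) (m : Fin l → ℤ)
    (hm : ∀ i, ∑ j, m j * wtR t h (E j).dimVec i = 0) : m = 0 := by
  have hσ : Good (0 : V → ℤ) X := ⟨by simp [ev], fun U => by simp [ev]⟩
  obtain ⟨P, h1, -, -⟩ := exists_dual hQ hs hX hst hall hnon hσ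
  funext k
  have h2 : ∑ j, m j * eu (P k) (E j) = 0 := by
    simp only [← ev_wtR]
    unfold ev
    simp only [Finset.mul_sum]
    rw [Finset.sum_comm]
    refine Finset.sum_eq_zero fun i _ => ?_
    simp only [← mul_assoc]
    rw [← Finset.sum_mul, hm, zero_mul]
  simpa [h1] using h2

end Main

end QuivRep
end PathTheory

section InvTheory

namespace QuivRep

variable {K : Type} [Field K] {V A : Type} [Fintype V] [DecidableEq V] [Fintype A] {t h : A → V}

lemma rigid_ext0 {X : QuivRep K V A t h} (H : X.IsRigid) : Ext0 X X := by
  have h1 : Module.finrank K ((∀ a : A, X.sp (t a) →ₗ[K] X.sp (h a)) ⧸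
    LinearMap.range (dmap X X)) = 0 := H
  have h2 := Module.finrank_zero_iff.1 h1
  exact LinearMap.range_eq_top.1 (Submodule.Quotient.subsingleton_iff.1 h2)

lemma RepIso.ext0 {X Y : QuivRep K V A t h} (H : RepIso K X Y) (hX : Ext0 X X) : Ext0 Y Y := by
  obtain ⟨e, he⟩ := H
  have h1 : Ext0 X Y := ext0_of_surj (fun i => (e i).toLinearMap) he (fun i => (e i).surjective) hX
  refine ext0_of_inj (fun i => (e i).symm.toLinearMap) ?_ (fun i => (e i).symm.injective) h1
  intro a x
  change (e (h a)).symm (Y.map a x) = X.map a ((e (t a)).symm x)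
  rw [LinearEquiv.symm_apply_eq, he, LinearEquiv.apply_symm_apply]

lemma exists_point {α : V → ℕ} (X : QuivRep K V A t h) (hX : X.dimVec = α) :
    ∃ W : RepSpace K t h α, RepIso K X (toRep K t h W) := by
  subst hX
  let b : ∀ i, Module.Basis (Fin (X.dimVec i)) K (X.sp i) := fun i => Module.finBasis K (X.sp i)
  refine ⟨fun a => LinearMap.toMatrix (b (t a)) (b (h a)) (X.map a), fun i => (b i).equivFun, ?_⟩
  intro a x
  exact (LinearMap.toMatrix_mulVec_repr (b (t a)) (b (h a)) (X.map a) x).symm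

end QuivRep

/-! Functions in a subalgebra. -/

section Sub
variable {K : Type} [Field K] {T : Type} (S : Subalgebra K (T → K))

lemma const_mem_alg (c : K) : (fun _ : T => c) ∈ S := S.algebraMap_mem c

lemma sum_mem_alg {ι : Type} (s : Finset ι) (u : ι → T → K) (H : ∀ i ∈ s, u i ∈ S) :
    (fun x => ∑ i ∈ s, u i x) ∈ S := by
  have := S.sum_mem H
  convert this using 1
  funext x; simp

lemma prod_mem_alg {ι : Type} (s : Finset ι) (u : ι → T → K) (H : ∀ i ∈ s, u i ∈ S) :
    (fun x => ∏ i ∈ s, u i x) ∈ S := by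
  have := S.prod_mem H
  convert this using 1
  funext x; simp

lemma mul_mem_alg {u v : T → K} (hu : u ∈ S) (hv : v ∈ S) : (fun x => u x * v x) ∈ S :=
  S.mul_mem hu hv
lemma add_mem_alg {u v : T → K} (hu : u ∈ S) (hv : v ∈ S) : (fun x => u x + v x) ∈ S :=
  S.add_mem hu hv
lemma sub_mem_alg {u v : T → K} (hu : u ∈ S) (hv : v ∈ S) : (fun x => u x - v x) ∈ S :=
  S.sub_mem hu hv

lemma matmul_mem_alg {l m n : Type} [Fintype m] (M : T → Matrix l m K) (N : T → Matrix m n K)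
    (hM : ∀ i j, (fun x => M x i j) ∈ S) (hN : ∀ i j, (fun x => N x i j) ∈ S) (i : l) (j : n) :
    (fun x => (M x * N x) i j) ∈ S := by
  simp only [Matrix.mul_apply]
  exact sum_mem_alg S _ _ fun k _ => mul_mem_alg S (hM i k) (hN k j)

lemma mulVec_mem_alg {l m : Type} [Fintype m] (M : T → Matrix l m K) (v : T → m → K)
    (hM : ∀ i j, (fun x => M x i j) ∈ S) (hv : ∀ i, (fun x => v x i) ∈ S) (i : l) :
    (fun x => (M x).mulVec (v x) i) ∈ S := by
  simp only [Matrix.mulVec, dotProduct]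
  exact sum_mem_alg S _ _ fun k _ => mul_mem_alg S (hM i k) (hv k)

lemma det_mem_alg {m : Type} [Fintype m] [DecidableEq m] (M : T → Matrix m m K)
    (hM : ∀ i j, (fun x => M x i j) ∈ S) : (fun x => (M x).det) ∈ S := by
  simp only [Matrix.det_apply']
  exact sum_mem_alg S _ _ fun k _ => mul_mem_alg S (const_mem_alg S _)
    (prod_mem_alg S _ _ fun i _ => hM _ _)

lemma adjugate_mem_alg {m : Type} [Fintype m] [DecidableEq m] (M : T → Matrix m m K)
    (hM : ∀ i j, (fun x => M x i j) ∈ S) (i j : m) : (fun x => (M x).adjugate i j) ∈ S := by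
  simp only [Matrix.adjugate_apply]
  apply det_mem_alg
  intro p q
  by_cases hp : p = j
  · subst hp
    simp only [Matrix.updateRow_self]
    exact const_mem_alg S _
  · simp only [Matrix.updateRow_ne hp]
    exact hM p q

lemma mvpoly_mem_alg {ι : Type} (P : MvPolynomial ι K) (c : T → ι → K)
    (hc : ∀ i, (fun x => c x i) ∈ S) : (fun x => MvPolynomial.eval (c x) P) ∈ S := by
  induction P using MvPolynomial.induction_on with
  | C a => simpa using const_mem_alg S a
  | add p q hp hq => simpa using add_mem_alg S hp hq
  | mul_X p i hp => simpa using mul_mem_alg S hp (hc i)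

end Sub

section Line
variable (K : Type) [Field K]

/-- Polynomial functions of one variable. -/
def polyAlg : Subalgebra K (K → K) where
  carrier := {u | ∃ p : Polynomial K, ∀ x, u x = p.eval x}
  mul_mem' := by
    rintro u v ⟨p, hp⟩ ⟨q, hq⟩
    exact ⟨p * q, fun x => by simp [hp, hq]⟩
  add_mem' := by
    rintro u v ⟨p, hp⟩ ⟨q, hq⟩
    exact ⟨p + q, fun x => by simp [hp, hq]⟩
  algebraMap_mem' r := ⟨Polynomial.C r, fun x => by simp⟩

lemma polyAlg_id : (fun x : K => x) ∈ polyAlg K := ⟨Polynomial.X, by simp⟩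

lemma polyAlg_domain [Infinite K] {u v : K → K} (hu : u ∈ polyAlg K) (hv : v ∈ polyAlg K)
    (H : ∀ x, u x * v x = 0) (x0 : K) (h0 : v x0 ≠ 0) (x : K) : u x = 0 := by
  obtain ⟨p, hp⟩ := hu
  obtain ⟨q, hq⟩ := hv
  have h1 : p * q = 0 := by
    apply Polynomial.funext
    intro y
    simpa [hp, hq] using H y
  rcases mul_eq_zero.1 h1 with h2 | h2
  · simp [hp, h2]
  · exact absurd (by simp [hq, h2]) h0

end Line

section Schof
variable {K : Type} [Field K] {V A : Type} [Fintype V] [DecidableEq V] [Fintype A]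
  {t h : A → V} {α w : V → ℕ}

/-- The polynomial functions as a subalgebra. -/
def polyFunAlg (K : Type) [Field K] (t h : A → V) (α : V → ℕ) :
    Subalgebra K (RepSpace K t h α → K) where
  carrier := {f | IsPolyFun K t h f}
  mul_mem' := by
    rintro u v ⟨p, hp⟩ ⟨q, hq⟩
    exact ⟨p * q, fun x => by simp [hp, hq]⟩
  add_mem' := by
    rintro u v ⟨p, hp⟩ ⟨q, hq⟩
    exact ⟨p + q, fun x => by simp [hp, hq]⟩
  algebraMap_mem' r := ⟨MvPolynomial.C r, fun x => by simp⟩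

lemma coord_mem (a : A) (i : Fin (α (h a))) (j : Fin (α (t a))) :
    (fun W : RepSpace K t h α => W a i j) ∈ polyFunAlg K t h α :=
  ⟨MvPolynomial.X ⟨a, (i, j)⟩, fun W => by simp⟩

lemma polyFun_comp {T : Type} (S : Subalgebra K (T → K)) {f : RepSpace K t h α → K}
    (hf : IsPolyFun K t h f) (W : T → RepSpace K t h α)
    (hW : ∀ a i j, (fun x => W x a i j) ∈ S) : (fun x => f (W x)) ∈ S := by
  obtain ⟨P, hP⟩ := hf
  simp only [hP]
  exact mvpoly_mem_alg S P _ fun i => hW _ _ _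

/-- The matrix version of `d`. -/
def dm (Vm : RepSpace K t h α) (W : RepSpace K t h w) (φ : ∀ i, Matrix (Fin (w i)) (Fin (α i)) K) :
    ∀ a : A, Matrix (Fin (w (h a))) (Fin (α (t a))) K :=
  fun a => φ (h a) * Vm a - W a * φ (t a)

lemma entryN_val {m n : ℕ} (M : Matrix (Fin m) (Fin n) K) (i : Fin m) (j : Fin n) :
    entryN K M i j = M i j := by
  simp [entryN]

lemma schof_mulVec (Vm : RepSpace K t h α) (W : RepSpace K t h w)
    (φ : ∀ i, Matrix (Fin (w i)) (Fin (α i)) K) :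
    (schofieldMatrix K t h Vm W).mulVec (fun c => φ c.1 c.2.1 c.2.2) =
      fun r => dm Vm W φ r.1 r.2.1 r.2.2 := by
  funext ⟨a, p, q⟩
  simp only [Matrix.mulVec, dotProduct, schofieldMatrix, sub_mul, Finset.sum_sub_distrib, dm,
    Matrix.sub_apply, Matrix.mul_apply]
  rw [Fintype.sum_sigma, Fintype.sum_sigma]
  congr 1
  · rw [Finset.sum_eq_single (h a)]
    · rw [Fintype.sum_prod_type, Finset.sum_eq_single p]
      · refine Finset.sum_congr rfl fun c _ => ?_
        rw [if_pos ⟨rfl, rfl⟩, entryN_val, mul_comm]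
      · intro p' _ hp'
        refine Finset.sum_eq_zero fun c _ => ?_
        rw [if_neg, zero_mul]
        rintro ⟨_, h2⟩
        exact hp' (Fin.ext h2)
      · simp
    · intro i _ hi
      refine Finset.sum_eq_zero fun c _ => ?_
      rw [if_neg, zero_mul]
      rintro ⟨h2, _⟩
      exact hi h2
    · simp
  · rw [Finset.sum_eq_single (t a)]
    · rw [Fintype.sum_prod_type]
      refine Finset.sum_congr rfl fun c _ => ?_
      rw [Finset.sum_eq_single q]
      · rw [if_pos ⟨rfl, rfl⟩, entryN_val]
      · intro p' _ hp'
        rw [if_neg, zero_mul]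
        rintro ⟨_, h2⟩
        exact hp' (Fin.ext h2)
      · simp
    · intro i _ hi
      refine Finset.sum_eq_zero fun c _ => ?_
      rw [if_neg, zero_mul]
      rintro ⟨h2, _⟩
      exact hi h2
    · simp

lemma entryN_mem {T : Type} (S : Subalgebra K (T → K)) {m n : ℕ} (M : T → Matrix (Fin m) (Fin n) K)
    (hM : ∀ i j, (fun x => M x i j) ∈ S) (i j : ℕ) : (fun x => entryN K (M x) i j) ∈ S := by
  unfold entryN
  by_cases hi : i < m
  · by_cases hj : j < n
    · simpa [hi, hj] using hM ⟨i, hi⟩ ⟨j, hj⟩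
    · simpa [hi, hj] using const_mem_alg S 0
  · simpa [hi] using const_mem_alg S 0

lemma schof_mem {T : Type} (S : Subalgebra K (T → K)) (Vm : T → RepSpace K t h α)
    (W : T → RepSpace K t h w) (hV : ∀ a i j, (fun x => Vm x a i j) ∈ S)
    (hW : ∀ a i j, (fun x => W x a i j) ∈ S) (r c) :
    (fun x => schofieldMatrix K t h (Vm x) (W x) r c) ∈ S := by
  unfold schofieldMatrix
  apply sub_mem_alg
  · split_ifs
    · exact entryN_mem S _ (hV _) _ _
    · exact const_mem_alg S 0
  · split_ifs
    · exact entryN_mem S _ (hW _) _ _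
    · exact const_mem_alg S 0

lemma schofieldSI_poly (W : RepSpace K t h w) : 
    schofieldSI K t h W ∈ polyFunAlg K t h α := by
  have : (schofieldSI K t h W : RepSpace K t h α → K) = fun Vm => schofieldSI K t h W Vm := rfl
  rw [this]
  unfold schofieldSI
  split_ifs with hc
  · apply det_mem_alg
    intro i j
    exact schof_mem (polyFunAlg K t h α) (fun Vm => Vm) (fun _ => W)
      (fun a i j => coord_mem (K := K) (t := t) (h := h) (α := α) a i j)
      (fun a i j => const_mem_alg _ _) _ _
  · exact const_mem_alg _ 0

lemma card_eq_of_euler (he : eulerForm t h (natZ α) (natZ w) = 0) :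
    Fintype.card ((i : V) × (Fin (w i) × Fin (α i))) =
      Fintype.card ((a : A) × (Fin (w (h a)) × Fin (α (t a)))) := by
  simp only [Fintype.card_sigma, Fintype.card_prod, Fintype.card_fin]
  unfold eulerForm natZ at he
  have : ((∑ i, w i * α i : ℕ) : ℤ) = ((∑ a, w (h a) * α (t a) : ℕ) : ℤ) := by
    push_cast
    rw [sub_eq_zero] at he
    rw [Finset.sum_congr rfl fun i _ => mul_comm (w i : ℤ) (α i : ℤ), he]
    exact Finset.sum_congr rfl fun i _ => mul_comm _ _
  exact_mod_cast this

/-- A matrix family as a family of linear maps. -/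
lemma hom_of_dm (Vm : RepSpace K t h α) (W : RepSpace K t h w)
    (φ : ∀ i, Matrix (Fin (w i)) (Fin (α i)) K) (H : dm Vm W φ = 0) :
    QuivRep.IsHom (X := toRep K t h Vm) (Y := toRep K t h W) (fun i => Matrix.mulVecLin (φ i)) := by
  intro a x
  have key : ∀ x : Fin (α (t a)) → K,
      (φ (h a)).mulVec ((Vm a).mulVec x) = (W a).mulVec ((φ (t a)).mulVec x) := by
    intro x
    rw [Matrix.mulVec_mulVec, Matrix.mulVec_mulVec]
    have := congrFun H a
    rw [sub_eq_zero.1 this]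
  exact key x

lemma schofieldSI_ne_zero (Vm : RepSpace K t h α) (W : RepSpace K t h w)
    (he : eulerForm t h (natZ α) (natZ w) = 0)
    (H : QuivRep.Hom0 (toRep K t h Vm) (toRep K t h W)) : schofieldSI K t h W Vm ≠ 0 := by
  classical
  have hc := card_eq_of_euler he
  unfold schofieldSI
  rw [dif_pos hc]
  intro hd
  obtain ⟨v, hv, hv0⟩ := Matrix.exists_mulVec_eq_zero_iff.2 hd
  apply hv
  let φ : ∀ i, Matrix (Fin (w i)) (Fin (α i)) K := fun i p q => v ⟨i, (p, q)⟩
  have h1 := schof_mulVec Vm W φ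
  have h2 : dm Vm W φ = 0 := by
    funext a
    ext p q
    have h3 := congrFun h1 ⟨a, (p, q)⟩
    rw [← h3]
    have h4 := congrFun hv0 ((Fintype.equivOfCardEq hc).symm ⟨a, (p, q)⟩)
    simp only [Matrix.mulVec, dotProduct, Matrix.submatrix_apply, Equiv.apply_symm_apply, id] at h4
    exact h4
  have h3 := H _ (hom_of_dm Vm W φ h2)
  funext ⟨i, p, q⟩
  have h4 : Matrix.mulVecLin (φ i) = 0 := congrFun h3 i
  have h5 : φ i = 0 := by
    ext p q
    have := congrFun (LinearMap.congr_fun h4 (Pi.single q 1)) p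
    simpa using this
  exact congrFun (congrFun h5 p) q

end Schof

end InvTheory

section Density

variable {K : Type} [Field K] {V A : Type} [Fintype V] [DecidableEq V] [Fintype A]
  {t h : A → V} {α w : V → ℕ}

lemma schof_surj (X0 : RepSpace K t h α)
    (hX : QuivRep.Ext0 (toRep K t h X0) (toRep K t h X0)) :
    Function.Surjective (schofieldMatrix K t h X0 X0).mulVec := by
  intro r
  let ψ : ∀ a : A, (Fin (α (t a)) → K) →ₗ[K] (Fin (α (h a)) → K) := fun a =>
    Matrix.mulVecLin (Matrix.of fun p q => r ⟨a, (p, q)⟩)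
  obtain ⟨φ, hφ⟩ := hX ψ
  have key : ∀ (φ : ∀ i, (Fin (α i) → K) →ₗ[K] (Fin (α i) → K)),
      (∀ a, (φ (h a)).comp (Matrix.mulVecLin (X0 a)) - (Matrix.mulVecLin (X0 a)).comp (φ (t a)) = ψ a) →
      ∃ v, (schofieldMatrix K t h X0 X0).mulVec v = r := by
    intro φ hφ
    refine ⟨_, (schof_mulVec X0 X0 (fun i => LinearMap.toMatrix' (φ i))).trans ?_⟩
    funext ⟨a, p, q⟩
    have h1 := congrArg LinearMap.toMatrix' (hφ a)
    rw [map_sub, LinearMap.toMatrix'_comp, LinearMap.toMatrix'_comp] at h1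
    simp only [← Matrix.toLin'_apply', LinearMap.toMatrix'_toLin', ψ] at h1
    exact congrFun (congrFun h1 p) q
  exact key φ (fun a => congrFun hφ a)

lemma density [Infinite K] (X0 : RepSpace K t h α)
    (hX : QuivRep.Ext0 (toRep K t h X0) (toRep K t h X0)) (f : RepSpace K t h α → K)
    (hf : IsPolyFun K t h f) (H : ∀ g, f (glAct K t h g X0) = 0) (W : RepSpace K t h α) :
    f W = 0 := by
  classical
  obtain ⟨s, hs⟩ := Matrix.mulVec_surjective_iff_exists_right_inverse.1 (schof_surj X0 hX)
  let We : K → RepSpace K t h α := fun e a => X0 a + e • (W a - X0 a)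
  have hWe : ∀ a i j, (fun e => We e a i j) ∈ polyAlg K := fun a i j =>
    add_mem_alg _ (const_mem_alg _ _) (mul_mem_alg _ (polyAlg_id K) (const_mem_alg _ _))
  let vid : ((i : V) × (Fin (α i) × Fin (α i))) → K := fun c =>
    (1 : Matrix (Fin (α c.1)) (Fin (α c.1)) K) c.2.1 c.2.2
  let M := fun e => schofieldMatrix K t h X0 (We e)
  have hM : ∀ i j, (fun e => M e i j) ∈ polyAlg K := fun i j =>
    schof_mem _ (fun _ => X0) We (fun a i j => const_mem_alg _ _) hWe _ _
  let B := fun e => M e * s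
  have hB : ∀ i j, (fun e => B e i j) ∈ polyAlg K :=
    matmul_mem_alg _ M (fun _ => s) hM (fun i j => const_mem_alg _ _)
  let v := fun e => (M e).mulVec vid
  have hv : ∀ i, (fun e => v e i) ∈ polyAlg K :=
    mulVec_mem_alg _ M (fun _ => vid) hM (fun i => const_mem_alg _ _)
  let u := fun e => s.mulVec ((B e).adjugate.mulVec (v e))
  have hu : ∀ i, (fun e => u e i) ∈ polyAlg K :=
    mulVec_mem_alg _ (fun _ => s) _ (fun i j => const_mem_alg _ _)
      (mulVec_mem_alg _ _ v (adjugate_mem_alg _ B hB) hv)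
  let φ : K → ∀ i, Matrix (Fin (α i)) (Fin (α i)) K := fun e i p q =>
    (B e).det * vid ⟨i, (p, q)⟩ - u e ⟨i, (p, q)⟩
  have hφ : ∀ i p q, (fun e => φ e i p q) ∈ polyAlg K := fun i p q =>
    sub_mem_alg _ (mul_mem_alg _ (det_mem_alg _ B hB) (const_mem_alg _ _)) (hu _)
  have hker : ∀ e, dm X0 (We e) (φ e) = 0 := by
    intro e
    have h1 := schof_mulVec X0 (We e) (φ e)
    have h2 : (fun c : ((i : V) × (Fin (α i) × Fin (α i))) => φ e c.1 c.2.1 c.2.2) =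
        (B e).det • vid - u e := by
      funext c; rfl
    rw [h2, Matrix.mulVec_sub, Matrix.mulVec_smul] at h1
    have h3 : (M e).mulVec (u e) = (B e).det • v e := by
      simp only [u]
      rw [Matrix.mulVec_mulVec]
      change (B e).mulVec _ = _
      rw [Matrix.mulVec_mulVec, Matrix.mul_adjugate, Matrix.smul_mulVec, Matrix.one_mulVec]
    have h4 : (M e).mulVec (u e) = (schofieldMatrix K t h X0 (We e)).mulVec (u e) := rfl
    rw [← h4, h3] at h1
    have h5 : (B e).det • (schofieldMatrix K t h X0 (We e)).mulVec vid - (B e).det • v e = 0 :=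
      sub_self _
    rw [h5] at h1
    funext a
    ext p q
    exact (congrFun h1 ⟨a, (p, q)⟩).symm
  let D : K → K := fun e => ∏ i, (φ e i).det
  have hD : D ∈ polyAlg K := prod_mem_alg _ _ _ fun i _ => det_mem_alg _ _ (hφ i)
  have hW0 : We 0 = X0 := by funext a; simp [We]
  have hD0 : D 0 ≠ 0 := by
    have hv0 : v 0 = 0 := by
      simp only [v, M, hW0]
      refine (schof_mulVec X0 X0 (fun i => 1)).trans ?_
      funext ⟨a, p, q⟩
      simp [dm]
    have hB0 : B 0 = 1 := by
      simp only [B, M, hW0]; exact hs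
    have : ∀ i, φ 0 i = 1 := by
      intro i
      ext p q
      simp [φ, u, hv0, hB0, vid]
    simp [D, this]
  have hfW : (fun e => f (We e)) ∈ polyAlg K := polyFun_comp _ hf We hWe
  have hall : ∀ e, f (We e) * D e = 0 := by
    intro e
    by_cases hd : D e = 0
    · rw [hd, mul_zero]
    have hdi : ∀ i, (φ e i).det ≠ 0 := fun i hi =>
      hd (Finset.prod_eq_zero (Finset.mem_univ i) hi)
    let g : ∀ i, Matrix.GeneralLinearGroup (Fin (α i)) K := fun i =>
      Matrix.GeneralLinearGroup.mkOfDetNeZero (φ e i) (hdi i)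
    have hg : glAct K t h g X0 = We e := by
      funext a
      have h1 : φ e (h a) * X0 a = We e a * φ e (t a) := sub_eq_zero.1 (congrFun (hker e) a)
      have h2 : φ e (t a) * ((g (t a))⁻¹ : Matrix.GeneralLinearGroup (Fin (α (t a))) K).1 = 1 :=
        (g (t a)).mul_inv
      change φ e (h a) * X0 a * ((g (t a))⁻¹ : Matrix.GeneralLinearGroup (Fin (α (t a))) K).1 = _
      rw [h1, Matrix.mul_assoc, h2, Matrix.mul_one]
    rw [← hg, H, zero_mul]
  have := polyAlg_domain K hfW hD hall 0 hD0 1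
  have hW1 : We 1 = W := by funext a; simp [We]
  rwa [hW1] at this

end Density

section Equivariance

variable {K : Type} [Field K] {V A : Type} [Fintype V] [DecidableEq V] [Fintype A]
  {t h : A → V} {α w : V → ℕ}

/-- The character of the torus with weight `σ`. -/
def chiU {ι : Type} [Fintype ι] (K : Type) [Field K] (σ : ι → ℤ) : (ι → Kˣ) →* Kˣ where
  toFun μ := ∏ i, μ i ^ σ i
  map_one' := by simp
  map_mul' μ ν := by simp [mul_zpow, Finset.prod_mul_distrib]

lemma zpow_sum_aux {G ι : Type} [CommGroup G] [Fintype ι] (x : G) (s : ι → ℤ) :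
    x ^ (∑ a, s a) = ∏ a, x ^ s a := by
  classical
  have : ∀ T : Finset ι, x ^ (∑ a ∈ T, s a) = ∏ a ∈ T, x ^ s a := by
    intro T
    induction T using Finset.induction_on with
    | empty => simp
    | insert a T ha ih => rw [Finset.sum_insert ha, Finset.prod_insert ha, zpow_add, ih]
  exact this _

lemma det_blockDiag_aux {I : Type} [Fintype I] [DecidableEq I] {m : I → Type}
    [∀ i, Fintype (m i)] [∀ i, DecidableEq (m i)] (M : ∀ i, Matrix (m i) (m i) K) :
    (Matrix.blockDiagonal' M).det = ∏ i, (M i).det := by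
  let e := Fintype.equivFin I
  have hb : (Matrix.blockDiagonal' M).BlockTriangular (fun c => e c.1) := by
    intro c d hcd
    rw [Matrix.blockDiagonal'_apply, dif_neg]
    intro hh
    exact absurd (congrArg e hh) (ne_of_gt hcd)
  rw [hb.det_fintype, ← e.prod_comp]
  refine Finset.prod_congr rfl fun i _ => ?_
  let q : m i ≃ {c : (i : I) × m i // e c.1 = e i} :=
    { toFun := fun x => ⟨⟨i, x⟩, rfl⟩
      invFun := fun c => cast (congrArg m (e.injective c.2)) c.1.2
      left_inv := fun x => rfl
      right_inv := by
        rintro ⟨⟨j, x⟩, hj⟩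
        have := e.injective hj
        subst this
        rfl }
  rw [← Matrix.det_submatrix_equiv_self q]
  congr 1
  ext x y
  simp [q, Matrix.toSquareBlock_def]

lemma chiU_wtR (d : V → ℕ) (μ : V → Kˣ) :
    chiU K (QuivRep.wtR t h d) μ = (∏ a, (μ (t a))⁻¹ ^ d (h a)) * ∏ i, μ i ^ d i := by
  have h1 : ∀ i, QuivRep.wtR t h d i = (d i : ℤ) - ∑ a, if t a = i then (d (h a) : ℤ) else 0 := by
    intro i
    simp [QuivRep.wtR, eulerForm, natZ]
  change ∏ i, μ i ^ _ = _
  simp only [h1, zpow_sub, Finset.prod_mul_distrib, zpow_natCast]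
  rw [mul_comm]
  congr 1
  rw [Finset.prod_inv_distrib]
  simp only [inv_pow]
  rw [Finset.prod_inv_distrib]
  congr 1
  have h2 : ∀ i, μ i ^ (∑ a, if t a = i then (d (h a) : ℤ) else 0) =
      ∏ a, if t a = i then μ i ^ (d (h a)) else 1 := by
    intro i
    rw [show ∀ s : A → ℤ, μ i ^ (∑ a, s a) = ∏ a, μ i ^ s a from fun s =>
      zpow_sum_aux (μ i) s]
    refine Finset.prod_congr rfl fun a _ => ?_
    split_ifs <;> simp
  simp only [h2]
  rw [Finset.prod_comm]
  simp

open Kronecker in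
/-- Right multiplication as a matrix on vectorised families. -/
def rmulM {I : Type} [DecidableEq I] (m n : I → ℕ) (g : ∀ i, Matrix (Fin (n i)) (Fin (n i)) K) :
    Matrix ((i : I) × (Fin (m i) × Fin (n i))) ((i : I) × (Fin (m i) × Fin (n i))) K :=
  Matrix.blockDiagonal' fun i => (1 : Matrix (Fin (m i)) (Fin (m i)) K) ⊗ₖ (g i).transpose

lemma rmulM_det {I : Type} [Fintype I] [DecidableEq I] (m n : I → ℕ)
    (g : ∀ i, Matrix (Fin (n i)) (Fin (n i)) K) : (rmulM m n g).det = ∏ i, (g i).det ^ m i := by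
  unfold rmulM
  rw [det_blockDiag_aux]
  refine Finset.prod_congr rfl fun i _ => ?_
  rw [Matrix.det_kronecker]
  simp

lemma rmulM_mulVec {I : Type} [Fintype I] [DecidableEq I] (m n : I → ℕ)
    (g : ∀ i, Matrix (Fin (n i)) (Fin (n i)) K) (φ : ∀ i, Matrix (Fin (m i)) (Fin (n i)) K) :
    (rmulM m n g).mulVec (fun c => φ c.1 c.2.1 c.2.2) = fun c => (φ c.1 * g c.1) c.2.1 c.2.2 := by
  funext ⟨i, p, q⟩
  simp only [Matrix.mulVec, dotProduct, rmulM, Matrix.mul_apply]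
  rw [Fintype.sum_sigma, Finset.sum_eq_single i]
  · rw [Fintype.sum_prod_type, Finset.sum_eq_single p]
    · refine Finset.sum_congr rfl fun c _ => ?_
      simp [Matrix.blockDiagonal'_apply, mul_comm]
    · intro b _ hb
      refine Finset.sum_eq_zero fun c _ => ?_
      simp [Matrix.blockDiagonal'_apply, hb.symm]
    · simp
  · intro j _ hj
    refine Finset.sum_eq_zero fun c _ => ?_
    simp [Matrix.blockDiagonal'_apply, hj.symm]
  · simp

lemma schof_glAct [DecidableEq A] (g : ∀ i, Matrix.GeneralLinearGroup (Fin (α i)) K)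
    (Vm : RepSpace K t h α) (W : RepSpace K t h w) :
    schofieldMatrix K t h (glAct K t h g Vm) W =
      rmulM (fun a => w (h a)) (fun a => α (t a)) (fun a => ((g (t a))⁻¹).1) *
        schofieldMatrix K t h Vm W * rmulM w α (fun i => (g i).1) := by
  apply Matrix.mulVec_injective
  funext v
  let φ : ∀ i, Matrix (Fin (w i)) (Fin (α i)) K := fun i p q => v ⟨i, (p, q)⟩
  have hv : v = fun c => φ c.1 c.2.1 c.2.2 := rfl
  rw [← Matrix.mulVec_mulVec, ← Matrix.mulVec_mulVec, hv, schof_mulVec, rmulM_mulVec,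
    schof_mulVec Vm W (fun i => φ i * (g i).1),
    rmulM_mulVec (fun a => w (h a)) (fun a => α (t a)) _ (dm Vm W (fun i => φ i * (g i).1))]
  funext ⟨a, p, q⟩
  have : dm (glAct K t h g Vm) W φ a = dm Vm W (fun i => φ i * (g i).1) a * ((g (t a))⁻¹).1 := by
    have h2 : (g (t a)).1 * ((g (t a))⁻¹ : Matrix.GeneralLinearGroup (Fin (α (t a))) K).1 = 1 :=
        (g (t a)).mul_inv
    simp only [dm, glAct, Matrix.sub_mul]
    congr 1
    · simp only [Matrix.mul_assoc]
    · rw [Matrix.mul_assoc, Matrix.mul_assoc, h2, Matrix.mul_one]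
  exact congrFun (congrFun this p) q

lemma schofieldSI_glAct (g : ∀ i, Matrix.GeneralLinearGroup (Fin (α i)) K)
    (Vm : RepSpace K t h α) (W : RepSpace K t h w) :
    schofieldSI K t h W (glAct K t h g Vm) =
      (chiU K (QuivRep.wtR t h w) (fun i => Matrix.GeneralLinearGroup.det (g i)) : K) *
        schofieldSI K t h W Vm := by
  classical
  unfold schofieldSI
  split_ifs with hc
  · rw [schof_glAct]
    set e := Fintype.equivOfCardEq hc
    set R := rmulM (fun a => w (h a)) (fun a => α (t a)) (fun a => ((g (t a))⁻¹).1)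
    set L := rmulM w α (fun i => (g i).1)
    have h1 : (R * schofieldMatrix K t h Vm W * L).submatrix e id =
        R.submatrix e e * (schofieldMatrix K t h Vm W).submatrix e id * L := by
      rw [Matrix.submatrix_mul_equiv]
      rfl
    rw [h1, Matrix.det_mul, Matrix.det_mul, Matrix.det_submatrix_equiv_self, rmulM_det, rmulM_det,
      chiU_wtR]
    rw [mul_right_comm]
    simp only [Units.val_mul, Units.coe_prod, Units.val_pow_eq_pow_val]
    congr 2
  · rw [mul_zero]

end Equivariance

section Characters

variable {K : Type} [Field K] {ι : Type} [Fintype ι]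

/-- The torus characters with values in `K`. -/
def chiK (K : Type) [Field K] (σ : ι → ℤ) : (ι → Kˣ) →* K := (Units.coeHom K).comp (chiU K σ)

lemma chiK_apply (σ : ι → ℤ) (μ : ι → Kˣ) : chiK K σ μ = ((∏ i, μ i ^ σ i : Kˣ) : K) := rfl

/-- The unit two. -/
def twoU (K : Type) [Field K] [CharZero K] : Kˣ := Units.mk0 2 two_ne_zero

lemma twoU_inj [CharZero K] {m n : ℤ} (H : twoU K ^ m = twoU K ^ n) : m = n := by
  have h1 : (2 : K) ^ m = (2 : K) ^ n := by
    have := congrArg Units.val H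
    simpa [twoU] using this
  have h2 : (2 : ℚ) ^ m = (2 : ℚ) ^ n := by
    have h3 : (((2 : ℚ) ^ m : ℚ) : K) = (((2 : ℚ) ^ n : ℚ) : K) := by
      push_cast; exact h1
    exact_mod_cast h3
  exact zpow_right_injective₀ (by norm_num) (by norm_num) h2

lemma chiK_injective [CharZero K] : Function.Injective (chiK K : (ι → ℤ) → ((ι → Kˣ) →* K)) := by
  classical
  intro σ τ H
  funext i
  have h1 := DFunLike.congr_fun H (Pi.mulSingle i (twoU K))
  rw [chiK_apply, chiK_apply, Units.val_inj] at h1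
  rw [Finset.prod_eq_single i, Finset.prod_eq_single i] at h1
  · simp only [Pi.mulSingle_eq_same] at h1
    exact twoU_inj h1
  · intro b _ hb; simp [Pi.mulSingle_eq_of_ne hb]
  · simp
  · intro b _ hb; simp [Pi.mulSingle_eq_of_ne hb]
  · simp

lemma chiK_indep [CharZero K] :
    LinearIndependent K (fun σ : ι → ℤ => (chiK K σ : (ι → Kˣ) → K)) :=
  (linearIndependent_monoidHom (ι → Kˣ) K).comp _ chiK_injective

lemma chiK_zero : (chiK K (0 : ι → ℤ) : (ι → Kˣ) → K) = 1 := by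
  funext μ; simp [chiK_apply]

lemma chiK_add (σ τ : ι → ℤ) : (chiK K (σ + τ) : (ι → Kˣ) → K) = chiK K σ * chiK K τ := by
  funext μ; simp [chiK_apply, zpow_add, Finset.prod_mul_distrib]

/-- The algebra of functions spanned by characters with weights in `M`. -/
def chiAlg (K : Type) [Field K] (M : AddSubmonoid (ι → ℤ)) : Subalgebra K ((ι → Kˣ) → K) :=
  Algebra.adjoin K ((fun σ : ι → ℤ => (chiK K σ : (ι → Kˣ) → K)) '' M)

lemma chiAlg_of {M : AddSubmonoid (ι → ℤ)} {σ : ι → ℤ} (hσ : σ ∈ M) :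
    (fun μ => chiK K σ μ) ∈ chiAlg K M :=
  Algebra.subset_adjoin ⟨σ, hσ, rfl⟩

lemma chiAlg_exists {M : AddSubmonoid (ι → ℤ)} {u : (ι → Kˣ) → K} (hu : u ∈ chiAlg K M) :
    ∃ a : (ι → ℤ) →₀ K, (∀ σ ∈ a.support, σ ∈ M) ∧
      ∀ μ, u μ = ∑ σ ∈ a.support, a σ * chiK K σ μ := by
  let N : Submonoid ((ι → Kˣ) → K) :=
    { carrier := (fun σ : ι → ℤ => (chiK K σ : (ι → Kˣ) → K)) '' M
      one_mem' := ⟨0, M.zero_mem, chiK_zero⟩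
      mul_mem' := by
        rintro _ _ ⟨σ, hσ, rfl⟩ ⟨τ, hτ, rfl⟩
        exact ⟨σ + τ, M.add_mem hσ hτ, chiK_add σ τ⟩ }
  have h1 : u ∈ Subalgebra.toSubmodule (chiAlg K M) := hu
  unfold chiAlg at h1
  rw [Algebra.adjoin_eq_span] at h1
  have h2 : Submonoid.closure ((fun σ : ι → ℤ => (chiK K σ : (ι → Kˣ) → K)) '' M) = N :=
    Submonoid.closure_eq N
  rw [h2] at h1
  obtain ⟨a, ha, hu⟩ := (Finsupp.mem_span_image_iff_linearCombination K).1 h1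
  refine ⟨a, fun σ hσ => ha hσ, fun μ => ?_⟩
  rw [← hu, Finsupp.linearCombination_apply, Finsupp.sum, Finset.sum_apply]
  rfl

lemma coord_chi [DecidableEq ι] (i : ι) (n : ℤ) (μ : ι → Kˣ) :
    chiK K (Pi.single i n) μ = ((μ i ^ n : Kˣ) : K) := by
  rw [chiK_apply, Finset.prod_eq_single i]
  · simp
  · intro b _ hb; simp [hb]
  · simp

end Characters

section Torus

variable {K : Type} [Field K] {V A : Type} [Fintype V] [DecidableEq V] [Fintype A]
  {t h : A → V} {α w : V → ℕ}

/-- A diagonal matrix with determinant `c`. -/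
def dOne {n : ℕ} (hn : 0 < n) (c : Kˣ) : Matrix.GeneralLinearGroup (Fin n) K where
  val := Matrix.diagonal fun p => if p = ⟨0, hn⟩ then (c : K) else 1
  inv := Matrix.diagonal fun p => if p = ⟨0, hn⟩ then ((c⁻¹ : Kˣ) : K) else 1
  val_inv := by
    rw [Matrix.diagonal_mul_diagonal, ← Matrix.diagonal_one]
    congr 1; funext p; split_ifs <;> simp
  inv_val := by
    rw [Matrix.diagonal_mul_diagonal, ← Matrix.diagonal_one]
    congr 1; funext p; split_ifs <;> simp

lemma dOne_det {n : ℕ} (hn : 0 < n) (c : Kˣ) :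
    Matrix.GeneralLinearGroup.det (dOne hn c) = c := by
  ext
  change (Matrix.diagonal fun p : Fin n => if p = ⟨0, hn⟩ then (c : K) else 1).det = c
  rw [Matrix.det_diagonal]
  simp

/-- The torus element. -/
def dT (hs : ∀ i, 0 < α i) (μ : V → Kˣ) : ∀ i, Matrix.GeneralLinearGroup (Fin (α i)) K :=
  fun i => dOne (hs i) (μ i)

lemma glAct_mul (g g' : ∀ i, Matrix.GeneralLinearGroup (Fin (α i)) K) (W : RepSpace K t h α) :
    glAct K t h (fun i => g i * g' i) W = glAct K t h g (glAct K t h g' W) := by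
  funext a
  simp only [glAct, mul_inv_rev, Units.val_mul, Matrix.mul_assoc]

lemma dT_mem {T : Type} (S : Subalgebra K (T → K)) (hs : ∀ i, 0 < α i) (μ : T → V → Kˣ)
    (h1 : ∀ i, (fun x => ((μ x i : Kˣ) : K)) ∈ S) (h2 : ∀ i, (fun x => (((μ x i)⁻¹ : Kˣ) : K)) ∈ S)
    (W : T → RepSpace K t h α) (hW : ∀ a i j, (fun x => W x a i j) ∈ S) (a : A) (i j) :
    (fun x => glAct K t h (dT hs (μ x)) (W x) a i j) ∈ S := by
  unfold glAct
  apply matmul_mem_alg S (fun x => _) (fun x => _)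
  · apply matmul_mem_alg S (fun x => _) (fun x => _) ?_ (hW a)
    intro p q
    change (fun x => Matrix.diagonal _ p q) ∈ S
    simp only [Matrix.diagonal_apply]
    by_cases hp : p = q
    · subst hp
      by_cases hq : p = ⟨0, hs _⟩
      · simpa [hq] using h1 _
      · simpa [hq] using const_mem_alg S 1
    · simpa [hp] using const_mem_alg S 0
  · intro p q
    change (fun x => Matrix.diagonal _ p q) ∈ S
    simp only [Matrix.diagonal_apply]
    by_cases hp : p = q
    · subst hp
      by_cases hq : p = ⟨0, hs _⟩
      · simpa [hq] using h2 _
      · simpa [hq] using const_mem_alg S 1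
    · simpa [hp] using const_mem_alg S 0

lemma inv_expand (hs : ∀ i, 0 < α i) (X0 : RepSpace K t h α) (f : RepSpace K t h α → K)
    (hf : IsPolyFun K t h f)
    (hinv : ∀ g : ∀ i, Matrix.GeneralLinearGroup (Fin (α i)) K,
      (∀ i, Matrix.GeneralLinearGroup.det (g i) = 1) → ∀ W, f (glAct K t h g W) = f W) :
    ∃ a : (V → ℤ) →₀ K, ∀ g : ∀ i, Matrix.GeneralLinearGroup (Fin (α i)) K,
      f (glAct K t h g X0) =
        ∑ σ ∈ a.support, a σ * chiK K σ (fun i => Matrix.GeneralLinearGroup.det (g i)) := by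
  have h0 : (fun μ : V → Kˣ => f (glAct K t h (dT hs μ) X0)) ∈ chiAlg K (⊤ : AddSubmonoid (V → ℤ)) := by
    apply polyFun_comp _ hf
    apply dT_mem _ hs (fun μ => μ) _ _ (fun _ => X0) (fun a i j => const_mem_alg _ _)
    · intro i
      have := chiAlg_of (K := K) (M := (⊤ : AddSubmonoid (V → ℤ))) (σ := Pi.single i 1) trivial
      simpa only [coord_chi, zpow_one] using this
    · intro i
      have := chiAlg_of (K := K) (M := (⊤ : AddSubmonoid (V → ℤ))) (σ := Pi.single i (-1)) trivial
      simpa only [coord_chi, zpow_neg, zpow_one] using this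
  obtain ⟨a, -, ha⟩ := chiAlg_exists h0
  refine ⟨a, fun g => ?_⟩
  rw [← ha]
  set μ : V → Kˣ := fun i => Matrix.GeneralLinearGroup.det (g i)
  have h1 : g = fun i => (g i * (dT hs μ i)⁻¹) * dT hs μ i := by
    funext i; simp
  conv_lhs => rw [h1]
  rw [glAct_mul]
  apply hinv
  intro i
  rw [map_mul, map_inv]
  simp [dT, dOne_det, μ]

/-- Extension of a weight by one more entry. -/
def extW (n : V → ℤ) (σ : V → ℤ) : Option V → ℤ := fun o => o.elim (∑ i, σ i * n i) σ

lemma extW_inj (n : V → ℤ) : Function.Injective (extW n) := by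
  intro σ τ H
  funext i
  exact congrFun H (some i)

lemma chiK_extW (n : V → ℤ) (σ : V → ℤ) (μ : Option V → Kˣ) :
    chiK K (extW n σ) μ = chiK K σ (fun i => μ (some i) * μ none ^ n i) := by
  rw [chiK_apply, chiK_apply, Fintype.prod_option]
  simp only [extW, Option.elim, mul_zpow, Finset.prod_mul_distrib]
  rw [mul_comm, zpow_sum_aux]
  congr 3
  funext i
  rw [← zpow_mul, mul_comm]

lemma weight_mem [CharZero K] (hs : ∀ i, 0 < α i) (X0 : RepSpace K t h α) (f : RepSpace K t h α → K)
    (hf : IsPolyFun K t h f) (a : (V → ℤ) →₀ K)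
    (ha : ∀ g : ∀ i, Matrix.GeneralLinearGroup (Fin (α i)) K, f (glAct K t h g X0) =
      ∑ σ ∈ a.support, a σ * chiK K σ (fun i => Matrix.GeneralLinearGroup.det (g i)))
    (M : AddSubmonoid (Option V → ℤ)) (hM : ∀ σ, σ none = 0 → σ ∈ M) (n : V → ℤ)
    (G : Kˣ → ∀ i, Matrix.GeneralLinearGroup (Fin (α i)) K)
    (hdet : ∀ s i, Matrix.GeneralLinearGroup.det (G s i) = s ^ n i)
    (hG : ∀ b i j, (fun μ : Option V → Kˣ => glAct K t h (G (μ none)) X0 b i j) ∈ chiAlg K M)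
    (σ : V → ℤ) (hσ : a σ ≠ 0) : extW n σ ∈ M := by
  classical
  have h0 : (fun μ : Option V → Kˣ =>
      f (glAct K t h (dT hs (fun i => μ (some i))) (glAct K t h (G (μ none)) X0))) ∈ chiAlg K M := by
    apply polyFun_comp _ hf
    apply dT_mem _ hs (fun μ i => μ (some i)) _ _ _ hG
    · intro i
      have := chiAlg_of (K := K) (M := M) (σ := Pi.single (some i) 1) (hM _ (by simp))
      simpa only [coord_chi, zpow_one] using this
    · intro i
      have := chiAlg_of (K := K) (M := M) (σ := Pi.single (some i) (-1)) (hM _ (by simp))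
      simpa only [coord_chi, zpow_neg, zpow_one] using this
  obtain ⟨b, hbM, hb⟩ := chiAlg_exists h0
  let a' : (Option V → ℤ) →₀ K := a.mapDomain (extW n)
  have h1 : ∀ μ : Option V → Kˣ, ∑ τ ∈ b.support, b τ * chiK K τ μ =
      ∑ σ ∈ a.support, a σ * chiK K (extW n σ) μ := by
    intro μ
    rw [← hb, ← glAct_mul, ha]
    refine Finset.sum_congr rfl fun σ _ => ?_
    rw [chiK_extW]
    congr 3
    funext i
    rw [map_mul, hdet]
    simp [dT, dOne_det]
  have h2 : Finsupp.linearCombination K (fun τ : Option V → ℤ => (chiK K τ : (Option V → Kˣ) → K)) b =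
      Finsupp.linearCombination K (fun τ : Option V → ℤ => (chiK K τ : (Option V → Kˣ) → K)) a' := by
    simp only [a']
    rw [Finsupp.linearCombination_mapDomain, Finsupp.linearCombination_apply,
      Finsupp.linearCombination_apply, Finsupp.sum, Finsupp.sum]
    funext μ
    simp only [Finset.sum_apply, Pi.smul_apply, smul_eq_mul, Function.comp]
    exact h1 μ
  have h3 : b = a' := chiK_indep h2
  apply hbM
  rw [h3, Finsupp.mem_support_iff]
  simp only [a']
  rwa [Finsupp.mapDomain_apply (extW_inj n)]

end Torus

section OneParam

variable {K : Type} [Field K] {V A : Type} [Fintype V] [DecidableEq V] [Fintype A]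
  {t h : A → V} {α w : V → ℕ}

lemma proj_exists {n : ℕ} (U : Submodule K (Fin n → K)) :
    ∃ (P : Matrix (Fin n) (Fin (Module.finrank K U)) K)
      (R : Matrix (Fin (Module.finrank K U)) (Fin n) K), R * P = 1 ∧
      (∀ x, P.mulVec x ∈ U) ∧ (∀ v ∈ U, (P * R).mulVec v = v) := by
  let b := Module.finBasis K U
  let ι : (Fin (Module.finrank K U) → K) →ₗ[K] (Fin n → K) :=
    U.subtype ∘ₗ b.equivFun.symm.toLinearMap
  have hι : LinearMap.ker ι = ⊥ := by
    rw [LinearMap.ker_eq_bot]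
    exact U.injective_subtype.comp b.equivFun.symm.injective
  obtain ⟨r, hr⟩ := LinearMap.exists_leftInverse_of_injective ι hι
  have h1 : LinearMap.toMatrix' r * LinearMap.toMatrix' ι = 1 := by
    rw [← LinearMap.toMatrix'_comp, hr, LinearMap.toMatrix'_id]
  refine ⟨LinearMap.toMatrix' ι, LinearMap.toMatrix' r, h1, ?_, ?_⟩
  · intro x
    rw [LinearMap.toMatrix'_mulVec]
    exact (b.equivFun.symm x).2
  · intro v hv
    obtain ⟨x, hx⟩ : ∃ x, ι x = v := ⟨b.equivFun ⟨v, hv⟩, by simp [ι]⟩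
    rw [← hx, ← LinearMap.toMatrix'_mulVec, Matrix.mulVec_mulVec, Matrix.mul_assoc, h1,
      Matrix.mul_one]

lemma gp_mul {n u : ℕ} (P : Matrix (Fin n) (Fin u) K) (R : Matrix (Fin u) (Fin n) K)
    (H : R * P = 1) (s r : K) (hsr : s * r = 1) :
    (1 + (s - 1) • (P * R)) * (1 + (r - 1) • (P * R)) = 1 := by
  have h1 : (P * R) * (P * R) = P * R := by
    rw [Matrix.mul_assoc, ← Matrix.mul_assoc R, H, Matrix.one_mul]
  rw [Matrix.add_mul, Matrix.one_mul, Matrix.mul_add, Matrix.mul_one, Matrix.smul_mul,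
    Matrix.mul_smul, h1, smul_smul, add_assoc, ← add_smul, ← add_smul]
  have : (r - 1 + (s - 1 + (s - 1) * (r - 1))) = 0 := by linear_combination hsr
  rw [this, zero_smul, add_zero]

/-- The one parameter subgroup attached to a projection. -/
def gProj {n u : ℕ} (P : Matrix (Fin n) (Fin u) K) (R : Matrix (Fin u) (Fin n) K)
    (H : R * P = 1) (s : Kˣ) : Matrix.GeneralLinearGroup (Fin n) K where
  val := 1 + ((s : K) - 1) • (P * R)
  inv := 1 + (((s⁻¹ : Kˣ) : K) - 1) • (P * R)
  val_inv := gp_mul P R H _ _ (by simp)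
  inv_val := gp_mul P R H _ _ (by simp)

lemma gProj_det {n u : ℕ} (P : Matrix (Fin n) (Fin u) K) (R : Matrix (Fin u) (Fin n) K)
    (H : R * P = 1) (s : Kˣ) : Matrix.GeneralLinearGroup.det (gProj P R H s) = s ^ (u : ℤ) := by
  ext
  change (1 + ((s : K) - 1) • (P * R)).det = _
  rw [← Matrix.smul_mul, Matrix.det_one_add_mul_comm, Matrix.mul_smul, H]
  have : (1 : Matrix (Fin u) (Fin u) K) + ((s : K) - 1) • 1 = (s : K) • 1 := by
    rw [sub_smul, one_smul]; abel
  rw [this, Matrix.det_smul]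
  simp

lemma conj_expand {m n : ℕ} (p : Matrix (Fin m) (Fin m) K) (q : Matrix (Fin n) (Fin n) K)
    (X : Matrix (Fin m) (Fin n) K) (H : p * (X * q) = X * q) (s : Kˣ) :
    (1 + ((s : K) - 1) • p) * X * (1 + (((s⁻¹ : Kˣ) : K) - 1) • q) =
      (X - p * X + X * q) + (s : K) • (p * X - X * q) := by
  have h1 : p * X * q = X * q := by rw [Matrix.mul_assoc, H]
  have h2 : (s : K) * ((s⁻¹ : Kˣ) : K) = 1 := by simp
  rw [Matrix.add_mul, Matrix.one_mul, Matrix.mul_add, Matrix.mul_one, Matrix.smul_mul,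
    Matrix.mul_smul, Matrix.add_mul, Matrix.smul_mul, h1, smul_add, smul_smul]
  ext i j
  simp only [Matrix.add_apply, Matrix.sub_apply, Matrix.smul_apply, smul_eq_mul]
  linear_combination ((X * q) i j) * h2

lemma good_of_support [CharZero K] (hs : ∀ i, 0 < α i) (X0 : RepSpace K t h α)
    (f : RepSpace K t h α → K) (hf : IsPolyFun K t h f) (a : (V → ℤ) →₀ K)
    (ha : ∀ g : ∀ i, Matrix.GeneralLinearGroup (Fin (α i)) K, f (glAct K t h g X0) =
      ∑ σ ∈ a.support, a σ * chiK K σ (fun i => Matrix.GeneralLinearGroup.det (g i)))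
    (σ : V → ℤ) (hσ : a σ ≠ 0) : QuivRep.Good σ (toRep K t h X0) := by
  classical
  constructor
  · let M : AddSubmonoid (Option V → ℤ) :=
      { carrier := {τ | τ none = 0}
        zero_mem' := rfl
        add_mem' := by
          intro x y hx hy
          change x none + y none = 0
          rw [show x none = 0 from hx, show y none = 0 from hy, add_zero] }
    have h1 := weight_mem hs X0 f hf a ha M (fun _ h => h) (fun i => (α i : ℤ))
      (fun s i => gProj 1 1 (Matrix.one_mul 1) s) (fun s i => gProj_det _ _ _ _) ?_ σ hσ
    · have h2 : ∑ i, σ i * (α i : ℤ) = 0 := h1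
      unfold QuivRep.ev
      rw [QuivRep.dim_toRep]
      exact h2
    · intro b i j
      have h2 : ∀ s : Kˣ, glAct K t h (fun i => gProj (1 : Matrix (Fin (α i)) (Fin (α i)) K) 1
          (Matrix.one_mul 1) s) X0 b = X0 b := by
        intro s
        change (1 + ((s : K) - 1) • (1 * 1)) * X0 b * (1 + (((s⁻¹ : Kˣ) : K) - 1) • (1 * 1)) = X0 b
        rw [conj_expand _ _ _ (by simp)]
        simp
      simp only [h2]
      exact const_mem_alg _ _
  · intro U
    let M : AddSubmonoid (Option V → ℤ) :=
      { carrier := {τ | 0 ≤ τ none}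
        zero_mem' := le_refl (0 : ℤ)
        add_mem' := by
          intro x y hx hy
          change 0 ≤ x none + y none
          exact add_nonneg (show 0 ≤ x none from hx) (show 0 ≤ y none from hy) }
    let U' : ∀ i, Submodule K (Fin (α i) → K) := fun i => U.sub i
    have hU' : ∀ (b : A) (x), x ∈ U' (t b) → (X0 b).mulVec x ∈ U' (h b) := fun b x hx => U.le b x hx
    choose P R hRP hP hPR using fun i => proj_exists (U' i)
    have h1 := weight_mem hs X0 f hf a ha M (fun _ h => le_of_eq h.symm)
      (fun i => (Module.finrank K (U' i) : ℤ))
      (fun s i => gProj (P i) (R i) (hRP i) s) (fun s i => gProj_det _ _ _ _) ?_ σ hσ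
    · have h2 : 0 ≤ ∑ i, σ i * (Module.finrank K (U' i) : ℤ) := h1
      exact h2
    · intro b i j
      have h3 : (P (h b) * R (h b)) * (X0 b * (P (t b) * R (t b))) = X0 b * (P (t b) * R (t b)) := by
        apply Matrix.mulVec_injective
        funext x
        have h4 := hPR (h b) ((X0 b).mulVec ((P (t b)).mulVec ((R (t b)).mulVec x)))
          (hU' b _ (hP (t b) _))
        simpa only [Matrix.mulVec_mulVec, Matrix.mul_assoc] using h4
      have h2 : ∀ s : Kˣ, glAct K t h (fun i => gProj (P i) (R i) (hRP i) s) X0 b = _ :=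
        fun s => conj_expand _ _ _ h3 s
      simp only [h2, Matrix.add_apply, Matrix.smul_apply, smul_eq_mul]
      refine add_mem_alg _ (const_mem_alg _ _) (mul_mem_alg _ ?_ (const_mem_alg _ _))
      have := chiAlg_of (K := K) (M := M) (σ := Pi.single none 1) (by
        change (0 : ℤ) ≤ (Pi.single none 1 : Option V → ℤ) none
        simp)
      simpa only [coord_chi, zpow_one] using this

end OneParam

section MainProof

variable {K : Type} [Field K] {V A : Type} [Fintype V] [DecidableEq V] [Fintype A]
  {t h : A → V} {α : V → ℕ}

lemma chiK_comb {l : ℕ} (wt : Fin l → V → ℤ) (n : Fin l → ℕ) (σ : V → ℤ)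
    (H : ∀ i, σ i = ∑ j, (n j : ℤ) * wt j i) (μ : V → Kˣ) :
    chiK K σ μ = ∏ j, (chiK K (wt j) μ) ^ n j := by
  have h1 : (∏ i, μ i ^ σ i : Kˣ) = ∏ j, (∏ i, μ i ^ wt j i) ^ n j := by
    simp only [H, zpow_sum_aux, ← Finset.prod_pow]
    rw [Finset.prod_comm]
    refine Finset.prod_congr rfl fun j _ => Finset.prod_congr rfl fun i _ => ?_
    rw [mul_comm, zpow_mul, zpow_natCast]
  simp only [chiK_apply]
  rw [h1]
  simp

/-- The invariant polynomial functions as a subalgebra. -/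
def invAlg (K : Type) [Field K] (t h : A → V) (α : V → ℕ) :
    Subalgebra K (RepSpace K t h α → K) where
  carrier := {f : RepSpace K t h α → K | IsPolyFun K t h f ∧
        ∀ g : ∀ i, Matrix.GeneralLinearGroup (Fin (α i)) K,
          (∀ i, Matrix.GeneralLinearGroup.det (g i) = 1) →
            ∀ W, f (glAct K t h g W) = f W}
  mul_mem' := by
    rintro u v ⟨hu, hu'⟩ ⟨hv, hv'⟩
    exact ⟨(polyFunAlg K t h α).mul_mem hu hv, fun g hg W => by
      simp only [Pi.mul_apply, hu' g hg W, hv' g hg W]⟩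
  add_mem' := by
    rintro u v ⟨hu, hu'⟩ ⟨hv, hv'⟩
    exact ⟨(polyFunAlg K t h α).add_mem hu hv, fun g hg W => by
      simp only [Pi.add_apply, hu' g hg W, hv' g hg W]⟩
  algebraMap_mem' r := ⟨(polyFunAlg K t h α).algebraMap_mem r, fun g hg W => rfl⟩

lemma main_aux [IsAlgClosed K] [CharZero K]
    (hQ : Acyclic t h) (hs : ∀ i, 0 < α i) (X0 : RepSpace K t h α)
    (hX : QuivRep.Ext0 (toRep K t h X0) (toRep K t h X0))
    (l : ℕ) (w : Fin l → V → ℕ) (E : ∀ j, RepSpace K t h (w j))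
    (hst : ∀ j, QuivRep.StabE (toRep K t h X0) (toRep K t h (E j)))
    (hnon : ∀ j k, j ≠ k → ¬ RepIso K (toRep K t h (E j)) (toRep K t h (E k)))
    (hall : ∀ Z, QuivRep.StabE (toRep K t h X0) Z → ∃ j, RepIso K Z (toRep K t h (E j))) :
    AlgebraicIndependent K
      (fun j : Fin l => (schofieldSI K t h (E j) : RepSpace K t h α → K)) ∧
    {f : RepSpace K t h α → K | IsPolyFun K t h f ∧
        ∀ g : ∀ i, Matrix.GeneralLinearGroup (Fin (α i)) K,
          (∀ i, Matrix.GeneralLinearGroup.det (g i) = 1) →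
            ∀ W, f (glAct K t h g W) = f W} =
      ↑(Algebra.adjoin K
        (Set.range fun j : Fin l => (schofieldSI K t h (E j) : RepSpace K t h α → K))) := by
  classical
  have hinf : Infinite K := inferInstance
  have hs' : ∀ i, 0 < (toRep K t h X0).dimVec i := by
    intro i; rw [QuivRep.dim_toRep]; exact hs i
  have hdimE : ∀ j, (toRep K t h (E j)).dimVec = w j := fun j => QuivRep.dim_toRep _
  let c : Fin l → RepSpace K t h α → K := fun j => schofieldSI K t h (E j)
  have hc0 : ∀ j, c j X0 ≠ 0 := by
    intro j
    apply schofieldSI_ne_zero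
    · have := (hst j).1
      unfold QuivRep.eu at this
      rwa [QuivRep.dim_toRep, QuivRep.dim_toRep] at this
    · exact (QuivRep.StabE.perp hX (hst j)).1
  have hceq : ∀ j g W, c j (glAct K t h g W) =
      chiK K (QuivRep.wtR t h (w j)) (fun i => Matrix.GeneralLinearGroup.det (g i)) * c j W :=
    fun j g W => schofieldSI_glAct g W (E j)
  constructor
  · rw [algebraicIndependent_iff]
    intro p hp
    let S : (Fin l →₀ ℕ) → V → ℤ := fun m i => ∑ j, (m j : ℤ) * QuivRep.wtR t h (w j) i
    have hS : Function.Injective S := by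
      intro m m' hm
      have h1 := QuivRep.wt_indep (E := fun j => toRep K t h (E j)) hQ hs' hX hst hall hnon
        (fun j => (m j : ℤ) - m' j) (by
          intro i
          have h2 := congrFun hm i
          simp only [S] at h2
          simp only [hdimE, sub_mul, Finset.sum_sub_distrib, h2, sub_self])
      ext j
      have h2 := congrFun h1 j
      have h3 : (m j : ℤ) - m' j = 0 := h2
      omega
    have hli := (chiK_indep (K := K) (ι := V)).comp S hS
    rw [linearIndependent_iff'] at hli
    have h1 := hli p.support (fun m => p.coeff m * ∏ j, c j X0 ^ m j) (by
      funext μ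
      have h2 := congrFun hp (glAct K t h (dT hs μ) X0)
      have h3 : (MvPolynomial.aeval c p) (glAct K t h (dT hs μ) X0) =
          MvPolynomial.eval (fun j => c j (glAct K t h (dT hs μ) X0)) p := by
        have := MvPolynomial.comp_aeval_apply (f := c)
          (Pi.evalAlgHom K (fun _ : RepSpace K t h α => K) (glAct K t h (dT hs μ) X0)) p
        refine this.trans ?_
        rw [MvPolynomial.aeval_eq_eval]
        rfl
      have h4 := h3.symm.trans h2
      rw [MvPolynomial.eval_eq'] at h4
      rw [Finset.sum_apply]
      refine Eq.trans (Finset.sum_congr rfl fun m _ => ?_) h4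
      simp only [Pi.smul_apply, smul_eq_mul, Function.comp, hceq]
      rw [chiK_comb (fun j => QuivRep.wtR t h (w j)) m (S m) (fun i => rfl) μ]
      have h5 : (fun i => Matrix.GeneralLinearGroup.det (dT hs μ i)) = μ := by
        funext i; exact dOne_det _ _
      rw [h5]
      simp only [mul_pow, Finset.prod_mul_distrib]
      ring)
    ext m
    rw [MvPolynomial.coeff_zero]
    by_contra hm
    have h2 := h1 m (MvPolynomial.mem_support_iff.2 hm)
    rcases mul_eq_zero.1 h2 with h3 | h3
    · exact hm h3
    · rw [Finset.prod_eq_zero_iff] at h3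
      obtain ⟨j, _, hj⟩ := h3
      exact hc0 j (eq_zero_of_pow_eq_zero hj)
  · apply Set.Subset.antisymm
    · rintro f ⟨hf, hinv⟩
      obtain ⟨a, ha⟩ := inv_expand hs X0 f hf hinv
      have hgood : ∀ σ, ∃ n : Fin l → ℕ, a σ ≠ 0 →
          ∀ i, σ i = ∑ j, (n j : ℤ) * QuivRep.wtR t h (w j) i := by
        intro σ
        by_cases hσ : a σ = 0
        · exact ⟨0, fun h => absurd hσ h⟩
        · obtain ⟨n, hn⟩ := QuivRep.good_expand (E := fun j => toRep K t h (E j)) hQ hs' hX hst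
            hall hnon (good_of_support hs X0 f hf a ha σ hσ)
          simp only [hdimE] at hn
          exact ⟨n, fun _ => hn⟩
      choose n hn using hgood
      let F : RepSpace K t h α → K := fun W =>
        ∑ σ ∈ a.support, a σ * ∏ j, (c j W * (c j X0)⁻¹) ^ n σ j
      have hFmem : ∀ S : Subalgebra K (RepSpace K t h α → K), (∀ j, c j ∈ S) → F ∈ S := by
        intro S hS
        refine sum_mem_alg S _ _ fun σ _ => mul_mem_alg S (const_mem_alg S _)
          (prod_mem_alg S _ _ fun j _ => ?_)
        exact S.pow_mem (mul_mem_alg S (hS j) (const_mem_alg S ((c j X0)⁻¹))) (n σ j)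
      have hFpoly : F ∈ polyFunAlg K t h α := hFmem _ fun j => schofieldSI_poly (E j)
      have hfF : f = F := by
        funext W
        have := density X0 hX (fun W => f W - F W) (sub_mem_alg (polyFunAlg K t h α) hf hFpoly) (by
          intro g
          rw [ha g, sub_eq_zero]
          refine Finset.sum_congr rfl fun σ hσ => ?_
          rw [chiK_comb _ (n σ) σ (hn σ (Finsupp.mem_support_iff.1 hσ))]
          congr 1
          refine Finset.prod_congr rfl fun j _ => ?_
          rw [hceq, mul_assoc, mul_inv_cancel₀ (hc0 j), mul_one]) W
        exact sub_eq_zero.1 this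
      rw [hfF]
      exact hFmem _ fun j => Algebra.subset_adjoin ⟨j, rfl⟩
    · have : Algebra.adjoin K (Set.range c) ≤ invAlg K t h α := by
        rw [Algebra.adjoin_le_iff]
        rintro _ ⟨j, rfl⟩
        refine ⟨schofieldSI_poly (E j), fun g hg W => ?_⟩
        rw [hceq]
        have h1 : (fun i => Matrix.GeneralLinearGroup.det (g i)) = 1 := by
          funext i; exact hg i
        rw [h1, map_one, one_mul]
      exact this

end MainProof

/-- For a sincere pre-homogeneous `α`, with `E_1, …, E_l` the pairwise
non-isomorphic `⟨α,·⟩`-stable representations, the Schofield semi-invariants `c_{E_i}`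
are algebraically independent and `SI(Q,α) = K[c_{E_1}, …, c_{E_l}]`. -/
theorem stmt7 [IsAlgClosed K] [CharZero K] [DecidableEq A] (t h : A → V)
    (hQ : Acyclic t h)
    (α : V → ℕ) (hsinc : ∀ i, 0 < α i)
    (hpre : ∃ X : QuivRep K V A t h, X.dimVec = α ∧ X.IsRigid)
    (l : ℕ) (w : Fin l → V → ℕ) (E : ∀ j, RepSpace K t h (w j))
    (hstab : ∀ j, IsStable K (weightL t h (natZ α)) (toRep K t h (E j)))
    (hnoniso : ∀ j k, j ≠ k → ¬ RepIso K (toRep K t h (E j)) (toRep K t h (E k)))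
    (hall : ∀ X : QuivRep K V A t h, IsStable K (weightL t h (natZ α)) X →
      ∃ j, RepIso K X (toRep K t h (E j))) :
    AlgebraicIndependent K
      (fun j : Fin l => (schofieldSI K t h (E j) : RepSpace K t h α → K)) ∧
    {f : RepSpace K t h α → K | IsPolyFun K t h f ∧
        ∀ g : ∀ i, Matrix.GeneralLinearGroup (Fin (α i)) K,
          (∀ i, Matrix.GeneralLinearGroup.det (g i) = 1) →
            ∀ W, f (glAct K t h g W) = f W} =
      ↑(Algebra.adjoin K
        (Set.range fun j : Fin l => (schofieldSI K t h (E j) : RepSpace K t h α → K))) := by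
  obtain ⟨X, hXd, hXr⟩ := hpre
  obtain ⟨X0, hiso⟩ := QuivRep.exists_point X hXd
  have hX0 := QuivRep.RepIso.ext0 hiso (QuivRep.rigid_ext0 hXr)
  have hst : ∀ Z : QuivRep K V A t h, IsStable K (weightL t h (natZ α)) Z ↔
      QuivRep.StabE (toRep K t h X0) Z := by
    intro Z
    rw [← QuivRep.stabE_iff, QuivRep.dim_toRep]
  exact main_aux hQ hsinc X0 hX0 l w E (fun j => (hst _).1 (hstab j)) hnoniso
    (fun Z hZ => hall Z ((hst Z).2 hZ))

end
end

section
/- If (β_1,…,β_l) is a quiver exceptional sequence of Q, then hom_Q(β_i,β_j)=0 for all i ≠ j, ext_Q(β_i,β_j) = −⟨β_i,β_j⟩ for all i ≠ j, and β_1,…,β_l are linearly independent over ℚ. -/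
set_option autoImplicit false

noncomputable section

open scoped BigOperators

/-! Basic setup for representations of a quiver with vertex set `V`, arrow set `A`,
tail map `t` and head map `h`, over a field `K`. -/

variable (K : Type) [Field K]
variable {V A : Type} [Fintype V] [DecidableEq V] [Fintype A]

/-! ### Polynomial families -/

section PolyFam

variable {K}

/-- A scalar function given by a polynomial. -/
def PolyS (f : K → K) : Prop := ∃ p : Polynomial K, ∀ s, f s = p.eval s

theorem PolyS.const (c : K) : PolyS (fun _ => c) := ⟨Polynomial.C c, by simp⟩

theorem PolyS.id : PolyS (fun s : K => s) := ⟨Polynomial.X, by simp⟩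

theorem PolyS.add {f g : K → K} (hf : PolyS f) (hg : PolyS g) : PolyS (fun s => f s + g s) := by
  obtain ⟨p, hp⟩ := hf
  obtain ⟨q, hq⟩ := hg
  exact ⟨p + q, fun s => by simp [hp, hq]⟩

theorem PolyS.mul {f g : K → K} (hf : PolyS f) (hg : PolyS g) : PolyS (fun s => f s * g s) := by
  obtain ⟨p, hp⟩ := hf
  obtain ⟨q, hq⟩ := hg
  exact ⟨p * q, fun s => by simp [hp, hq]⟩

theorem PolyS.sum {ι : Type*} (S : Finset ι) {f : ι → K → K} (hf : ∀ i ∈ S, PolyS (f i)) :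
    PolyS (fun s => ∑ i ∈ S, f i s) := by
  choose! p hp using hf
  refine ⟨∑ i ∈ S, p i, fun s => ?_⟩
  rw [Polynomial.eval_finsetSum]
  exact Finset.sum_congr rfl fun i hi => hp i hi s

theorem PolyS.prod {ι : Type*} (S : Finset ι) {f : ι → K → K} (hf : ∀ i ∈ S, PolyS (f i)) :
    PolyS (fun s => ∏ i ∈ S, f i s) := by
  choose! p hp using hf
  refine ⟨∏ i ∈ S, p i, fun s => ?_⟩
  rw [Polynomial.eval_prod]
  exact Finset.prod_congr rfl fun i hi => hp i hi s

theorem PolyS.finite_zeros {f : K → K} (hf : PolyS f) (s₀ : K) (h0 : f s₀ ≠ 0) :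
    {s | f s = 0}.Finite := by
  obtain ⟨p, hp⟩ := hf
  have hp0 : p ≠ 0 := by
    rintro rfl
    exact h0 (by simp [hp])
  have : {s | f s = 0} = {s | p.IsRoot s} := by
    ext s
    simp [hp, Polynomial.IsRoot]
  rw [this]
  exact Polynomial.finite_setOfPred_isRoot hp0

theorem PolyS.det {n : Type*} [Fintype n] [DecidableEq n] {A : K → Matrix n n K}
    (hA : ∀ i j, PolyS (fun s => A s i j)) : PolyS (fun s => (A s).det) := by
  simp only [Matrix.det_apply']
  exact PolyS.sum _ fun σ _ => PolyS.mul (PolyS.const _) (PolyS.prod _ fun i _ => hA _ _)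

theorem PolyS.adj {n : Type*} [Fintype n] [DecidableEq n] {A : K → Matrix n n K}
    (hA : ∀ i j, PolyS (fun s => A s i j)) (i j : n) :
    PolyS (fun s => (A s).adjugate i j) := by
  simp only [Matrix.adjugate_apply]
  refine PolyS.det fun k l => ?_
  by_cases hk : k = j
  · subst hk
    simp only [Matrix.updateRow_self]
    exact PolyS.const _
  · simp only [Matrix.updateRow_ne hk]
    exact hA k l

variable {M N P : Type*} [AddCommGroup M] [Module K M] [AddCommGroup N] [Module K N]
  [AddCommGroup P] [Module K P]

/-- A vector-valued polynomial family. -/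
def PolyV (f : K → M) : Prop := ∀ φ : M →ₗ[K] K, PolyS (fun s => φ (f s))

theorem PolyV.const (m : M) : PolyV (fun _ : K => m) := fun _ => PolyS.const _

theorem PolyV.line (m n : M) : PolyV (fun s : K => m + s • n) := fun φ => by
  simp only [map_add, map_smul, smul_eq_mul]
  exact (PolyS.const _).add (PolyS.id.mul (PolyS.const _))

theorem PolyV.add {f g : K → M} (hf : PolyV f) (hg : PolyV g) : PolyV (fun s => f s + g s) :=
  fun φ => by
    simp only [map_add]
    exact (hf φ).add (hg φ)

theorem PolyV.lin {f : K → M} (hf : PolyV f) (L : M →ₗ[K] N) : PolyV (fun s => L (f s)) :=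
  fun φ => hf (φ.comp L)

theorem PolyV.sub {f g : K → M} (hf : PolyV f) (hg : PolyV g) : PolyV (fun s => f s - g s) := by
  have := hf.add (hg.lin (-LinearMap.id))
  simpa [sub_eq_add_neg] using this

theorem PolyV.smul {c : K → K} {f : K → M} (hc : PolyS c) (hf : PolyV f) :
    PolyV (fun s => c s • f s) := fun φ => by
  simp only [map_smul, smul_eq_mul]
  exact hc.mul (hf φ)

theorem PolyV.detL [FiniteDimensional K M] {f : K → M →ₗ[K] M} (hf : PolyV f) :
    PolyS (fun s => LinearMap.det (f s)) := by
  classical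
  let b := Module.finBasis K M
  simp only [← LinearMap.det_toMatrix b]
  refine PolyS.det fun i j => ?_
  have := hf ((b.coord i).comp (LinearMap.applyₗ (b j)))
  simpa [LinearMap.toMatrix_apply] using this

/-- Surjectivity is an open condition in a polynomial family. -/
theorem PolyV.finite_not_surj [FiniteDimensional K N] {d : K → M →ₗ[K] N}
    (hd : PolyV d) (s₀ : K) (h0 : Function.Surjective (d s₀)) :
    {s | ¬ Function.Surjective (d s)}.Finite := by
  obtain ⟨r, hr⟩ := (d s₀).exists_rightInverse_of_surjective (LinearMap.range_eq_top.2 h0)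
  have hp : PolyV (fun s => (d s).comp r) := hd.lin (LinearMap.lcomp K N r)
  refine (hp.detL.finite_zeros s₀ (by simp [hr])).subset fun s hs => ?_
  by_contra hne
  apply hs
  have hu : IsUnit ((d s).comp r) := by
    rw [LinearMap.isUnit_iff_isUnit_det]
    exact isUnit_iff_ne_zero.2 hne
  have := ((Module.End.isUnit_iff _).1 hu).2
  exact Function.Surjective.of_comp (g := r) (by simpa using this)

/-- Kernel elements deform along a polynomial family which is surjective at `0`. -/
theorem PolyV.exists_kernel [FiniteDimensional K N] {d : K → M →ₗ[K] N}
    (hd : PolyV d) (s₀ : K) (h0 : Function.Surjective (d s₀)) (m : M) (hm : d s₀ m = 0) :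
    ∃ φ : K → M, PolyV φ ∧ φ s₀ = m ∧ ∀ s, d s (φ s) = 0 := by
  classical
  obtain ⟨r, hr⟩ := (d s₀).exists_rightInverse_of_surjective (LinearMap.range_eq_top.2 h0)
  let b := Module.finBasis K N
  let A : K → Matrix _ _ K := fun s => LinearMap.toMatrix b b ((d s).comp r)
  have hA : ∀ i j, PolyS (fun s => A s i j) := fun i j => by
    have := hd (((b.coord i).comp (LinearMap.applyₗ (b j))).comp (LinearMap.lcomp K N r))
    simpa [A, LinearMap.toMatrix_apply] using this
  have hdm : ∀ k, PolyS (fun s => b.repr (d s m) k) := fun k => by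
    have := hd ((b.coord k).comp (LinearMap.applyₗ m))
    simpa using this
  refine ⟨fun s => (A s).det • m - r (Matrix.toLin b b (A s).adjugate (d s m)), ?_, ?_, ?_⟩
  · refine (PolyV.smul (PolyS.det hA) (PolyV.const m)).sub (PolyV.lin ?_ r)
    intro φ
    simp only [Matrix.toLin_apply, map_sum, map_smul, smul_eq_mul, Matrix.mulVec, dotProduct]
    exact PolyS.sum _ fun i _ => PolyS.mul (PolyS.sum _ fun j _ =>
      (PolyS.adj hA i j).mul (hdm j)) (PolyS.const _)
  · simp [A, hr, hm]
  · intro s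
    have h1 : ((d s).comp r) (Matrix.toLin b b (A s).adjugate (d s m)) = (A s).det • d s m := by
      have h2 : (d s).comp r = Matrix.toLin b b (A s) := by simp [A]
      rw [h2, ← LinearMap.comp_apply, ← Matrix.toLin_mul, Matrix.mul_adjugate]
      simp
    rw [LinearMap.comp_apply] at h1
    simp [h1]

end PolyFam

/-! ### Representations -/

namespace QuivRep

variable {K} {t h : A → V}

theorem extDim_eq_zero_iff (X Y : QuivRep K V A t h) :
    extDim X Y = 0 ↔ Function.Surjective (dmap X Y) := by
  unfold extDim
  rw [Module.finrank_zero_iff, Submodule.Quotient.subsingleton_iff, LinearMap.range_eq_top]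

theorem ker_dmap (X Y : QuivRep K V A t h) : LinearMap.ker (dmap X Y) = homS X Y := by
  ext φ
  simp only [LinearMap.mem_ker]
  constructor
  · intro hφ a
    exact sub_eq_zero.1 (congrFun hφ a)
  · intro hφ
    funext a
    exact sub_eq_zero.2 (hφ a)

theorem euler_eq (X Y : QuivRep K V A t h) :
    (homDim X Y : ℤ) - extDim X Y = eulerForm t h (natZ X.dimVec) (natZ Y.dimVec) := by
  have h1 := LinearMap.finrank_range_add_finrank_ker (dmap X Y)
  have h2 := Submodule.finrank_quotient_add_finrank (LinearMap.range (dmap X Y))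
  rw [ker_dmap, Module.finrank_pi_fintype] at h1
  rw [Module.finrank_pi_fintype] at h2
  simp only [Module.finrank_linearMap] at h1 h2
  unfold eulerForm natZ dimVec homDim extDim
  zify at h1 h2
  linarith

/-- Scalar endomorphisms of a Schur representation. -/
theorem IsSchur.scalar {X : QuivRep K V A t h} (hX : X.IsSchur)
    (φ : ∀ i, X.sp i →ₗ[K] X.sp i) (hφ : dmap X X φ = 0) :
    ∃ c : K, ∀ i, φ i = c • LinearMap.id := by
  have hid : (fun _ => LinearMap.id : ∀ i, X.sp i →ₗ[K] X.sp i) ∈ homS X X := by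
    intro a
    ext x
    simp
  have hφ' : φ ∈ homS X X := by rwa [← ker_dmap]
  have hne : (⟨_, hid⟩ : homS X X) ≠ 0 := by
    intro h0
    have h0' : (fun _ => LinearMap.id : ∀ i, X.sp i →ₗ[K] X.sp i) = 0 := congrArg Subtype.val h0
    have hall : ∀ ψ : homS X X, ψ = 0 := by
      intro ψ
      ext i x
      have := LinearMap.congr_fun (congrFun h0' i) x
      have hx : x = 0 := this
      simp [hx]
    have : Module.finrank K (homS X X) = 0 := by
      haveI : Subsingleton (homS X X) := ⟨fun a b => by rw [hall a, hall b]⟩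
      exact Module.finrank_zero_of_subsingleton
    have h1 : Module.finrank K (homS X X) = 1 := hX
    omega
  obtain ⟨c, hc⟩ := (finrank_eq_one_iff_of_nonzero' _ hne).1 hX ⟨φ, hφ'⟩
  refine ⟨c, fun i => ?_⟩
  exact (congrFun (congrArg Subtype.val hc) i).symm

theorem exists_genInv {M N : Type*} [AddCommGroup M] [Module K M] [AddCommGroup N] [Module K N]
    (f : M →ₗ[K] N) : ∃ u : N →ₗ[K] M, ∀ x, f (u (f x)) = f x := by
  obtain ⟨σ, hσ⟩ := f.rangeRestrict.exists_rightInverse_of_surjective f.range_rangeRestrict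
  obtain ⟨p, hp⟩ := (LinearMap.range f).subtype.exists_leftInverse_of_injective
    (LinearMap.range f).ker_subtype
  refine ⟨σ.comp p, fun x => ?_⟩
  have h1 : p (f x) = f.rangeRestrict x := LinearMap.congr_fun hp (f.rangeRestrict x)
  have h2 := LinearMap.congr_fun hσ (f.rangeRestrict x)
  rw [LinearMap.comp_apply, h1]
  exact congrArg Subtype.val h2

/-- Happel–Ringel. -/
theorem happel_ringel {E F : QuivRep K V A t h} (hE : E.IsSchur) (hF : F.IsSchur)
    (hext : Function.Surjective (dmap F E)) (f : ∀ i, E.sp i →ₗ[K] F.sp i)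
    (hf : dmap E F f = 0) (hne : f ≠ 0) :
    (∀ i, Function.Injective (f i)) ∨ (∀ i, Function.Surjective (f i)) := by
  have hf' : ∀ a x, f (h a) (E.map a x) = F.map a (f (t a) x) := fun a x => by
    have := LinearMap.congr_fun (congrFun hf a) x
    exact sub_eq_zero.1 this
  choose u hu using fun i => exists_genInv (f i)
  obtain ⟨g, hg⟩ := hext (fun a => (u (h a)).comp
    ((f (h a)).comp ((u (h a)).comp (F.map a) - (E.map a).comp (u (t a)))))
  have hg' : ∀ a x, g (h a) (F.map a x) - E.map a (g (t a) x) =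
      u (h a) (f (h a) (u (h a) (F.map a x) - E.map a (u (t a) x))) := fun a x =>
    LinearMap.congr_fun (congrFun hg a) x
  obtain ⟨b, hb⟩ := hE.scalar (fun i => (g i).comp (f i)) (by
    funext a
    ext x
    change g (h a) (f (h a) (E.map a x)) - E.map a (g (t a) (f (t a) x)) = 0
    rw [hf', hg', map_sub, hf' a (u (t a) _), hu, ← hf', hu, sub_self, map_zero])
  obtain ⟨c, hc⟩ := hF.scalar (fun i => (f i).comp (u i - g i)) (by
    funext a
    ext x
    change f (h a) (u (h a) (F.map a x) - g (h a) (F.map a x))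
      - F.map a (f (t a) (u (t a) x - g (t a) x)) = 0
    have h1 := congrArg (f (h a)) (hg' a x)
    rw [hu] at h1
    rw [← hf']
    simp only [map_sub] at h1 ⊢
    rw [sub_eq_iff_eq_add] at h1
    rw [h1]
    abel)
  have hb' : ∀ i x, g i (f i x) = b • x := fun i x => LinearMap.congr_fun (hb i) x
  have hc' : ∀ i x, f i (u i x - g i x) = c • x := fun i x => LinearMap.congr_fun (hc i) x
  by_cases hb0 : b = 0
  · by_cases hc0 : c = 0
    · exfalso
      apply hne
      funext i
      ext x
      have h1 := hc' i (f i x)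
      rw [hb', hb0, hc0, zero_smul, zero_smul, sub_zero, hu] at h1
      exact h1
    · right
      intro i y
      refine ⟨u i (c⁻¹ • y) - g i (c⁻¹ • y), ?_⟩
      rw [hc', smul_smul, mul_inv_cancel₀ hc0, one_smul]
  · left
    intro i x y hxy
    have h1 := congrArg (g i) hxy
    rw [hb', hb'] at h1
    exact smul_right_injective _ hb0 h1

/-- If there is a nonzero map `E → F`, and `Ext(F,E)=0`, then `Ext(E,F)=0`. -/
theorem ext_zero_of_hom_ne {E F : QuivRep K V A t h} (hE : E.IsExceptional)
    (hF : F.IsExceptional) (hext : Function.Surjective (dmap F E)) (hne : homDim E F ≠ 0) :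
    Function.Surjective (dmap E F) := by
  have hnb : homS E F ≠ ⊥ := by
    intro hb
    apply hne
    unfold homDim
    rw [hb]
    exact finrank_bot K _
  obtain ⟨f, hfm, hf0⟩ := Submodule.exists_mem_ne_zero_of_ne_bot hnb
  have hf : dmap E F f = 0 := by
    rw [← ker_dmap] at hfm
    exact hfm
  have hf' : ∀ a x, f (h a) (E.map a x) = F.map a (f (t a) x) := fun a x => by
    have := LinearMap.congr_fun (congrFun hf a) x
    exact sub_eq_zero.1 this
  rcases happel_ringel hE.2 hF.2 hext f hf hf0 with hi | hs
  · choose p hp using fun i => (f i).exists_leftInverse_of_injective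
      (LinearMap.ker_eq_bot.2 (hi i))
    intro c
    obtain ⟨g, hg⟩ := (extDim_eq_zero_iff F F).1 hF.1 (fun a => (c a).comp (p (t a)))
    refine ⟨fun i => (g i).comp (f i), ?_⟩
    funext a
    ext x
    have h1 := LinearMap.congr_fun (congrFun hg a) (f (t a) x)
    have h2 := LinearMap.congr_fun (hp (t a)) x
    change g (h a) (F.map a (f (t a) x)) - F.map a (g (t a) (f (t a) x)) =
      c a (p (t a) (f (t a) x)) at h1
    change p (t a) (f (t a) x) = x at h2
    rw [h2] at h1
    change g (h a) (f (h a) (E.map a x)) - F.map a (g (t a) (f (t a) x)) = c a x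
    rw [hf', h1]
  · choose p hp using fun i => (f i).exists_rightInverse_of_surjective
      (LinearMap.range_eq_top.2 (hs i))
    intro c
    obtain ⟨g, hg⟩ := (extDim_eq_zero_iff E E).1 hE.1 (fun a => (p (h a)).comp (c a))
    refine ⟨fun i => (f i).comp (g i), ?_⟩
    funext a
    ext x
    have h1 := congrArg (f (h a)) (LinearMap.congr_fun (congrFun hg a) x)
    have h2 := LinearMap.congr_fun (hp (h a)) (c a x)
    change f (h a) (g (h a) (E.map a x) - E.map a (g (t a) x)) =
      f (h a) (p (h a) (c a x)) at h1
    change f (h a) (p (h a) (c a x)) = c a x at h2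
    rw [h2, map_sub, hf'] at h1
    exact h1

/-- Surjectivity of `dmap` transports along isomorphisms. -/
theorem dmap_surj_of_iso {X X' Y Y' : QuivRep K V A t h} (hX : RepIso K X X')
    (hY : RepIso K Y Y') (hs : Function.Surjective (dmap X Y)) :
    Function.Surjective (dmap X' Y') := by
  obtain ⟨e, he⟩ := hX
  obtain ⟨e', he'⟩ := hY
  intro c
  obtain ⟨g, hg⟩ := hs (fun a => ((e' (h a)).symm.toLinearMap.comp (c a)).comp
    (e (t a)).toLinearMap)
  refine ⟨fun i => ((e' i).toLinearMap.comp (g i)).comp (e i).symm.toLinearMap, ?_⟩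
  funext a
  ext x
  obtain ⟨y, rfl⟩ := (e (t a)).surjective x
  have h1 : g (h a) (X.map a y) - Y.map a (g (t a) y) =
    (e' (h a)).symm (c a (e (t a) y)) := LinearMap.congr_fun (congrFun hg a) y
  have h2 := congrArg (e' (h a)) h1
  change e' (h a) (g (h a) ((e (h a)).symm (X'.map a (e (t a) y)))) -
    Y'.map a (e' (t a) (g (t a) ((e (t a)).symm (e (t a) y)))) = c a (e (t a) y)
  rw [← he, LinearEquiv.symm_apply_apply, LinearEquiv.symm_apply_apply, ← he']
  simpa using h2

/-- The representation with the spaces of `E` and other maps. -/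
def withMaps (E : QuivRep K V A t h) (x : ∀ a, E.sp (t a) →ₗ[K] E.sp (h a)) :
    QuivRep K V A t h where
  sp := E.sp
  map := x

theorem exists_withMaps (E X : QuivRep K V A t h) (hd : X.dimVec = E.dimVec) :
    ∃ x, RepIso K X (E.withMaps x) := by
  have e : ∀ i, X.sp i ≃ₗ[K] E.sp i := fun i => LinearEquiv.ofFinrankEq _ _ (congrFun hd i)
  refine ⟨fun a => ((e (h a)).toLinearMap.comp (X.map a)).comp (e (t a)).symm.toLinearMap,
    e, fun a x => ?_⟩
  change _ = e (h a) (X.map a ((e (t a)).symm (e (t a) x)))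
  rw [LinearEquiv.symm_apply_apply]
  rfl

theorem RepIso.symm' {X Y : QuivRep K V A t h} (hXY : RepIso K X Y) : RepIso K Y X := by
  obtain ⟨e, he⟩ := hXY
  refine ⟨fun i => (e i).symm, fun a y => ?_⟩
  obtain ⟨x, rfl⟩ := (e (t a)).surjective y
  rw [← he]
  simp

/-- The dependence of `dmap` on the maps. -/
theorem polyV_dmap (E F : QuivRep K V A t h) {x : K → ∀ a, E.sp (t a) →ₗ[K] E.sp (h a)}
    {y : K → ∀ a, F.sp (t a) →ₗ[K] F.sp (h a)} (hx : PolyV x) (hy : PolyV y) :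
    PolyV (M := (∀ i, E.sp i →ₗ[K] F.sp i) →ₗ[K] (∀ a : A, E.sp (t a) →ₗ[K] F.sp (h a)))
      (fun s => dmap (E.withMaps (x s)) (F.withMaps (y s))) := by
  let L : (∀ a, E.sp (t a) →ₗ[K] E.sp (h a)) →ₗ[K] (∀ i, E.sp i →ₗ[K] F.sp i) →ₗ[K]
      (∀ a : A, E.sp (t a) →ₗ[K] F.sp (h a)) :=
    LinearMap.mk₂ K (fun x φ a => (φ (h a)).comp (x a))
      (by intros; funext a; ext; simp) (by intros; funext a; ext; simp)
      (by intros; funext a; ext; simp) (by intros; funext a; ext; simp)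
  let R : (∀ a, F.sp (t a) →ₗ[K] F.sp (h a)) →ₗ[K] (∀ i, E.sp i →ₗ[K] F.sp i) →ₗ[K]
      (∀ a : A, E.sp (t a) →ₗ[K] F.sp (h a)) :=
    LinearMap.mk₂ K (fun y φ a => (y a).comp (φ (t a)))
      (by intros; funext a; ext; simp) (by intros; funext a; ext; simp)
      (by intros; funext a; ext; simp) (by intros; funext a; ext; simp)
  exact (hx.lin L).sub (hy.lin R)

/-- A rigid representation is isomorphic to almost every point of a line through it. -/
theorem rigid_line (E : QuivRep K V A t h) (hE : E.IsRigid)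
    {x : K → ∀ a, E.sp (t a) →ₗ[K] E.sp (h a)} (hx : PolyV x) (hx0 : x 0 = E.map) :
    {s | ¬ RepIso K (E.withMaps (x s)) E}.Finite := by
  have hd := polyV_dmap E E hx (PolyV.const E.map)
  have h0 : Function.Surjective (dmap (E.withMaps (x 0)) (E.withMaps E.map)) := by
    rw [hx0]
    exact (extDim_eq_zero_iff E E).1 hE
  obtain ⟨φ, hφ, hφ0, hφd⟩ := hd.exists_kernel 0 h0 (fun _ => LinearMap.id) (by
    rw [hx0]
    funext a
    ext z
    change E.map a z - E.map a z = 0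
    simp)
  have hdet : PolyS (fun s => ∏ i, LinearMap.det (φ s i)) :=
    PolyS.prod _ fun i _ => PolyV.detL (f := fun s => φ s i) (hφ.lin (LinearMap.proj i))
  refine (hdet.finite_zeros 0 (by simp [hφ0])).subset fun s hs => ?_
  by_contra hne
  apply hs
  have hne' : ∀ i, LinearMap.det (φ s i) ≠ 0 := fun i =>
    Finset.prod_ne_zero_iff.1 hne i (Finset.mem_univ i)
  have e : ∀ i, ∃ e : E.sp i ≃ₗ[K] E.sp i, ∀ z, e z = φ s i z := fun i =>
    ⟨LinearEquiv.ofIsUnitDet (f := φ s i) (v := Module.finBasis K (E.sp i))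
      (v' := Module.finBasis K (E.sp i)) (by
        rw [LinearMap.det_toMatrix]
        exact isUnit_iff_ne_zero.2 (hne' i)), fun z => rfl⟩
  choose e he using e
  refine ⟨e, fun a z => ?_⟩
  refine (he _ _).trans (Eq.trans ?_ (congrArg (E.map a) (he _ _)).symm)
  have h1 := LinearMap.congr_fun (congrFun (hφd s) a) z
  exact sub_eq_zero.1 h1

/-- Rigid representations realise generic vanishing of `Ext`. -/
theorem rigid_ext_zero [Infinite K] {E F X Y : QuivRep K V A t h} (hE : E.IsRigid)
    (hF : F.IsRigid) (hX : X.dimVec = E.dimVec) (hY : Y.dimVec = F.dimVec)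
    (hXY : extDim X Y = 0) : Function.Surjective (dmap E F) := by
  obtain ⟨x, hx⟩ := exists_withMaps E X hX
  obtain ⟨y, hy⟩ := exists_withMaps F Y hY
  have hs := dmap_surj_of_iso hx hy ((extDim_eq_zero_iff X Y).1 hXY)
  have px : PolyV (fun s : K => E.map + s • (x - E.map)) := PolyV.line _ _
  have py : PolyV (fun s : K => F.map + s • (y - F.map)) := PolyV.line _ _
  have f1 := rigid_line E hE px (by simp)
  have f2 := rigid_line F hF py (by simp)
  have f3 := (polyV_dmap E F px py).finite_not_surj 1 (by
    rw [one_smul, one_smul, add_sub_cancel, add_sub_cancel]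
    exact hs)
  obtain ⟨s, hsn⟩ := ((f1.union f2).union f3).exists_notMem
  simp only [Set.mem_union, Set.mem_ofPred_eq, not_or, not_not] at hsn
  exact dmap_surj_of_iso hsn.1.1 hsn.1.2 hsn.2

end QuivRep

theorem eulerForm_sum_right (t h : A → V) {l : ℕ} (v : V → ℚ) (c : Fin l → ℚ)
    (w : Fin l → V → ℚ) :
    eulerForm t h v (∑ j, c j • w j) = ∑ j, c j * eulerForm t h v (w j) := by
  unfold eulerForm
  simp only [Finset.sum_apply, Pi.smul_apply, smul_eq_mul, Finset.mul_sum, mul_sub,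
    Finset.sum_sub_distrib]
  rw [Finset.sum_comm]
  congr 1
  · exact Finset.sum_congr rfl fun j _ => Finset.sum_congr rfl fun i _ => by ring
  · rw [Finset.sum_comm]
    exact Finset.sum_congr rfl fun j _ => Finset.sum_congr rfl fun i _ => by ring

theorem eulerForm_natQ (t h : A → V) (x y : V → ℕ) :
    eulerForm t h (natQ x) (natQ y) = (eulerForm t h (natZ x) (natZ y) : ℤ) := by
  unfold eulerForm natQ natZ
  push_cast
  rfl

/-- For a quiver exceptional sequence `(β_1, …, β_l)`:
`hom_Q(β_i,β_j) = 0` and `ext_Q(β_i,β_j) = −⟨β_i,β_j⟩` for all `i ≠ j`, and the `β_i`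
are linearly independent over `ℚ`. -/
theorem stmt8 [IsAlgClosed K] [CharZero K] (t h : A → V) (hQ : Acyclic t h)
    {l : ℕ} (b : Fin l → V → ℕ) (hqes : IsQES K t h b) :
    (∀ i j : Fin l, i ≠ j → homMin K t h (b i) (b j) = 0) ∧
    (∀ i j : Fin l, i ≠ j →
      (extMin K t h (b i) (b j) : ℤ) = -(eulerForm t h (natZ (b i)) (natZ (b j)))) ∧
    LinearIndependent ℚ (fun j : Fin l => natQ (b j)) := by
  haveI : Infinite K := IsAlgClosed.instInfinite
  obtain ⟨hroot, hseq⟩ := hqes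
  choose E hEd hE using hroot
  have hext : ∀ i j, i < j → Function.Surjective (QuivRep.dmap (E i) (E j)) := by
    intro i j hij
    have h0 := (hseq i j hij).2.1
    have hmem := Nat.sInf_mem (s := {n | ∃ X Y : QuivRep K V A t h, X.dimVec = b i ∧
      Y.dimVec = b j ∧ QuivRep.extDim X Y = n}) ⟨_, E i, E j, hEd i, hEd j, rfl⟩
    obtain ⟨X, Y, hX, hY, hXY⟩ := hmem
    have hXY0 : QuivRep.extDim X Y = 0 := hXY.trans h0
    exact QuivRep.rigid_ext_zero (hE i).1 (hE j).1 (hX.trans (hEd i).symm)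
      (hY.trans (hEd j).symm) hXY0
  have heul : ∀ i j, i < j → eulerForm t h (natZ (b i)) (natZ (b j)) = 0 := by
    intro i j hij
    have h0 := (hseq i j hij).1
    have hmem := Nat.sInf_mem (s := {n | ∃ X Y : QuivRep K V A t h, X.dimVec = b i ∧
      Y.dimVec = b j ∧ QuivRep.homDim X Y = n}) ⟨_, E i, E j, hEd i, hEd j, rfl⟩
    obtain ⟨X, Y, hX, hY, hXY⟩ := hmem
    have hXY0 : QuivRep.homDim X Y = 0 := hXY.trans h0
    have e1 := QuivRep.euler_eq X Y
    have e2 := QuivRep.euler_eq (E i) (E j)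
    rw [hX, hY, hXY0] at e1
    rw [hEd, hEd, (QuivRep.extDim_eq_zero_iff _ _).2 (hext i j hij)] at e2
    omega
  have hself : ∀ i, eulerForm t h (natZ (b i)) (natZ (b i)) = 1 := by
    intro i
    have e := QuivRep.euler_eq (E i) (E i)
    have h1 : QuivRep.extDim (E i) (E i) = 0 := (hE i).1
    have h2 : QuivRep.homDim (E i) (E i) = 1 := (hE i).2
    rw [hEd, h1, h2] at e
    omega
  have hhom : ∀ i j, i ≠ j → QuivRep.homDim (E i) (E j) = 0 := by
    intro i j hij
    have e := QuivRep.euler_eq (E i) (E j)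
    rw [hEd, hEd] at e
    rcases lt_or_gt_of_ne hij with hlt | hlt
    · rw [(QuivRep.extDim_eq_zero_iff _ _).2 (hext i j hlt), heul i j hlt] at e
      omega
    · by_contra hne
      have hs := QuivRep.ext_zero_of_hom_ne (hE i) (hE j) (hext j i hlt) hne
      rw [(QuivRep.extDim_eq_zero_iff _ _).2 hs] at e
      have := (hseq j i hlt).2.2
      omega
  refine ⟨fun i j hij => ?_, fun i j hij => ?_, ?_⟩
  · exact Nat.sInf_eq_zero.2 (Or.inl ⟨E i, E j, hEd i, hEd j, hhom i j hij⟩)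
  · have hmem := Nat.sInf_mem (s := {n | ∃ X Y : QuivRep K V A t h, X.dimVec = b i ∧
      Y.dimVec = b j ∧ QuivRep.extDim X Y = n}) ⟨_, E i, E j, hEd i, hEd j, rfl⟩
    have hle : extMin K t h (b i) (b j) ≤ QuivRep.extDim (E i) (E j) :=
      Nat.sInf_le ⟨E i, E j, hEd i, hEd j, rfl⟩
    obtain ⟨X, Y, hX, hY, hXY⟩ := hmem
    have hXY0 : QuivRep.extDim X Y = extMin K t h (b i) (b j) := hXY
    have e1 := QuivRep.euler_eq X Y
    have e2 := QuivRep.euler_eq (E i) (E j)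
    rw [hX, hY, hXY0] at e1
    rw [hEd, hEd, hhom i j hij] at e2
    omega
  · rw [Fintype.linearIndependent_iff]
    intro c hc
    by_contra hne
    push Not at hne
    obtain ⟨i, hi, hmin⟩ := WellFounded.has_min (wellFounded_lt (α := Fin l))
      {i | c i ≠ 0} hne
    have h1 := eulerForm_sum_right t h (natQ (b i)) c (fun j => natQ (b j))
    rw [hc, Finset.sum_eq_single i] at h1
    · rw [eulerForm_natQ, hself] at h1
      apply hi
      simpa [eulerForm] using h1.symm
    · intro j _ hji
      rcases lt_or_gt_of_ne hji with hlt | hlt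
      · have : c j = 0 := by
          by_contra hcj
          exact hmin j hcj hlt
        rw [this, zero_mul]
      · rw [eulerForm_natQ, heul i j hlt]
        simp
    · simp

end
end
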